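/- arXiv:2309.10529 — 2 statements merged into one kernel-verified Lean document; each statement's English description precedes it below -/
import Mathlib

section
/- Let m ≥ 2 be an integer and B_1, B_2 > 1 real numbers. Let t = t_{B_1}^{(m)} and assume 1/2 < t < 1, and set θ_m = (t^m − t·(1−t)^{m−1})/(t^m − (1−t)^m). Let 𝓕^m_{B_1,B_2} = { x ∈ (0,1) irrational : a_n(x)·a_{n+1}(x)⋯a_{n+m−1}(x) ≥ B_1^n for infinitely many n ∈ ℕ, and a_{n+1}(x)·a_{n+2}(x)⋯a_{n+m−1}(x) < B_2^n for all sufficiently large n ∈ ℕ }. If B_1^{1/2} < B_2 < B_1^{θ_m}, then dim_H 𝓕^m_{B_1,B_2} = g_{B_1,B_2}. -/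
open Filter MeasureTheory Set

/-- The Gauss map `T(x) = 1/x - ⌊1/x⌋`. -/
noncomputable def gaussMap (x : ℝ) : ℝ := 1 / x - (⌊1 / x⌋ : ℤ)

/-- The `n`-th partial quotient `a_n(x)` (for `n ≥ 1`) of the continued
fraction expansion of `x`: `a_n(x) = ⌊1 / T^{n-1}(x)⌋`. -/
noncomputable def pq (x : ℝ) (n : ℕ) : ℕ := ⌊1 / (gaussMap^[n - 1] x)⌋₊

/-- The continuant `q_n(a_1, …, a_n)`: `q_0 = 1`, `q_1 = a_1`,
`q_k = a_k q_{k-1} + q_{k-2}`. -/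
def contQ : (n : ℕ) → (Fin n → ℕ) → ℕ
  | 0, _ => 1
  | 1, a => a 0
  | (n + 2), a =>
      a (Fin.last (n + 1)) * contQ (n + 1) (Fin.init a) +
        contQ n (Fin.init (Fin.init a))

/-- `s_B`: the Wang–Wu pressure exponent. -/
noncomputable def sExp (B : ℝ) : ℝ :=
  sInf {s : ℝ | 0 ≤ s ∧
    Filter.atTop.limsup (fun n : ℕ =>
      (((n : ℝ)⁻¹ : ℝ) : EReal) * ENNReal.log (∑' a : Fin n → ℕ+,
        ENNReal.ofReal ((B ^ n * ((contQ n fun i => (a i : ℕ)) : ℝ) ^ 2) ^ (-s)))) ≤ 0}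

/-- `g_{B₁,B₂}`: the two-parameter pressure exponent. -/
noncomputable def gExp (B₁ B₂ : ℝ) : ℝ :=
  sInf {s : ℝ | 0 ≤ s ∧
    Filter.atTop.limsup (fun n : ℕ =>
      (((n : ℝ)⁻¹ : ℝ) : EReal) * ENNReal.log (∑' a : Fin n → ℕ+,
        ENNReal.ofReal (B₂ ^ ((1 - s) * (n : ℝ)) *
          (B₁ ^ n * ((contQ n fun i => (a i : ℕ)) : ℝ) ^ 2) ^ (-s)))) ≤ 0}

/-- The iterates `f_1(s) = s`, `f_{k+1}(s) = s f_k(s) / (1 - s + f_k(s))`;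
here `fIter s k = f_{k+1}(s)`, so `f_m(s) = fIter s (m - 1)`. -/
noncomputable def fIter (s : ℝ) : ℕ → ℝ
  | 0 => s
  | (k + 1) => s * fIter s k / (1 - s + fIter s k)

/-- `t_B^{(m)}`: the Huang–Wu–Xu pressure exponent. -/
noncomputable def tExpM (B : ℝ) (m : ℕ) : ℝ :=
  sInf {s : ℝ | 0 ≤ s ∧ s ≤ 1 ∧
    Filter.atTop.limsup (fun n : ℕ =>
      (((n : ℝ)⁻¹ : ℝ) : EReal) * ENNReal.log (∑' a : Fin n → ℕ+,
        ENNReal.ofReal (B ^ (-(n : ℝ) * fIter s (m - 1)) *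
          ((contQ n fun i => (a i : ℕ)) : ℝ) ^ (-(2 * s))))) ≤ 0}


/-- The continuant of an infinite sequence. -/
def Qc (a : ℕ → ℕ) : ℕ → ℕ
  | 0 => 1
  | 1 => a 0
  | (n + 2) => a (n + 1) * Qc a (n + 1) + Qc a n

lemma contQ_eq_Qc (a : ℕ → ℕ) : ∀ (n : ℕ) (w : Fin n → ℕ), (∀ i : Fin n, w i = a i) →
    contQ n w = Qc a n
  | 0, _, _ => by simp [contQ, Qc]
  | 1, w, h => by simpa [contQ, Qc] using h 0
  | (n + 2), w, h => by
      have h1 := contQ_eq_Qc a (n + 1) (Fin.init w) (fun i => by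
        simpa [Fin.init] using h i.castSucc)
      have h2 := contQ_eq_Qc a n (Fin.init (Fin.init w)) (fun i => by
        simpa [Fin.init] using h i.castSucc.castSucc)
      have h3 := h (Fin.last (n + 1))
      simp only [contQ, Qc, h1, h2, h3, Fin.val_last]

lemma Qc_congr {a b : ℕ → ℕ} : ∀ n : ℕ, (∀ i < n, a i = b i) → Qc a n = Qc b n
  | 0, _ => rfl
  | 1, h => h 0 (by omega)
  | (n + 2), h => by
      simp only [Qc]
      rw [Qc_congr (n + 1) (fun i hi => h i (by omega)), Qc_congr n (fun i hi => h i (by omega)),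
        h (n + 1) (by omega)]

lemma Qc_pos {a : ℕ → ℕ} (ha : ∀ i, 1 ≤ a i) : ∀ n, 1 ≤ Qc a n
  | 0 => le_refl _
  | 1 => ha 0
  | (n + 2) => by
      have h1 := Qc_pos ha (n + 1)
      have h2 := Qc_pos ha n
      simp only [Qc]; omega

lemma Qc_succ_ge {a : ℕ → ℕ} (n : ℕ) : a n * Qc a n ≤ Qc a (n + 1) := by
  cases n with
  | zero => simp [Qc]
  | succ n => simp [Qc]

lemma Qc_mono_succ {a : ℕ → ℕ} (ha : ∀ i, 1 ≤ a i) (n : ℕ) : Qc a n ≤ Qc a (n + 1) :=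
  le_trans (by nlinarith [ha n]) (Qc_succ_ge (a := a) n)

lemma Qc_succ_le {a : ℕ → ℕ} (ha : ∀ i, 1 ≤ a i) (n : ℕ) :
    Qc a (n + 1) ≤ (a n + 1) * Qc a n := by
  cases n with
  | zero => simp [Qc]
  | succ n =>
    have := Qc_mono_succ ha n
    simp only [Qc]; nlinarith

lemma Qc_concat {a : ℕ → ℕ} (ha : ∀ i, 1 ≤ a i) (n : ℕ) : ∀ k,
    Qc a (n + k) ≤ 2 * Qc a n * Qc (fun i => a (n + i)) k
  | 0 => by simp [Qc]; omega
  | 1 => by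
      have h1 := Qc_succ_le ha n
      have h2 := ha n
      have h3 : a n * Qc a n ≥ Qc a n := by nlinarith
      simp only [Qc, add_zero]; nlinarith
  | (k + 2) => by
      have h1 := Qc_concat ha n (k + 1)
      have h2 := Qc_concat ha n k
      have e : n + (k + 2) = (n + k) + 2 := by ring
      rw [e]
      simp only [Qc]
      have e2 : n + (k + 1) = n + k + 1 := by ring
      rw [e2] at h1 ⊢
      calc a (n + k + 1) * Qc a (n + k + 1) + Qc a (n + k)
          ≤ a (n + k + 1) * (2 * Qc a n * Qc (fun i => a (n + i)) (k + 1)) +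
            2 * Qc a n * Qc (fun i => a (n + i)) k := by gcongr
        _ = _ := by ring

lemma Qc_growth {a : ℕ → ℕ} (ha : ∀ i, 1 ≤ a i) : ∀ n, 2 ^ n ≤ 2 * (Qc a n) ^ 2
  | 0 => by simp [Qc]
  | 1 => by have := ha 0; simp only [Qc]; nlinarith
  | (n + 2) => by
      have h1 := Qc_growth ha n
      have h2 := Qc_mono_succ ha n
      have h3 := ha (n + 1)
      have h4 : 2 * Qc a n ≤ Qc a (n + 2) := by simp only [Qc]; nlinarith
      calc 2 ^ (n + 2) = 4 * 2 ^ n := by ring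
        _ ≤ 4 * (2 * (Qc a n) ^ 2) := by omega
        _ = 2 * (2 * Qc a n) ^ 2 := by ring
        _ ≤ _ := by gcongr

/-- `y` is the sequence of tails of the continued fraction with digits `a`. -/
structure IsCF (a : ℕ → ℕ) (y : ℕ → ℝ) : Prop where
  pos : ∀ i, 0 < y i
  lt_one : ∀ i, y i < 1
  one_le : ∀ i, 1 ≤ a i
  rel : ∀ i, y i * (a i + y (i + 1)) = 1

/-- Previous continuant -/
def Qp (a : ℕ → ℕ) : ℕ → ℕ
  | 0 => 0
  | (n + 1) => Qc a n

lemma Qc_succ_eq (a : ℕ → ℕ) (n : ℕ) : Qc a (n + 1) = a n * Qc a n + Qp a n := by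
  cases n <;> simp [Qc, Qp]

lemma Qp_le {a : ℕ → ℕ} (ha : ∀ i, 1 ≤ a i) (n : ℕ) : Qp a n ≤ Qc a n := by
  cases n with
  | zero => simp [Qc, Qp]
  | succ n => exact Qc_mono_succ ha n

namespace IsCF
variable {a a' : ℕ → ℕ} {y y' : ℕ → ℝ}

lemma prod_eq (h : IsCF a y) (n : ℕ) :
    (∏ i ∈ Finset.range n, y i) * (Qc a n + y n * Qp a n) = 1 := by
  induction n with
  | zero => simp [Qc, Qp]
  | succ n ih =>
    rw [Finset.prod_range_succ, Qc_succ_eq]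
    simp only [Qp]
    push_cast
    have hr := h.rel n
    calc (∏ i ∈ Finset.range n, y i) * y n * (a n * Qc a n + Qp a n + y (n + 1) * Qc a n)
        = (∏ i ∈ Finset.range n, y i) * ((y n * (a n + y (n + 1))) * Qc a n + y n * Qp a n) := by
          ring
      _ = 1 := by rw [hr, one_mul, ih]

lemma prod_pos (h : IsCF a y) (n : ℕ) : 0 < ∏ i ∈ Finset.range n, y i :=
  Finset.prod_pos fun i _ => h.pos i

lemma prod_le (h : IsCF a y) (n : ℕ) : (∏ i ∈ Finset.range n, y i) ≤ 1 / (Qc a n : ℝ) := by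
  have h1 := h.prod_eq n
  have hq : (0 : ℝ) < Qc a n := by exact_mod_cast Qc_pos h.one_le n
  have h2 : 0 ≤ y n * Qp a n := mul_nonneg (h.pos n).le (by positivity)
  rw [le_div_iff₀ hq]
  nlinarith [h.prod_pos n]

lemma le_prod (h : IsCF a y) (n : ℕ) : 1 / (2 * Qc a n : ℝ) ≤ ∏ i ∈ Finset.range n, y i := by
  have h1 := h.prod_eq n
  have hq : (0 : ℝ) < Qc a n := by exact_mod_cast Qc_pos h.one_le n
  have hp : (Qp a n : ℝ) ≤ Qc a n := by exact_mod_cast Qp_le h.one_le n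
  have h2 : y n * Qp a n ≤ Qc a n := by
    have : (0 : ℝ) ≤ Qp a n := by positivity
    nlinarith [(h.lt_one n), h.pos n]
  rw [div_le_iff₀ (by positivity)]
  nlinarith [h.prod_pos n]

lemma dist_eq (h : IsCF a y) (h' : IsCF a' y') (n : ℕ) (hag : ∀ i < n, a i = a' i) :
    |y 0 - y' 0| = |y n - y' n| * ((∏ i ∈ Finset.range n, y i) * (∏ i ∈ Finset.range n, y' i)) := by
  induction n with
  | zero => simp
  | succ n ih =>
    rw [ih (fun i hi => hag i (by omega)), Finset.prod_range_succ, Finset.prod_range_succ]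
    have e : |y n - y' n| = |y (n + 1) - y' (n + 1)| * (y n * y' n) := by
      rw [← abs_of_pos (mul_pos (h.pos n) (h'.pos n)), ← abs_mul, abs_sub_comm]
      congr 1
      have h1 := h.rel n
      have h2 := h'.rel n
      rw [hag n (by omega)] at h1
      have : y' n * (y n * (a' n + y (n + 1))) = y' n := by rw [h1, mul_one]
      have : y n * (y' n * (a' n + y' (n + 1))) = y n := by rw [h2, mul_one]
      linarith
    rw [e]; ring

lemma dist_le (h : IsCF a y) (h' : IsCF a' y') (n : ℕ) (hag : ∀ i < n, a i = a' i) :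
    |y 0 - y' 0| ≤ |y n - y' n| / (Qc a n : ℝ) ^ 2 := by
  rw [dist_eq h h' n hag]
  have e : Qc a' n = Qc a n := Qc_congr n fun i hi => (hag i hi).symm
  have h1 := h.prod_le n
  have h2 := h'.prod_le n
  rw [e] at h2
  calc _ ≤ |y n - y' n| * ((1 / (Qc a n : ℝ)) * (1 / (Qc a n : ℝ))) := by
        gcongr
        exact (h'.prod_pos n).le
    _ = _ := by ring

lemma le_dist (h : IsCF a y) (h' : IsCF a' y') (n : ℕ) (hag : ∀ i < n, a i = a' i) :
    |y n - y' n| / (4 * (Qc a n : ℝ) ^ 2) ≤ |y 0 - y' 0| := by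
  rw [dist_eq h h' n hag]
  have e : Qc a' n = Qc a n := Qc_congr n fun i hi => (hag i hi).symm
  have h1 := h.le_prod n
  have h2 := h'.le_prod n
  rw [e] at h2
  calc _ = |y n - y' n| * ((1 / (2 * Qc a n : ℝ)) * (1 / (2 * Qc a n : ℝ))) := by ring
    _ ≤ _ := by
        gcongr
        exact (h.prod_pos n).le

lemma floor_eq (h : IsCF a y) (i : ℕ) : ⌊1 / y i⌋₊ = a i ∧ 1 / y i - (⌊1 / y i⌋ : ℤ) = y (i + 1) := by
  have h0 := h.pos i
  have e : 1 / y i = a i + y (i + 1) := by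
    rw [div_eq_iff h0.ne', mul_comm]; exact (h.rel i).symm
  have p := h.pos (i + 1)
  have l := h.lt_one (i + 1)
  have e2 : ⌊1 / y i⌋ = (a i : ℤ) := by
    rw [e, Int.floor_eq_iff]; push_cast; constructor <;> linarith
  constructor
  · rw [e, Nat.floor_eq_iff (by positivity)]; constructor <;> linarith
  · rw [e2, e]; push_cast; ring

lemma gauss (h : IsCF a y) (i : ℕ) : gaussMap^[i] (y 0) = y i := by
  induction i with
  | zero => rfl
  | succ i ih => rw [Function.iterate_succ_apply', ih]; exact (h.floor_eq i).2

lemma pq_eq (h : IsCF a y) (i : ℕ) : pq (y 0) (i + 1) = a i := by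
  rw [pq, Nat.add_sub_cancel, h.gauss]; exact (h.floor_eq i).1

lemma tail (h : IsCF a y) (n : ℕ) : IsCF (fun i => a (n + i)) (fun i => y (n + i)) :=
  ⟨fun _ => h.pos _, fun _ => h.lt_one _, fun _ => h.one_le _, fun i => h.rel (n + i)⟩

lemma irrational (h : IsCF a y) : Irrational (y 0) := by
  have key : ∀ N : ℕ, ∀ (a : ℕ → ℕ) (y : ℕ → ℝ), IsCF a y → ∀ p : ℕ, p ≤ N → ∀ q : ℕ, 
      y 0 * q = p → q = 0 := by
    intro N
    induction N with
    | zero =>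
      intro a y h p hp q e
      have : p = 0 := by omega
      subst this
      have := h.pos 0
      simpa [this.ne'] using e
    | succ N ih =>
      intro a y h p hp q e
      by_contra hq
      have hq' : (0 : ℝ) < q := by exact_mod_cast Nat.pos_of_ne_zero hq
      have hr := h.rel 0
      have hp0 : (0:ℝ) < p := by rw [← e]; exact mul_pos (h.pos 0) hq'
      -- y1 * p = q - a p
      have e1 : y 1 * p = q - a 0 * p := by
        have : (y 0 * (a 0 + y 1)) * q = q := by rw [hr, one_mul]
        rw [← e]; simp only [zero_add] at hr ⊢; linarith
      have hle : a 0 * p ≤ q := by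
        have : (a 0 * p : ℝ) ≤ q := by
          have := mul_pos (h.pos 1) hp0
          linarith
        exact_mod_cast this
      have hlt : (q - a 0 * p : ℕ) < p := by
        have : ((q - a 0 * p : ℕ) : ℝ) < p := by
          rw [Nat.cast_sub hle]; push_cast; rw [← e1]
          have := h.lt_one 1
          nlinarith
        exact_mod_cast this
      have := ih _ _ (h.tail 1) (q - a 0 * p) (by omega) p (by
        rw [Nat.cast_sub hle]; push_cast; simpa using e1)
      rw [this] at hp0; simp at hp0
  rintro ⟨r, hr⟩
  have hpos : 0 < r := by
    have := h.pos 0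
    rw [← hr] at this; exact_mod_cast this
  have := key r.num.toNat a y h _ le_rfl r.den (by
    rw [← hr]
    have h1 : (r.num.toNat : ℤ) = r.num := Int.toNat_of_nonneg (Rat.num_pos.2 hpos).le
    have h2 : ((r.num.toNat : ℕ) : ℝ) = ((r.num : ℤ) : ℝ) := by exact_mod_cast congrArg (fun z : ℤ => (z : ℝ)) h1
    rw [h2]
    have := Rat.mul_den_eq_num r
    exact_mod_cast this)
  exact r.den_nz this

end IsCF

lemma isCF_of_irrational {x : ℝ} (hx : x ∈ Ioo (0 : ℝ) 1) (hi : Irrational x) :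
    IsCF (fun i => pq x (i + 1)) (fun i => gaussMap^[i] x) := by
  have key : ∀ i, gaussMap^[i] x ∈ Ioo (0 : ℝ) 1 ∧ Irrational (gaussMap^[i] x) := by
    intro i
    induction i with
    | zero => exact ⟨hx, hi⟩
    | succ i ih =>
      rw [Function.iterate_succ_apply']
      obtain ⟨h1, h2⟩ := ih
      set z := gaussMap^[i] x
      have hirr : Irrational (gaussMap z) := by
        unfold gaussMap
        rw [one_div]
        exact (irrational_inv_iff.2 h2).sub_intCast _
      refine ⟨⟨?_, ?_⟩, hirr⟩
      · have : 0 ≤ gaussMap z := by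
          unfold gaussMap; linarith [Int.floor_le (1 / z)]
        exact lt_of_le_of_ne this (fun h => hirr.ne_nat 0 (by simpa using h.symm))
      · unfold gaussMap; linarith [Int.lt_floor_add_one (1 / z)]
  refine ⟨fun i => (key i).1.1, fun i => (key i).1.2, fun i => ?_, fun i => ?_⟩
  · obtain ⟨⟨h1, h2⟩, _⟩ := key i
    rw [pq, Nat.add_sub_cancel, Nat.one_le_floor_iff, le_div_iff₀ h1]; linarith
  · obtain ⟨⟨h1, h2⟩, _⟩ := key i
    simp only [pq, Nat.add_sub_cancel, Function.iterate_succ_apply']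
    set z := gaussMap^[i] x
    have : ((⌊1 / z⌋₊ : ℕ) : ℝ) = ((⌊1 / z⌋ : ℤ) : ℝ) := by
      exact natCast_floor_eq_intCast_floor (by positivity)
    rw [this, gaussMap]
    field_simp
    ring

/-- finite continued fraction map -/
noncomputable def cfMap : ℕ → (ℕ → ℕ) → ℝ → ℝ
  | 0, _, t => t
  | (n + 1), a, t => 1 / (a 0 + cfMap n (fun i => a (i + 1)) t)

lemma cfMap_mem (n : ℕ) : ∀ (a : ℕ → ℕ), (∀ i, 1 ≤ a i) → ∀ t ∈ Icc (0 : ℝ) 1,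
    cfMap n a t ∈ Icc (0 : ℝ) 1 := by
  induction n with
  | zero => intro a _ t ht; exact ht
  | succ n ih =>
    intro a ha t ht
    have h := ih (fun i => a (i + 1)) (fun i => ha _) t ht
    have h1 : (1 : ℝ) ≤ a 0 := by exact_mod_cast ha 0
    have h2 := h.1
    simp only [cfMap]
    refine ⟨by positivity, ?_⟩
    rw [div_le_one (by positivity)]; linarith

lemma cfMap_cont (n : ℕ) : ∀ (a : ℕ → ℕ), (∀ i, 1 ≤ a i) →
    ContinuousOn (cfMap n a) (Icc (0 : ℝ) 1) := by
  induction n with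
  | zero => intro a _; exact continuousOn_id
  | succ n ih =>
    intro a ha
    simp only [cfMap]
    refine continuousOn_const.div (continuousOn_const.add (ih _ (fun i => ha _))) ?_
    intro t ht
    have h := cfMap_mem n (fun i => a (i + 1)) (fun i => ha _) t ht
    have h1 : (1 : ℝ) ≤ a 0 := by exact_mod_cast ha 0
    have h2 := h.1
    positivity

lemma cfMap_succ (n : ℕ) : ∀ (a : ℕ → ℕ) t, cfMap (n + 1) a t = cfMap n a (1 / (a n + t)) := by
  induction n with
  | zero => intro a t; simp [cfMap]
  | succ n ih =>
    intro a t
    rw [cfMap, ih, cfMap]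

lemma exists_cf (a : ℕ → ℕ) (ha : ∀ i, 1 ≤ a i) : ∃ y, IsCF a y := by
  have hK : (⋂ n, cfMap n a '' Icc (0 : ℝ) 1).Nonempty := by
    apply IsCompact.nonempty_iInter_of_sequence_nonempty_isCompact_isClosed
    · rintro n _ ⟨t, ht, rfl⟩
      refine ⟨1 / (a n + t), ?_, (cfMap_succ n a t).symm⟩
      have := cfMap_mem 1 (fun i => a (n + i)) (fun i => ha _) t ht
      simpa [cfMap] using this
    · intro n; exact (nonempty_Icc.2 zero_le_one).image _
    · exact isCompact_Icc.image_of_continuousOn (cfMap_cont 0 a ha)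
    · intro n; exact (isCompact_Icc.image_of_continuousOn (cfMap_cont n a ha)).isClosed
  obtain ⟨x, hx⟩ := hK
  have step : ∀ (a : ℕ → ℕ), (∀ i, 1 ≤ a i) → ∀ x, x ∈ (⋂ n, cfMap n a '' Icc (0 : ℝ) 1) →
      x ∈ Icc (0 : ℝ) 1 ∧ x * (a 0 + (1 / x - a 0)) = 1 ∧
      (1 / x - a 0) ∈ (⋂ n, cfMap n (fun i => a (i + 1)) '' Icc (0 : ℝ) 1) := by
    intro a ha x hx
    rw [mem_iInter] at hx
    have h0 : x ∈ Icc (0 : ℝ) 1 := by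
      obtain ⟨t, ht, rfl⟩ := hx 0; exact ht
    have h1 : (1 : ℝ) ≤ a 0 := by exact_mod_cast ha 0
    have hpos : x ≠ 0 := by
      obtain ⟨t, ht, rfl⟩ := hx 1
      have := ht.1
      simp only [cfMap]; positivity
    refine ⟨h0, by field_simp; ring, ?_⟩
    rw [mem_iInter]
    intro n
    obtain ⟨t, ht, e⟩ := hx (n + 1)
    refine ⟨t, ht, ?_⟩
    have := (cfMap_mem n (fun i => a (i + 1)) (fun i => ha _) t ht).1
    rw [← e]; simp only [cfMap]; rw [one_div_one_div]; ring
  let y : ℕ → ℝ := fun n => Nat.rec x (fun k z => 1 / z - a k) n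
  have hy : ∀ n, y n ∈ (⋂ k, cfMap k (fun i => a (n + i)) '' Icc (0 : ℝ) 1) := by
    intro n
    induction n with
    | zero => simpa [y] using hx
    | succ n ih =>
      have := (step _ (fun i => ha _) _ ih).2.2
      have e : (fun i => a (n + 1 + i)) = fun i => a (n + (i + 1)) := by
        funext i; congr 1; ring
      rw [e]; exact this
  have hrel : ∀ n, y n * (a n + y (n + 1)) = 1 := fun n => (step _ (fun i => ha _) _ (hy n)).2.1
  have hmem : ∀ n, y n ∈ Icc (0 : ℝ) 1 := fun n => (step _ (fun i => ha _) _ (hy n)).1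
  have hpos : ∀ n, 0 < y n := fun n => lt_of_le_of_ne (hmem n).1 (fun h => by
    have := hrel n; rw [← h] at this; simp at this)
  refine ⟨y, hpos, fun n => ?_, ha, hrel⟩
  have h1 : (1 : ℝ) ≤ a n := by exact_mod_cast ha n
  have := hrel n
  have := hpos (n + 1)
  nlinarith [hpos n]


/-- The set in the theorem. -/
def Fset (m : ℕ) (B₁ B₂ : ℝ) : Set ℝ :=
  {x : ℝ | x ∈ Set.Ioo (0 : ℝ) 1 ∧ Irrational x ∧
      {n : ℕ | B₁ ^ n ≤ ∏ i ∈ Finset.range m, (pq x (n + i) : ℝ)}.Infinite ∧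
      (∀ᶠ n : ℕ in Filter.atTop,
        ∏ i ∈ Finset.range (m - 1), (pq x (n + 1 + i) : ℝ) < B₂ ^ n)}

/-- The partition sum of `gExp`. -/
noncomputable def gSum (B₁ B₂ s : ℝ) (n : ℕ) : ENNReal :=
  ∑' a : Fin n → ℕ+, ENNReal.ofReal (B₂ ^ ((1 - s) * (n : ℝ)) *
          (B₁ ^ n * ((contQ n fun i => (a i : ℕ)) : ℝ) ^ 2) ^ (-s))

lemma inv_mul_log_aux (u : ENNReal) (n : ℕ) (hn : 1 ≤ n) (δ : ℝ)
    (h : ENNReal.ofReal (Real.exp (δ * n)) ≤ u) :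
    (δ : EReal) ≤ (((n : ℝ)⁻¹ : ℝ) : EReal) * ENNReal.log u := by
  have h1 : ((δ * n : ℝ) : EReal) ≤ ENNReal.log u := by
    rw [← Real.log_exp (δ * n), ← ENNReal.log_ofReal_of_pos (Real.exp_pos _)]
    exact ENNReal.log_le_log h
  have h0 : (0 : ℝ) < n := by exact_mod_cast hn
  have h2 : (δ : EReal) = (((n : ℝ)⁻¹ : ℝ) : EReal) * ((δ * n : ℝ) : EReal) := by
    rw [← EReal.coe_mul]; congr 1; field_simp
  rw [h2]
  exact mul_le_mul_of_nonneg_left h1 (by exact_mod_cast (inv_pos.2 h0).le)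

lemma inv_mul_log_aux' (u : ENNReal) (n : ℕ) (hn : 1 ≤ n) (δ : ℝ)
    (h : u ≤ ENNReal.ofReal (Real.exp (δ * n))) :
    (((n : ℝ)⁻¹ : ℝ) : EReal) * ENNReal.log u ≤ (δ : EReal) := by
  have h1 : ENNReal.log u ≤ ((δ * n : ℝ) : EReal) := by
    rw [← Real.log_exp (δ * n), ← ENNReal.log_ofReal_of_pos (Real.exp_pos _)]
    exact ENNReal.log_le_log h
  have h0 : (0 : ℝ) < n := by exact_mod_cast hn
  have h2 : (δ : EReal) = (((n : ℝ)⁻¹ : ℝ) : EReal) * ((δ * n : ℝ) : EReal) := by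
    rw [← EReal.coe_mul]; congr 1; field_simp
  rw [h2]
  exact mul_le_mul_of_nonneg_left h1 (by exact_mod_cast (inv_pos.2 h0).le)

lemma eventually_of_limsup_le (u : ℕ → ENNReal)
    (h : Filter.atTop.limsup (fun n : ℕ => (((n : ℝ)⁻¹ : ℝ) : EReal) * ENNReal.log (u n)) ≤ 0)
    {δ : ℝ} (hδ : 0 < δ) : ∀ᶠ n : ℕ in atTop, u n ≤ ENNReal.ofReal (Real.exp (δ * n)) := by
  have h1 : Filter.atTop.limsup (fun n : ℕ => (((n : ℝ)⁻¹ : ℝ) : EReal) * ENNReal.log (u n))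
      < (δ : EReal) := lt_of_le_of_lt h (by exact_mod_cast hδ)
  filter_upwards [eventually_lt_of_limsup_lt h1, eventually_ge_atTop 1] with n hn hn1
  by_contra hc
  exact absurd (inv_mul_log_aux (u n) n hn1 δ (not_le.1 hc).le) (not_le.2 hn)

lemma frequently_of_not_limsup_le (u : ℕ → ENNReal)
    (h : ¬ Filter.atTop.limsup (fun n : ℕ => (((n : ℝ)⁻¹ : ℝ) : EReal) * ENNReal.log (u n)) ≤ 0) :
    ∃ δ : ℝ, 0 < δ ∧ ∃ᶠ n : ℕ in atTop, ENNReal.ofReal (Real.exp (δ * n)) ≤ u n := by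
  rw [not_le] at h
  obtain ⟨δ, h1, h2⟩ := EReal.lt_iff_exists_real_btwn.1 h
  refine ⟨δ, by exact_mod_cast h1, ?_⟩
  refine ((frequently_lt_of_lt_limsup (by isBoundedDefault) h2).and_eventually
    (eventually_ge_atTop 1)).mono ?_
  rintro n ⟨hn, hn1⟩
  by_contra hc
  exact absurd (inv_mul_log_aux' (u n) n hn1 δ (not_le.1 hc).le) (not_le.2 hn)

lemma contQ_pos' (n : ℕ) (a : Fin n → ℕ+) : 1 ≤ contQ n fun i => (a i : ℕ) := by
  have := contQ_eq_Qc (fun i => if h : i < n then (a ⟨i, h⟩ : ℕ) else 1) n (fun i => (a i : ℕ))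
    (fun i => by simp)
  rw [this]
  apply Qc_pos
  intro i
  split_ifs with h
  · exact (a ⟨i, h⟩).pos
  · exact le_rfl

lemma gSum_mono {B₁ B₂ s s' : ℝ} (h1 : 1 < B₁) (h2 : 1 < B₂) (hs : s' ≤ s) (n : ℕ) :
    gSum B₁ B₂ s n ≤ ENNReal.ofReal ((B₂ * B₁) ^ (-((s - s') * n))) * gSum B₁ B₂ s' n := by
  unfold gSum
  rw [← ENNReal.tsum_mul_left]
  refine ENNReal.tsum_le_tsum fun a => ?_
  rw [← ENNReal.ofReal_mul (by positivity)]
  apply ENNReal.ofReal_le_ofReal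
  have hq : (1 : ℝ) ≤ contQ n fun i => (a i : ℕ) := by exact_mod_cast contQ_pos' n a
  set q : ℝ := ((contQ n fun i => (a i : ℕ) : ℕ) : ℝ)
  have hB1 : (0 : ℝ) < B₁ := by linarith
  have hB2 : (0 : ℝ) < B₂ := by linarith
  have hq0 : (0 : ℝ) < q := by linarith
  have hb : (0 : ℝ) < B₁ ^ n := by positivity
  rw [Real.mul_rpow hb.le (by positivity), Real.mul_rpow hb.le (by positivity),
    Real.mul_rpow hB2.le hB1.le]
  have e1 : B₂ ^ ((1 - s) * (n : ℝ)) = B₂ ^ (-((s - s') * n)) * B₂ ^ ((1 - s') * (n : ℝ)) := by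
    rw [← Real.rpow_add hB2]; congr 1; ring
  have e2 : (B₁ ^ n) ^ (-s) = B₁ ^ (-((s - s') * n)) * (B₁ ^ n) ^ (-s') := by
    rw [← Real.rpow_natCast, ← Real.rpow_mul hB1.le, ← Real.rpow_mul hB1.le, ← Real.rpow_add hB1]
    congr 1; ring
  have e3 : (q ^ 2) ^ (-s) ≤ (q ^ 2) ^ (-s') :=
    Real.rpow_le_rpow_of_exponent_le (by nlinarith) (by linarith)
  rw [e1, e2]
  calc _ ≤ B₂ ^ (-((s - s') * n)) * B₂ ^ ((1 - s') * (n : ℝ)) *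
        (B₁ ^ (-((s - s') * n)) * (B₁ ^ n) ^ (-s') * (q ^ 2) ^ (-s')) := by gcongr
    _ = _ := by ring

/-- The defining set of `gExp`. -/
def gSet (B₁ B₂ : ℝ) : Set ℝ := {s : ℝ | 0 ≤ s ∧
    Filter.atTop.limsup (fun n : ℕ =>
      (((n : ℝ)⁻¹ : ℝ) : EReal) * ENNReal.log (gSum B₁ B₂ s n)) ≤ 0}

lemma gExp_eq (B₁ B₂ : ℝ) : gExp B₁ B₂ = sInf (gSet B₁ B₂) := rfl

lemma gSum_decay {B₁ B₂ s : ℝ} (h1 : 1 < B₁) (h2 : 1 < B₂) (hne : (gSet B₁ B₂).Nonempty)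
    (hs : gExp B₁ B₂ < s) : ∃ κ : ℝ, 0 < κ ∧ ∀ᶠ n : ℕ in atTop,
      gSum B₁ B₂ s n ≤ ENNReal.ofReal (Real.exp (-κ * n)) := by
  rw [gExp_eq] at hs
  obtain ⟨s', ⟨_, hl⟩, hs'⟩ := exists_lt_of_csInf_lt hne hs
  have hB : 0 < B₂ * B₁ := by nlinarith
  have hlog : 0 < Real.log (B₂ * B₁) := Real.log_pos (by nlinarith)
  have hδ : 0 < (s - s') * Real.log (B₂ * B₁) / 2 := by
    have : 0 < s - s' := by linarith
    positivity
  refine ⟨_, hδ, ?_⟩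
  filter_upwards [eventually_of_limsup_le _ hl hδ] with n hn
  refine (gSum_mono h1 h2 hs'.le n).trans ?_
  calc _ ≤ ENNReal.ofReal ((B₂ * B₁) ^ (-((s - s') * n))) *
        ENNReal.ofReal (Real.exp ((s - s') * Real.log (B₂ * B₁) / 2 * n)) := by gcongr
    _ = _ := by
      rw [← ENNReal.ofReal_mul (by positivity), Real.rpow_def_of_pos hB, ← Real.exp_add]
      congr 2; ring

lemma tsum_prod_pi (k : ℕ) (f : ℕ+ → ENNReal) :
    ∑' c : Fin k → ℕ+, ∏ i, f (c i) = (∑' j, f j) ^ k := by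
  induction k with
  | zero => simp
  | succ k ih =>
    rw [← (Fin.consEquiv (fun _ : Fin (k + 1) => ℕ+)).tsum_eq, ENNReal.tsum_prod', pow_succ',
      ← ENNReal.tsum_mul_right]
    refine tsum_congr fun j => ?_
    rw [← ih, ← ENNReal.tsum_mul_left]
    refine tsum_congr fun c => ?_
    rw [Fin.prod_univ_succ]
    simp [Fin.consEquiv]

lemma zeta_lt_top {ε : ℝ} (hε : 0 < ε) (k : ℕ) :
    ∑' c : Fin k → ℕ+, ENNReal.ofReal ((∏ i, (c i : ℝ)) ^ (-(1 + ε))) ≠ ⊤ := by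
  have e : ∀ c : Fin k → ℕ+, ENNReal.ofReal ((∏ i, (c i : ℝ)) ^ (-(1 + ε))) =
      ∏ i, ENNReal.ofReal ((c i : ℝ) ^ (-(1 + ε))) := by
    intro c
    rw [← Real.finsetProd_rpow _ _ (fun i _ => by positivity), ENNReal.ofReal_prod_of_nonneg]
    intro i _; positivity
  simp_rw [e]
  rw [tsum_prod_pi k (fun j => ENNReal.ofReal ((j : ℝ) ^ (-(1 + ε))))]
  apply ENNReal.pow_ne_top
  have hs : Summable (fun n : ℕ => (n : ℝ) ^ (-(1 + ε))) := Real.summable_nat_rpow.2 (by linarith)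
  have hs2 := hs.comp_injective (i := fun j : ℕ+ => (j : ℕ)) PNat.coe_injective
  have := hs2.tsum_ofReal_ne_top
  simpa using this


/-- The covering sets. -/
def covSet (m : ℕ) (B₁ : ℝ) (n : ℕ) (w : Fin n → ℕ+) (c : Fin (m - 1) → ℕ+) : Set ℝ :=
  {x : ℝ | x ∈ Set.Ioo (0 : ℝ) 1 ∧ Irrational x ∧ (∀ i : Fin n, pq x (i + 1) = w i) ∧
    (∀ i : Fin (m - 1), pq x (n + 1 + i) = c i) ∧
    B₁ ^ n ≤ (∏ i, (c i : ℝ)) * pq x (n + m)}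

lemma Qc_prod_ge (a : ℕ → ℕ) (n k : ℕ) :
    Qc a n * ∏ i ∈ Finset.range k, a (n + i) ≤ Qc a (n + k) := by
  induction k with
  | zero => simp
  | succ k ih =>
    rw [Finset.prod_range_succ]
    calc _ = a (n + k) * (Qc a n * ∏ i ∈ Finset.range k, a (n + i)) := by ring
      _ ≤ a (n + k) * Qc a (n + k) := by gcongr
      _ ≤ _ := Qc_succ_ge _

lemma covSet_dist {m : ℕ} (hm : 2 ≤ m) {B₁ : ℝ} (hB : 1 < B₁) {n : ℕ} {w : Fin n → ℕ+}
    {c : Fin (m - 1) → ℕ+} {x x' : ℝ} (hx : x ∈ covSet m B₁ n w c) (hx' : x' ∈ covSet m B₁ n w c) :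
    |x - x'| ≤ (B₁ ^ n * ((contQ n fun i => (w i : ℕ)) : ℝ) ^ 2)⁻¹ * (∏ i, (c i : ℝ))⁻¹ := by
  obtain ⟨h1, h2, h3, h4, h5⟩ := hx
  obtain ⟨h1', h2', h3', h4', h5'⟩ := hx'
  have hc := isCF_of_irrational h1 h2
  have hc' := isCF_of_irrational h1' h2'
  have hag : ∀ i < n + (m - 1), (fun i => pq x (i + 1)) i = (fun i => pq x' (i + 1)) i := by
    intro i hi
    by_cases hin : i < n
    · have := h3 ⟨i, hin⟩; have := h3' ⟨i, hin⟩; simp_all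
    · have a1 := h4 ⟨i - n, by omega⟩
      have a2 := h4' ⟨i - n, by omega⟩
      have e : n + 1 + (i - n) = i + 1 := by omega
      simp only [e] at a1 a2
      simp only [a1, a2]
  have hd := hc.dist_le hc' (n + (m - 1)) hag
  simp only [Function.iterate_zero, id] at hd
  set a : ℕ → ℕ := fun i => pq x (i + 1) with ha
  have hq : contQ n (fun i => (w i : ℕ)) = Qc a n := contQ_eq_Qc a n _ (fun i => (h3 i).symm)
  have hP : (∏ i ∈ Finset.range (m - 1), (a (n + i) : ℝ)) = ∏ i, (c i : ℝ) := by
    rw [Finset.prod_range]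
    refine Finset.prod_congr rfl fun i _ => ?_
    have := h4 i
    simp only [ha]
    rw [← Nat.cast_inj (R := ℝ)] at this
    rw [← this]; congr 2; ring
  have hQ : (Qc a n : ℝ) * ∏ i, (c i : ℝ) ≤ Qc a (n + (m - 1)) := by
    rw [← hP]; exact_mod_cast Qc_prod_ge a n (m - 1)
  have hcp : (0 : ℝ) < ∏ i, (c i : ℝ) := Finset.prod_pos fun i _ => by exact_mod_cast (c i).pos
  have hqp : (1 : ℝ) ≤ Qc a n := by exact_mod_cast Qc_pos hc.one_le n
  set P := ∏ i, (c i : ℝ)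
  have hB0 : (0 : ℝ) < B₁ ^ n := by positivity
  have yb : ∀ x, x ∈ Ioo (0 : ℝ) 1 → Irrational x → B₁ ^ n ≤ P * pq x (n + m) →
      0 < gaussMap^[n + (m - 1)] x ∧ gaussMap^[n + (m - 1)] x ≤ P / B₁ ^ n := by
    intro x h1 h2 h5
    have hc := isCF_of_irrational h1 h2
    refine ⟨hc.pos _, ?_⟩
    have hr := hc.rel (n + (m - 1))
    have e : n + (m - 1) + 1 = n + m := by omega
    simp only [e] at hr
    rw [le_div_iff₀ hB0]
    have p0 : 0 < gaussMap^[n + (m - 1)] x := hc.pos (n + (m - 1))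
    have p1 : 0 < gaussMap^[n + m] x := hc.pos (n + m)
    set y := gaussMap^[n + (m - 1)] x
    set z := gaussMap^[n + m] x
    calc y * B₁ ^ n ≤ y * (P * pq x (n + m)) := by gcongr
      _ = P * (y * pq x (n + m)) := by ring
      _ ≤ P * (y * (pq x (n + m) + z)) := by gcongr; linarith
      _ = P := by rw [hr, mul_one]
  have y1 := yb x h1 h2 h5
  have y2 := yb x' h1' h2' h5'
  have hy : |gaussMap^[n + (m - 1)] x - gaussMap^[n + (m - 1)] x'| ≤ P / B₁ ^ n := by
    rw [abs_le]; constructor <;> linarith [y1.1, y1.2, y2.1, y2.2]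
  rw [hq]
  calc |x - x'| ≤ _ := hd
    _ ≤ (P / B₁ ^ n) / ((Qc a n : ℝ) * P) ^ 2 := by
        gcongr
    _ = _ := by field_simp

/-- The pieces with uniform eventual bound. -/
def FK (m : ℕ) (B₁ B₂ : ℝ) (K : ℕ) : Set ℝ :=
  {x : ℝ | x ∈ Set.Ioo (0 : ℝ) 1 ∧ Irrational x ∧
      {n : ℕ | B₁ ^ n ≤ ∏ i ∈ Finset.range m, (pq x (n + i) : ℝ)}.Infinite ∧
      (∀ n ≥ K, ∏ i ∈ Finset.range (m - 1), (pq x (n + 1 + i) : ℝ) < B₂ ^ n)}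

/-- The covering family. -/
def covFam (m : ℕ) (B₁ B₂ : ℝ) (N : ℕ) (p : Σ n : ℕ, (Fin n → ℕ+) × (Fin (m - 1) → ℕ+)) : Set ℝ :=
  {x | N ≤ p.1 ∧ ∏ i, (p.2.2 i : ℝ) < B₂ ^ p.1 ∧ x ∈ covSet m B₁ p.1 p.2.1 p.2.2}

lemma FK_cover {m : ℕ} (hm : 2 ≤ m) {B₁ B₂ : ℝ} (hB : 1 < B₁) (K N : ℕ) (hN : K ≤ N) :
    FK m B₁ B₂ K ⊆ ⋃ p, covFam m B₁ B₂ N p := by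
  rintro x ⟨h1, h2, h3, h4⟩
  obtain ⟨n', hn', hlt⟩ := h3.exists_gt N
  obtain ⟨n, rfl⟩ : ∃ n, n' = n + 1 := ⟨n' - 1, by omega⟩
  have hc := isCF_of_irrational h1 h2
  have hpos : ∀ i, 0 < pq x (i + 1) := fun i => hc.one_le i
  have hpos' : ∀ i, 0 < pq x (n + 1 + i) := fun i => by
    have := hpos (n + i); rwa [show n + i + 1 = n + 1 + i by ring] at this
  rw [mem_iUnion]
  refine ⟨⟨n, fun i => ⟨pq x (i + 1), hpos i⟩, fun i => ⟨pq x (n + 1 + i), hpos' i⟩⟩, ?_⟩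
  refine ⟨show N ≤ n by omega, ?_, h1, h2, fun i => rfl, fun i => rfl, ?_⟩
  · have := h4 n (by omega)
    rw [Finset.prod_range] at this
    simpa using this
  · simp only [mem_setOf_eq] at hn'
    obtain ⟨k, rfl⟩ : ∃ k, m = k + 1 := ⟨m - 1, by omega⟩
    rw [Finset.prod_range_succ, Finset.prod_range] at hn'
    have e : n + (k + 1) = n + 1 + k := by ring
    rw [e]
    refine le_trans ?_ hn'
    exact pow_le_pow_right₀ hB.le (show n ≤ n + 1 by omega)

lemma FK_measure {m : ℕ} (hm : 2 ≤ m) {B₁ B₂ s κ : ℝ} (hB : 1 < B₁) (hB2 : 1 < B₂) (K : ℕ)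
    (hs0 : 0 < s) (hs1 : s < 1) (hκ : 0 < κ)
    (hdec : ∀ᶠ n : ℕ in atTop, gSum B₁ B₂ s n ≤ ENNReal.ofReal (Real.exp (-κ * n))) :
    μH[s] (FK m B₁ B₂ K) ≠ ⊤ := by
  have hB10 : 0 < B₁ := by linarith
  have hB20 : 0 < B₂ := by linarith
  have hl2 : 0 < Real.log B₂ := Real.log_pos hB2
  set ε : ℝ := κ / (2 * Real.log B₂) with hεdef
  have hε : 0 < ε := by positivity
  set Zc : ENNReal := ∑' c : Fin (m - 1) → ℕ+, ENNReal.ofReal ((∏ i, (c i : ℝ)) ^ (-(1 + ε)))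
    with hZc
  have hZ : Zc ≠ ⊤ := zeta_lt_top hε _
  obtain ⟨N0, hN0⟩ := eventually_atTop.1 hdec
  -- diameters
  have hdiam : ∀ N p, Metric.ediam (covFam m B₁ B₂ N p) ≤ ENNReal.ofReal
      ((B₁ ^ p.1 * ((contQ p.1 fun i => (p.2.1 i : ℕ)) : ℝ) ^ 2)⁻¹ * (∏ i, (p.2.2 i : ℝ))⁻¹) := by
    intro N p
    refine Metric.ediam_le fun x hx x' hx' => ?_
    rw [edist_dist, Real.dist_eq]
    exact ENNReal.ofReal_le_ofReal (covSet_dist hm hB hx.2.2 hx'.2.2)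
  have hempty : ∀ N p, ¬ (N ≤ p.1 ∧ ∏ i, (p.2.2 i : ℝ) < B₂ ^ p.1) →
      covFam m B₁ B₂ N p = ∅ := by
    intro N p h
    ext x
    simp only [covFam, mem_setOf_eq, mem_empty_iff_false, iff_false]
    tauto
  have hterm : ∀ N p, Metric.ediam (covFam m B₁ B₂ N p) ^ s ≤
      (if N ≤ p.1 then ENNReal.ofReal (Real.exp (κ / 2 * p.1)) else 0) *
      (ENNReal.ofReal (B₂ ^ ((1 - s) * (p.1 : ℝ)) *
          (B₁ ^ p.1 * ((contQ p.1 fun i => (p.2.1 i : ℕ)) : ℝ) ^ 2) ^ (-s)) *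
        ENNReal.ofReal ((∏ i, (p.2.2 i : ℝ)) ^ (-(1 + ε)))) := by
    intro N p
    by_cases h : N ≤ p.1 ∧ ∏ i, (p.2.2 i : ℝ) < B₂ ^ p.1
    · rw [if_pos h.1]
      obtain ⟨n, w, c⟩ := p
      refine (ENNReal.rpow_le_rpow (hdiam N _) hs0.le).trans ?_
      have hq : (1 : ℝ) ≤ contQ n fun i => (w i : ℕ) := by exact_mod_cast contQ_pos' n w
      simp only at h ⊢
      set q : ℝ := ((contQ n fun i => (w i : ℕ) : ℕ) : ℝ)
      have hcp : (0 : ℝ) < ∏ i, (c i : ℝ) := Finset.prod_pos fun i _ => by exact_mod_cast (c i).pos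
      set P := ∏ i, (c i : ℝ)
      have hR : 0 < B₁ ^ n * q ^ 2 := by positivity
      set R := B₁ ^ n * q ^ 2
      rw [ENNReal.ofReal_rpow_of_nonneg (by positivity) hs0.le,
        ← ENNReal.ofReal_mul (by positivity), ← ENNReal.ofReal_mul (by positivity)]
      apply ENNReal.ofReal_le_ofReal
      rw [Real.mul_rpow (by positivity) (by positivity), Real.inv_rpow hR.le, Real.inv_rpow hcp.le,
        ← Real.rpow_neg hR.le, ← Real.rpow_neg hcp.le]
      have e1 : P ^ (-s) = P ^ (1 - s + ε) * P ^ (-(1 + ε)) := by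
        rw [← Real.rpow_add hcp]; congr 1; ring
      have e2 : P ^ (1 - s + ε) ≤ (B₂ ^ n) ^ (1 - s + ε) :=
        Real.rpow_le_rpow hcp.le h.2.le (by linarith)
      have e3 : (B₂ ^ n) ^ (1 - s + ε) = Real.exp (κ / 2 * n) * B₂ ^ ((1 - s) * (n : ℝ)) := by
        rw [← Real.rpow_natCast, ← Real.rpow_mul hB20.le, Real.rpow_def_of_pos hB20,
          Real.rpow_def_of_pos hB20, ← Real.exp_add]
        congr 1
        rw [hεdef]; field_simp; ring
      rw [e3] at e2
      rw [e1]
      calc R ^ (-s) * (P ^ (1 - s + ε) * P ^ (-(1 + ε)))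
          ≤ R ^ (-s) * ((Real.exp (κ / 2 * n) * B₂ ^ ((1 - s) * (n : ℝ))) * P ^ (-(1 + ε))) := by
            gcongr
        _ = _ := by ring
    · rw [hempty N p h]
      simp [hs0]
  have hsumN : ∀ N ≥ N0, ∑' p, Metric.ediam (covFam m B₁ B₂ N p) ^ s ≤
      (∑' n : ℕ, ENNReal.ofReal (Real.exp (-(κ / 2) * n))) * Zc := by
    intro N hN
    refine (ENNReal.tsum_le_tsum (hterm N)).trans ?_
    rw [ENNReal.tsum_sigma', ← ENNReal.tsum_mul_right]
    refine ENNReal.tsum_le_tsum fun n => ?_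
    change ∑' b : (Fin n → ℕ+) × (Fin (m - 1) → ℕ+),
      (if N ≤ n then ENNReal.ofReal (Real.exp (κ / 2 * n)) else 0) *
      (ENNReal.ofReal (B₂ ^ ((1 - s) * (n : ℝ)) *
          (B₁ ^ n * ((contQ n fun i => (b.1 i : ℕ)) : ℝ) ^ 2) ^ (-s)) *
        ENNReal.ofReal ((∏ i, (b.2 i : ℝ)) ^ (-(1 + ε)))) ≤ _
    rw [ENNReal.tsum_mul_left, ENNReal.tsum_prod']
    dsimp only
    simp_rw [ENNReal.tsum_mul_left]
    rw [ENNReal.tsum_mul_right, ← hZc]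
    split_ifs with h
    · have := hN0 n (by omega)
      unfold gSum at this
      rw [← mul_assoc]
      refine mul_le_mul_left ?_ _
      calc _ ≤ ENNReal.ofReal (Real.exp (κ / 2 * n)) * ENNReal.ofReal (Real.exp (-κ * n)) := by
            gcongr
        _ = _ := by
            rw [← ENNReal.ofReal_mul (by positivity), ← Real.exp_add]; congr 2; ring
    · simp
  have hfin : (∑' n : ℕ, ENNReal.ofReal (Real.exp (-(κ / 2) * n))) * Zc ≠ ⊤ := by
    apply ENNReal.mul_ne_top _ hZ
    have : Summable (fun n : ℕ => Real.exp (-(κ / 2) * n)) := by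
      have := Real.summable_exp_nat_mul_iff.2 (show -(κ / 2) < 0 by linarith)
      refine this.congr fun n => ?_
      congr 1; ring
    exact this.tsum_ofReal_ne_top
  have hmain := Measure.hausdorffMeasure_le_liminf_tsum (l := atTop) s (FK m B₁ B₂ K)
    (fun N : ℕ => ENNReal.ofReal ((B₁⁻¹) ^ N)) (by
      rw [← ENNReal.ofReal_zero]
      exact ENNReal.tendsto_ofReal (tendsto_pow_atTop_nhds_zero_of_lt_one (by positivity)
        (inv_lt_one_of_one_lt₀ hB)))
    (covFam m B₁ B₂) (by
      refine Eventually.of_forall fun N p => ?_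
      by_cases h : N ≤ p.1 ∧ ∏ i, (p.2.2 i : ℝ) < B₂ ^ p.1
      · refine (hdiam N p).trans (ENNReal.ofReal_le_ofReal ?_)
        have hq : (1 : ℝ) ≤ contQ p.1 fun i => (p.2.1 i : ℕ) := by exact_mod_cast contQ_pos' _ _
        have hcp : (1 : ℝ) ≤ ∏ i, (p.2.2 i : ℝ) := by
          have : 1 ≤ ∏ i, (p.2.2 i : ℕ) := Finset.one_le_prod' fun i _ => (p.2.2 i).one_le
          exact_mod_cast this
        rw [inv_pow]
        have h3 : (1:ℝ) ≤ ((contQ p.1 fun i => (p.2.1 i : ℕ)) : ℝ) ^ 2 := one_le_pow₀ hq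
        have h4 : B₁ ^ N ≤ B₁ ^ p.1 := pow_le_pow_right₀ hB.le h.1
        rw [← mul_inv]
        apply inv_anti₀ (by positivity)
        have h5 : B₁ ^ N ≤ B₁ ^ p.1 * ((contQ p.1 fun i => (p.2.1 i : ℕ)) : ℝ) ^ 2 :=
          h4.trans (le_mul_of_one_le_right (by positivity) h3)
        exact h5.trans (le_mul_of_one_le_right (by positivity) hcp)
      · rw [hempty N p h]; simp)
    (by
      filter_upwards [eventually_ge_atTop K] with N hN
      exact FK_cover hm hB K N hN)
  refine ne_top_of_le_ne_top hfin (hmain.trans ?_)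
  refine liminf_le_of_le (by isBoundedDefault) ?_
  intro b hb
  obtain ⟨N, hN, hN'⟩ := (hb.and (eventually_ge_atTop N0)).exists
  exact hN.trans (hsumN N hN')

theorem upper_bound {m : ℕ} (hm : 2 ≤ m) {B₁ B₂ : ℝ} (hB : 1 < B₁) (hB2 : 1 < B₂)
    (hne : (gSet B₁ B₂).Nonempty) (hg0 : 0 ≤ gExp B₁ B₂) (hg1 : gExp B₁ B₂ < 1) :
    dimH (Fset m B₁ B₂) ≤ ENNReal.ofReal (gExp B₁ B₂) := by
  have hsub : Fset m B₁ B₂ ⊆ ⋃ K, FK m B₁ B₂ K := by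
    rintro x ⟨h1, h2, h3, h4⟩
    obtain ⟨K, hK⟩ := eventually_atTop.1 h4
    exact mem_iUnion.2 ⟨K, h1, h2, h3, hK⟩
  refine (dimH_mono hsub).trans ?_
  rw [dimH_iUnion]
  refine iSup_le fun K => ?_
  have key : ∀ s : ℝ, gExp B₁ B₂ < s → s < 1 → dimH (FK m B₁ B₂ K) ≤ ENNReal.ofReal s := by
    intro s h1 h2
    obtain ⟨κ, hκ, hd⟩ := gSum_decay hB hB2 hne h1
    have hs0 : 0 < s := by linarith
    have := FK_measure hm hB hB2 K hs0 h2 hκ hd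
    exact dimH_le_of_hausdorffMeasure_ne_top (d := s.toNNReal) (by
      rw [Real.coe_toNNReal s hs0.le]; exact this)
  have hcont : Tendsto (fun s : ℝ => ENNReal.ofReal s) (nhdsWithin (gExp B₁ B₂) (Ioi (gExp B₁ B₂)))
      (nhds (ENNReal.ofReal (gExp B₁ B₂))) :=
    (ENNReal.continuous_ofReal.tendsto _).mono_left nhdsWithin_le_nhds
  refine ge_of_tendsto hcont ?_
  filter_upwards [Ioo_mem_nhdsGT hg1] with s hs
  exact key s hs.1 hs.2


/-- Data of the Cantor type construction. -/
structure Dat where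
  L : ℕ
  M : ℕ
  s : ℝ
  V0 : ℝ
  V1 : ℝ
  T : ℕ → ℝ
  J : Set ℕ
  e : ℕ → ℝ
  hL : 0 < L
  hM : 1 ≤ M
  s0 : 0 < s
  s1 : s < 1
  Tmono : Monotone T
  T0 : T 0 = 0
  hV : ∀ k, s * T (k + 1) - (1 - s) * T k ≤ V0
  hZ : 4 * Real.exp (V1 * L) ≤ ∑ w ∈ Fintype.piFinset (fun _ : Fin L => Finset.Icc 1 M),
    ((contQ L w : ℕ) : ℝ) ^ (-(2 * s))
  e0 : e 0 = 1
  epos : ∀ N, 0 < e N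
  ele : ∀ N, e N ≤ 1
  efree : ∀ N, N ∉ J → e N * Real.exp (-(V1 * L)) ≤ e (N + 1)
  ebig : ∀ N, N ∈ J → e N * (2 * 8 ^ L * Real.exp ((L * N + 1) * V0)) ≤ e (N + 1)

namespace Dat
variable (d : Dat)

/-- size of the big digits -/
noncomputable def A (i k : ℕ) : ℕ := ⌈Real.exp ((d.L * i + 1) * (d.T (k + 1) - d.T k))⌉₊

lemma arg_nonneg (i k : ℕ) : 0 ≤ ((d.L : ℝ) * i + 1) * (d.T (k + 1) - d.T k) := by
  have := d.Tmono (Nat.le_succ k)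
  have : 0 ≤ d.T (k + 1) - d.T k := by simpa using this
  positivity

lemma exp_le_A (i k : ℕ) : Real.exp ((d.L * i + 1) * (d.T (k + 1) - d.T k)) ≤ d.A i k :=
  Nat.le_ceil _

lemma one_le_A (i k : ℕ) : 1 ≤ d.A i k := by
  have h := d.exp_le_A i k
  have h2 := Real.one_le_exp (d.arg_nonneg i k)
  exact_mod_cast h2.trans h

lemma A_le (i k : ℕ) : (d.A i k : ℝ) ≤ 2 * Real.exp ((d.L * i + 1) * (d.T (k + 1) - d.T k)) := by
  have h2 := Real.one_le_exp (d.arg_nonneg i k)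
  have := Nat.ceil_lt_add_one (Real.exp_pos ((d.L * i + 1) * (d.T (k + 1) - d.T k))).le
  unfold A
  linarith

lemma le_prodA (i k r : ℕ) : Real.exp ((d.L * i + 1) * (d.T (k + r) - d.T k)) ≤
    ∏ j ∈ Finset.range r, (d.A i (k + j) : ℝ) := by
  induction r with
  | zero => simp
  | succ r ih =>
    rw [Finset.prod_range_succ]
    have : Real.exp ((d.L * i + 1) * (d.T (k + (r + 1)) - d.T k)) =
      Real.exp ((d.L * i + 1) * (d.T (k + r) - d.T k)) *
      Real.exp ((d.L * i + 1) * (d.T (k + r + 1) - d.T (k + r))) := by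
      rw [← Real.exp_add]; congr 1; rw [← add_assoc]; ring
    rw [this]
    exact mul_le_mul ih (d.exp_le_A i _) (Real.exp_pos _).le ((Real.exp_pos _).le.trans ih)

lemma prodA_le (i k r : ℕ) : ∏ j ∈ Finset.range r, (d.A i (k + j) : ℝ) ≤
    2 ^ r * Real.exp ((d.L * i + 1) * (d.T (k + r) - d.T k)) := by
  induction r with
  | zero => simp
  | succ r ih =>
    rw [Finset.prod_range_succ]
    have : 2 ^ (r + 1) * Real.exp ((d.L * i + 1) * (d.T (k + (r + 1)) - d.T k)) =
      (2 ^ r * Real.exp ((d.L * i + 1) * (d.T (k + r) - d.T k))) *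
      (2 * Real.exp ((d.L * i + 1) * (d.T (k + r + 1) - d.T (k + r)))) := by
      have h2 : Real.exp ((d.L * i + 1) * (d.T (k + (r + 1)) - d.T k)) =
        Real.exp ((d.L * i + 1) * (d.T (k + r) - d.T k)) *
        Real.exp ((d.L * i + 1) * (d.T (k + r + 1) - d.T (k + r))) := by
        rw [← Real.exp_add]; congr 1; rw [← add_assoc]; ring
      rw [h2]; ring
    rw [this]
    exact mul_le_mul ih (d.A_le i _) (by positivity) (by positivity)

/-- product of the first `k` big sizes -/
noncomputable def PA (i k : ℕ) : ℝ := ∏ j ∈ Finset.range k, (d.A i j : ℝ)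

lemma PA_pos (i k : ℕ) : 0 < d.PA i k :=
  Finset.prod_pos fun j _ => by exact_mod_cast d.one_le_A i j

lemma le_PA (i k : ℕ) : Real.exp ((d.L * i + 1) * d.T k) ≤ d.PA i k := by
  have := d.le_prodA i 0 k
  simpa [d.T0, PA] using this

lemma PA_le (i k : ℕ) : d.PA i k ≤ 2 ^ k * Real.exp ((d.L * i + 1) * d.T k) := by
  have := d.prodA_le i 0 k
  simpa [d.T0, PA] using this

lemma PA_rpow (i k : ℕ) : d.PA i k ^ (2 * d.s - 1) ≤
    2 ^ k * Real.exp ((d.L * i + 1) * ((2 * d.s - 1) * d.T k)) := by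
  have h1 := d.le_PA i k
  have h2 := d.PA_le i k
  set E := Real.exp ((d.L * i + 1) * d.T k) with hE
  have hE0 : 0 < E := Real.exp_pos _
  have h3 : 1 ≤ d.PA i k / E := by rwa [le_div_iff₀ hE0, one_mul]
  have h4 : d.PA i k / E ≤ 2 ^ k := by rwa [div_le_iff₀ hE0]
  have h5 : (d.PA i k / E) ^ (2 * d.s - 1) ≤ 2 ^ k := by
    refine le_trans ?_ h4
    calc (d.PA i k / E) ^ (2 * d.s - 1) ≤ (d.PA i k / E) ^ (1 : ℝ) :=
          Real.rpow_le_rpow_of_exponent_le h3 (by linarith [d.s1])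
      _ = _ := Real.rpow_one _
  have h6 : d.PA i k = (d.PA i k / E) * E := by field_simp
  rw [h6, Real.mul_rpow (by linarith) hE0.le]
  have h7 : E ^ (2 * d.s - 1) = Real.exp ((d.L * i + 1) * ((2 * d.s - 1) * d.T k)) := by
    rw [hE, ← Real.exp_mul]; congr 1; ring
  rw [h7]
  gcongr

lemma bigEst (i k : ℕ) : d.PA i k ^ (2 * d.s - 1) * (d.A i k : ℝ) ^ d.s ≤
    2 ^ (k + 1) * Real.exp ((d.L * i + 1) * d.V0) := by
  have h1 := d.PA_rpow i k
  have h2 : (d.A i k : ℝ) ^ d.s ≤ 2 * Real.exp ((d.L * i + 1) * (d.s * (d.T (k + 1) - d.T k))) := by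
    calc (d.A i k : ℝ) ^ d.s ≤ (2 * Real.exp ((d.L * i + 1) * (d.T (k + 1) - d.T k))) ^ d.s :=
          Real.rpow_le_rpow (by positivity) (d.A_le i k) d.s0.le
      _ = 2 ^ d.s * Real.exp ((d.L * i + 1) * (d.s * (d.T (k + 1) - d.T k))) := by
          rw [Real.mul_rpow (by norm_num) (Real.exp_pos _).le, ← Real.exp_mul]; congr 2; ring
      _ ≤ 2 ^ (1 : ℝ) * Real.exp ((d.L * i + 1) * (d.s * (d.T (k + 1) - d.T k))) := by
          gcongr
          · norm_num
          · exact d.s1.le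
      _ = _ := by rw [Real.rpow_one]
  calc _ ≤ (2 ^ k * Real.exp ((d.L * i + 1) * ((2 * d.s - 1) * d.T k))) *
        (2 * Real.exp ((d.L * i + 1) * (d.s * (d.T (k + 1) - d.T k)))) := by
        gcongr
    _ = 2 ^ (k + 1) * Real.exp ((d.L * i + 1) * (d.s * d.T (k + 1) - (1 - d.s) * d.T k)) := by
        rw [show (d.L * i + 1 : ℝ) * (d.s * d.T (k + 1) - (1 - d.s) * d.T k) =
          (d.L * i + 1) * ((2 * d.s - 1) * d.T k) +
          (d.L * i + 1) * (d.s * (d.T (k + 1) - d.T k)) by ring, Real.exp_add]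
        ring
    _ ≤ _ := by
        gcongr
        exact d.hV k

lemma bigEst' (i k : ℕ) : d.PA i k ^ (2 * d.s - 1) ≤
    2 ^ (k + 1) * Real.exp ((d.L * i + 1) * d.V0) := by
  refine le_trans ?_ (d.bigEst i k)
  have h : (1 : ℝ) ≤ (d.A i k : ℝ) ^ d.s :=
    Real.one_le_rpow (by exact_mod_cast d.one_le_A i k) d.s0.le
  have := Real.rpow_nonneg (d.PA_pos i k).le (2 * d.s - 1)
  nlinarith

open Classical in
/-- admissible blocks -/
noncomputable def W (i : ℕ) : Finset (Fin d.L → ℕ) :=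
  if i ∈ d.J then Fintype.piFinset (fun k : Fin d.L => Finset.Ico (d.A i k) (2 * d.A i k))
  else Fintype.piFinset (fun _ => Finset.Icc 1 d.M)

/-- normalisation -/
noncomputable def Z : ℝ := ∑ w ∈ Fintype.piFinset (fun _ : Fin d.L => Finset.Icc 1 d.M),
    ((contQ d.L w : ℕ) : ℝ) ^ (-(2 * d.s))

open Classical in
/-- weights -/
noncomputable def p (i : ℕ) (w : Fin d.L → ℕ) : ℝ :=
  if i ∈ d.J then (d.PA i d.L)⁻¹ else ((contQ d.L w : ℕ) : ℝ) ^ (-(2 * d.s)) / d.Z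

lemma Z_pos : 0 < d.Z := lt_of_lt_of_le (by positivity) d.hZ

lemma p_nonneg (i : ℕ) (w) : 0 ≤ d.p i w := by
  unfold p
  have := d.Z_pos
  have := d.PA_pos i d.L
  split_ifs <;> positivity

lemma PA_fin (i : ℕ) : ∏ k : Fin d.L, (d.A i k : ℝ) = d.PA i d.L :=
  (Finset.prod_range (fun j => (d.A i j : ℝ))).symm

lemma sum_p (i : ℕ) : ∑ w ∈ d.W i, d.p i w = 1 := by
  unfold W p
  split_ifs with h
  · rw [Finset.sum_const, Fintype.card_piFinset]
    have : ∀ k : Fin d.L, (Finset.Ico (d.A i k) (2 * d.A i k)).card = d.A i k := fun k => by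
      rw [Nat.card_Ico]; omega
    simp only [this]
    rw [nsmul_eq_mul]
    push_cast
    rw [PA_fin]
    exact mul_inv_cancel₀ (d.PA_pos _ _).ne'
  · rw [← Finset.sum_div]
    exact div_self d.Z_pos.ne'

/-- block measure -/
noncomputable def mu (i : ℕ) : Measure (Fin d.L → ℕ) :=
  ∑ w ∈ d.W i, ENNReal.ofReal (d.p i w) • Measure.dirac w

lemma mu_apply (i : ℕ) (B : Set (Fin d.L → ℕ)) [DecidablePred (· ∈ B)] :
    d.mu i B = ENNReal.ofReal (∑ w ∈ (d.W i).filter (· ∈ B), d.p i w) := by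
  unfold mu
  rw [Measure.finsetSum_apply, ENNReal.ofReal_sum_of_nonneg fun w _ => d.p_nonneg i w,
    Finset.sum_filter]
  refine Finset.sum_congr rfl fun w _ => ?_
  rw [Measure.smul_apply, Measure.dirac_apply' _ (MeasurableSet.of_discrete)]
  by_cases h : w ∈ B <;> simp [h]

instance (i : ℕ) : IsProbabilityMeasure (d.mu i) := ⟨by
  classical
  rw [mu_apply, Finset.filter_true_of_mem (fun _ _ => mem_univ _), sum_p]; simp⟩

lemma mu_singleton {i : ℕ} {w} (hw : w ∈ d.W i) : d.mu i {w} = ENNReal.ofReal (d.p i w) := by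
  classical
  rw [mu_apply]
  congr 1
  rw [Finset.sum_eq_single w]
  · intro b hb hne; simp at hb; exact absurd hb.2 hne
  · intro h; simp [hw] at h

lemma mu_compl (i : ℕ) : d.mu i {w | w ∉ d.W i} = 0 := by
  classical
  rw [mu_apply, Finset.filter_false_of_mem]
  · simp
  · intro w hw h; exact h hw

/-- the full measure -/
noncomputable def P : Measure (ℕ → Fin d.L → ℕ) := Measure.infinitePi d.mu

instance : IsProbabilityMeasure d.P := by unfold P; infer_instance

/-- good sequences -/
def E : Set (ℕ → Fin d.L → ℕ) := {ω | ∀ i, ω i ∈ d.W i}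

lemma P_E_compl : d.P d.Eᶜ = 0 := by
  have : d.Eᶜ ⊆ ⋃ i, (fun ω : ℕ → Fin d.L → ℕ => ω i) ⁻¹' {w | w ∉ d.W i} := by
    intro ω hω
    simp only [E, mem_compl_iff, mem_setOf_eq, not_forall] at hω
    obtain ⟨i, hi⟩ := hω
    exact mem_iUnion.2 ⟨i, hi⟩
  refine measure_mono_null this (measure_iUnion_null fun i => ?_)
  have h := measurePreserving_eval_infinitePi d.mu i
  rw [P]
  exact (h.measure_preimage (MeasurableSet.of_discrete).nullMeasurableSet).trans (d.mu_compl i)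

lemma P_le (ω0 : ℕ → Fin d.L → ℕ) (h0 : ω0 ∈ d.E) (N : ℕ) (B : Set (Fin d.L → ℕ))
    (S : Set (ℕ → Fin d.L → ℕ)) (hS : ∀ ω ∈ S, (∀ i < N, ω i = ω0 i) ∧ ω N ∈ B) :
    d.P S ≤ ENNReal.ofReal (∏ i ∈ Finset.range N, d.p i (ω0 i)) * d.mu N B := by
  classical
  have hsub : S ⊆ Set.pi (Finset.range (N + 1) : Finset ℕ)
      (fun i => if i < N then {ω0 i} else B) := by
    intro ω hω i hi
    obtain ⟨h1, h2⟩ := hS ω hω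
    have hi' : i < N + 1 := by simpa using hi
    by_cases h : i < N
    · simp [h, h1 i h]
    · have : i = N := by omega
      subst this; simpa using h2
  refine (measure_mono hsub).trans ?_
  rw [P, Measure.infinitePi_pi _ (fun i _ => MeasurableSet.of_discrete), Finset.prod_range_succ,
    ENNReal.ofReal_prod_of_nonneg (fun i _ => d.p_nonneg _ _)]
  apply le_of_eq
  congr 1
  · refine Finset.prod_congr rfl fun i hi => ?_
    rw [if_pos (Finset.mem_range.1 hi), d.mu_singleton (h0 i)]
  · simp

/-- digits -/
def dg (ω : ℕ → Fin d.L → ℕ) (q : ℕ) : ℕ := ω (q / d.L) ⟨q % d.L, Nat.mod_lt _ d.hL⟩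

lemma dg_block (ω : ℕ → Fin d.L → ℕ) (N k : ℕ) (hk : k < d.L) :
    d.dg ω (d.L * N + k) = ω N ⟨k, hk⟩ := by
  unfold dg
  have h1 : (d.L * N + k) / d.L = N := by
    rw [Nat.mul_add_div d.hL, Nat.div_eq_of_lt hk, add_zero]
  have h2 : (d.L * N + k) % d.L = k := by
    rw [Nat.mul_add_mod, Nat.mod_eq_of_lt hk]
  simp only [h1, h2]

variable {d}

lemma dg_big {ω} (h : ω ∈ d.E) {N k : ℕ} (hN : N ∈ d.J) (hk : k < d.L) :
    d.A N k ≤ d.dg ω (d.L * N + k) ∧ d.dg ω (d.L * N + k) < 2 * d.A N k := by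
  have := h N
  rw [W, if_pos hN, Fintype.mem_piFinset] at this
  have := this ⟨k, hk⟩
  rw [dg_block _ _ _ _ hk]
  simpa using this

lemma dg_free {ω} (h : ω ∈ d.E) {N k : ℕ} (hN : N ∉ d.J) (hk : k < d.L) :
    1 ≤ d.dg ω (d.L * N + k) ∧ d.dg ω (d.L * N + k) ≤ d.M := by
  have := h N
  rw [W, if_neg hN, Fintype.mem_piFinset] at this
  have := this ⟨k, hk⟩
  rw [dg_block _ _ _ _ hk]
  simpa using this

lemma dg_pos {ω} (h : ω ∈ d.E) (q : ℕ) : 1 ≤ d.dg ω q := by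
  have hk : q % d.L < d.L := Nat.mod_lt _ d.hL
  rw [← Nat.div_add_mod q d.L]
  by_cases hN : q / d.L ∈ d.J
  · exact (d.one_le_A _ _).trans (dg_big h hN hk).1
  · exact (dg_free h hN hk).1

/-- either both digits are bounded by M, or both at least two -/
lemma dg_dich {ω ω'} (h : ω ∈ d.E) (h' : ω' ∈ d.E) (q : ℕ) :
    (d.dg ω q ≤ d.M ∧ d.dg ω' q ≤ d.M) ∨ (2 ≤ d.dg ω q ∧ 2 ≤ d.dg ω' q) := by
  have hk : q % d.L < d.L := Nat.mod_lt _ d.hL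
  rw [← Nat.div_add_mod q d.L]
  by_cases hN : q / d.L ∈ d.J
  · have h1 := dg_big h hN hk
    have h2 := dg_big h' hN hk
    have h3 := d.one_le_A (q / d.L) (q % d.L)
    have h4 := d.hM
    omega
  · exact Or.inl ⟨(dg_free h hN hk).2, (dg_free h' hN hk).2⟩

lemma Q_big {ω} (h : ω ∈ d.E) {N : ℕ} (hN : N ∈ d.J) (k : ℕ) (hk : k ≤ d.L) :
    (Qc (d.dg ω) (d.L * N + k) : ℝ) ≤ Qc (d.dg ω) (d.L * N) * (2 ^ k * d.PA N k) := by
  induction k with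
  | zero => simp [PA]
  | succ k ih =>
    have h1 := Qc_succ_le (dg_pos h) (d.L * N + k)
    have h2 := (dg_big h hN (show k < d.L by omega)).2
    have h3 : ((d.dg ω (d.L * N + k) : ℝ) + 1) ≤ 2 * d.A N k := by exact_mod_cast h2
    have h4 : (Qc (d.dg ω) (d.L * N + (k + 1)) : ℝ) ≤
      ((d.dg ω (d.L * N + k) : ℝ) + 1) * Qc (d.dg ω) (d.L * N + k) := by exact_mod_cast h1
    have h5 := ih (by omega)
    calc _ ≤ _ := h4
      _ ≤ (2 * d.A N k) * (Qc (d.dg ω) (d.L * N) * (2 ^ k * d.PA N k)) := by gcongr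
      _ = _ := by simp only [PA, Finset.prod_range_succ]; ring

lemma Q_free {ω} (h : ω ∈ d.E) {N : ℕ} (hN : N ∉ d.J) (k : ℕ) (hk : k ≤ d.L) :
    (Qc (d.dg ω) (d.L * N + k) : ℝ) ≤ Qc (d.dg ω) (d.L * N) * (d.M + 1) ^ k := by
  induction k with
  | zero => simp
  | succ k ih =>
    have h1 := Qc_succ_le (dg_pos h) (d.L * N + k)
    have h2 := (dg_free h hN (show k < d.L by omega)).2
    have h3 : ((d.dg ω (d.L * N + k) : ℝ) + 1) ≤ d.M + 1 := by exact_mod_cast Nat.succ_le_succ h2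
    have h4 : (Qc (d.dg ω) (d.L * N + (k + 1)) : ℝ) ≤
      ((d.dg ω (d.L * N + k) : ℝ) + 1) * Qc (d.dg ω) (d.L * N + k) := by exact_mod_cast h1
    have h5 := ih (by omega)
    calc _ ≤ _ := h4
      _ ≤ (d.M + 1) * (Qc (d.dg ω) (d.L * N) * (d.M + 1) ^ k) := by gcongr
      _ = _ := by ring

lemma gain {ω} (h : ω ∈ d.E) (N : ℕ) :
    (∏ i ∈ Finset.range N, d.p i (ω i)) * (Qc (d.dg ω) (d.L * N) : ℝ) ^ (2 * d.s) ≤ d.e N := by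
  induction N with
  | zero => simp [Qc, d.e0]
  | succ N ih =>
    have hs := d.s0
    have hs1 := d.s1
    rw [Finset.prod_range_succ]
    have hG : 0 ≤ ∏ i ∈ Finset.range N, d.p i (ω i) := Finset.prod_nonneg fun i _ => d.p_nonneg _ _
    set G := ∏ i ∈ Finset.range N, d.p i (ω i)
    set Q : ℝ := (Qc (d.dg ω) (d.L * N) : ℝ) with hQ
    have hQ0 : 0 < Q := by rw [hQ]; exact_mod_cast Qc_pos (dg_pos h) _
    by_cases hN : N ∈ d.J
    · have h1 : (Qc (d.dg ω) (d.L * (N + 1)) : ℝ) ≤ Q * (2 ^ d.L * d.PA N d.L) :=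
        Q_big h hN d.L le_rfl
      refine le_trans ?_ (d.ebig N hN)
      have hPA := d.PA_pos N d.L
      have hp : d.p N (ω N) = (d.PA N d.L)⁻¹ := by rw [p, if_pos hN]
      rw [hp]
      have h2 := d.bigEst' N d.L
      calc _ ≤ G * (d.PA N d.L)⁻¹ * (Q * (2 ^ d.L * d.PA N d.L)) ^ (2 * d.s) := by gcongr
        _ = (G * Q ^ (2 * d.s)) * (((2 : ℝ) ^ d.L) ^ (2 * d.s) * d.PA N d.L ^ (2 * d.s - 1)) := by
          rw [Real.mul_rpow hQ0.le (by positivity), Real.mul_rpow (by positivity) hPA.le,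
            Real.rpow_sub_one hPA.ne']
          ring
        _ ≤ d.e N * (2 * 8 ^ d.L * Real.exp ((d.L * N + 1) * d.V0)) := by
          have := d.epos N
          have h3 : ((2 : ℝ) ^ d.L) ^ (2 * d.s) ≤ 4 ^ d.L := by
            calc ((2 : ℝ) ^ d.L) ^ (2 * d.s) ≤ ((2 : ℝ) ^ d.L) ^ (2 : ℝ) :=
                  Real.rpow_le_rpow_of_exponent_le (one_le_pow₀ (by norm_num)) (by linarith)
              _ = 4 ^ d.L := by
                  rw [show (2 : ℝ) = ((2 : ℕ) : ℝ) by norm_num, Real.rpow_natCast, ← pow_mul,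
                    mul_comm, pow_mul]; norm_num
          have h4 : (2 : ℝ) * 8 ^ d.L = 4 ^ d.L * 2 ^ (d.L + 1) := by
            rw [pow_succ, show (8 : ℝ) = 4 * 2 by norm_num, mul_pow]; ring
          rw [h4, mul_assoc (4 ^ d.L)]
          gcongr
    · have h1 : (Qc (d.dg ω) (d.L * (N + 1)) : ℝ) ≤ 2 * Q * (contQ d.L (ω N) : ℕ) := by
        have := Qc_concat (dg_pos h) (d.L * N) d.L
        rw [← contQ_eq_Qc (fun i => d.dg ω (d.L * N + i)) d.L (ω N)
          (fun i => (d.dg_block ω N i i.2).symm)] at this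
        rw [mul_add, mul_one, hQ]
        exact_mod_cast this
      have hq0 : (0 : ℝ) < (contQ d.L (ω N) : ℕ) := by
        rw [contQ_eq_Qc (fun i => d.dg ω (d.L * N + i)) d.L (ω N)
          (fun i => (d.dg_block ω N i i.2).symm)]
        exact_mod_cast Qc_pos (fun i => dg_pos h _) _
      have hZ := d.Z_pos
      have hZ' : 4 * Real.exp (d.V1 * d.L) ≤ d.Z := d.hZ
      set q : ℝ := ((contQ d.L (ω N) : ℕ) : ℝ)
      have hp : d.p N (ω N) = q ^ (-(2 * d.s)) / d.Z := by rw [p, if_neg hN]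
      rw [hp]
      refine le_trans ?_ (d.efree N hN)
      have h22 : (2 : ℝ) ^ (2 * d.s) ≤ 4 := by
        calc (2 : ℝ) ^ (2 * d.s) ≤ 2 ^ (2 : ℝ) :=
              Real.rpow_le_rpow_of_exponent_le (by norm_num) (by linarith)
          _ = 4 := by norm_num
      calc _ ≤ G * (q ^ (-(2 * d.s)) / d.Z) * (2 * Q * q) ^ (2 * d.s) := by gcongr
        _ = (G * Q ^ (2 * d.s)) * (2 ^ (2 * d.s) / d.Z) := by
          rw [Real.mul_rpow (by positivity) hq0.le, Real.mul_rpow (by norm_num) hQ0.le,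
            Real.rpow_neg hq0.le]
          have : q ^ (2 * d.s) ≠ 0 := (Real.rpow_pos_of_pos hq0 _).ne'
          field_simp
        _ ≤ d.e N * (4 / d.Z) := by
          have := d.epos N
          gcongr
        _ ≤ _ := by
          have := d.epos N
          gcongr
          rw [div_le_iff₀ hZ, Real.exp_neg, inv_mul_eq_div, le_div_iff₀ (Real.exp_pos _)]
          exact hZ'

end Dat


namespace Dat
variable (d : Dat)

open Classical in
/-- the projection to the line -/
noncomputable def proj (ω : ℕ → Fin d.L → ℕ) : ℝ :=
  if h : ∀ q, 1 ≤ d.dg ω q then (exists_cf (d.dg ω) h).choose 0 else 0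

variable {d}

lemma exists_y {ω} (h : ω ∈ d.E) : ∃ y, IsCF (d.dg ω) y ∧ d.proj ω = y 0 := by
  have h' : ∀ q, 1 ≤ d.dg ω q := dg_pos h
  refine ⟨(exists_cf (d.dg ω) h').choose, (exists_cf (d.dg ω) h').choose_spec, ?_⟩
  rw [proj, dif_pos h']

lemma gap {ω ω'} (h : ω ∈ d.E) (h' : ω' ∈ d.E) (q : ℕ) (hag : ∀ i < q, d.dg ω i = d.dg ω' i) :
    |(d.dg ω q : ℝ) - d.dg ω' q| ≤ 4 * (d.M + 1) * ((d.dg ω q + 1) * (d.dg ω' q + 1)) *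
      (Qc (d.dg ω) q : ℝ) ^ 2 * |d.proj ω - d.proj ω'| := by
  obtain ⟨y, hy, e⟩ := exists_y h
  obtain ⟨y', hy', e'⟩ := exists_y h'
  by_cases hne : d.dg ω q = d.dg ω' q
  · rw [hne, sub_self, abs_zero]; positivity
  have h1 := hy.le_dist hy' q hag
  rw [← e, ← e'] at h1
  have hQ : (0 : ℝ) < Qc (d.dg ω) q := by exact_mod_cast Qc_pos hy.one_le q
  rw [div_le_iff₀ (by positivity)] at h1
  have r1 := hy.rel q
  have r2 := hy'.rel q
  have r3 := hy.rel (q + 1)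
  have r4 := hy'.rel (q + 1)
  have p1 := hy.pos q
  have p2 := hy'.pos q
  have p3 := hy.pos (q + 1)
  have p4 := hy'.pos (q + 1)
  have p5 := hy.pos (q + 2)
  have p6 := hy'.pos (q + 2)
  have l1 := hy.lt_one (q + 1)
  have l2 := hy'.lt_one (q + 1)
  have l3 := hy.lt_one (q + 2)
  have l4 := hy'.lt_one (q + 2)
  have hM : (1 : ℝ) ≤ d.M := by exact_mod_cast d.hM
  -- difference of the tails
  have ht : |y (q + 1) - y' (q + 1)| ≤ 1 - 1 / (d.M + 1) := by
    have hM2 : 1 / ((d.M : ℝ) + 1) ≤ 1 / 2 := by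
      apply one_div_le_one_div_of_le <;> linarith
    rcases dg_dich h h' (q + 1) with ⟨c1, c2⟩ | ⟨c1, c2⟩
    · have c1' : (d.dg ω (q + 1) : ℝ) ≤ d.M := by exact_mod_cast c1
      have c2' : (d.dg ω' (q + 1) : ℝ) ≤ d.M := by exact_mod_cast c2
      have t1 : 1 / ((d.M : ℝ) + 1) ≤ y (q + 1) := by
        rw [div_le_iff₀ (by linarith), ← r3]
        exact mul_le_mul_of_nonneg_left (by linarith) p3.le
      have t2 : 1 / ((d.M : ℝ) + 1) ≤ y' (q + 1) := by
        rw [div_le_iff₀ (by linarith), ← r4]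
        exact mul_le_mul_of_nonneg_left (by linarith) p4.le
      rw [abs_le]; constructor <;> linarith
    · have c1' : (2 : ℝ) ≤ d.dg ω (q + 1) := by exact_mod_cast c1
      have c2' : (2 : ℝ) ≤ d.dg ω' (q + 1) := by exact_mod_cast c2
      have t1 : y (q + 1) ≤ 1 / 2 := by nlinarith
      have t2 : y' (q + 1) ≤ 1 / 2 := by nlinarith
      rw [abs_le]; constructor <;> linarith
  set a : ℝ := (d.dg ω q : ℝ)
  set b : ℝ := (d.dg ω' q : ℝ)
  have hab : 1 ≤ |a - b| := by
    have : (1 : ℤ) ≤ |(d.dg ω q : ℤ) - d.dg ω' q| := by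
      exact Int.one_le_abs (by omega)
    have h2 : ((1 : ℤ) : ℝ) ≤ ((|(d.dg ω q : ℤ) - d.dg ω' q| : ℤ) : ℝ) := by exact_mod_cast this
    simpa [a, b] using h2
  have hyy : y q - y' q = y q * y' q * ((b + y' (q + 1)) - (a + y (q + 1))) := by
    linear_combination y q * (-r2) + y' q * r1
  have h2 : |a - b| / (d.M + 1) ≤ |(b + y' (q + 1)) - (a + y (q + 1))| := by
    have t3 : |a - b| - |y (q + 1) - y' (q + 1)| ≤ |(b + y' (q + 1)) - (a + y (q + 1))| := by
      have := abs_sub_abs_le_abs_sub (a - b) (y' (q + 1) - y (q + 1))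
      rw [abs_sub_comm (y (q+1)), abs_sub_comm (b + y' (q+1))]
      refine this.trans (le_of_eq ?_)
      congr 1; ring
    have t4 : |a - b| / (d.M + 1) ≤ |a - b| - (1 - 1 / (d.M + 1)) := by
      have : (0 : ℝ) < d.M + 1 := by linarith
      rw [div_le_iff₀ this]
      field_simp
      nlinarith
    linarith
  have ha0 : (0 : ℝ) ≤ a := Nat.cast_nonneg _
  have hb0 : (0 : ℝ) ≤ b := Nat.cast_nonneg _
  have k1 : 1 ≤ y q * (a + 1) := by
    rw [← r1]; exact mul_le_mul_of_nonneg_left (by linarith) p1.le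
  have k2 : 1 ≤ y' q * (b + 1) := by
    rw [← r2]; exact mul_le_mul_of_nonneg_left (by linarith) p2.le
  have h3 : |y q - y' q| = y q * y' q * |(b + y' (q + 1)) - (a + y (q + 1))| := by
    rw [hyy, abs_mul, abs_of_pos (mul_pos p1 p2)]
  have h4 : |a - b| ≤ (d.M + 1) * ((a + 1) * (b + 1)) * |y q - y' q| := by
    rw [h3]
    rw [div_le_iff₀ (by linarith)] at h2
    set D := |(b + y' (q + 1)) - (a + y (q + 1))|
    have k3 : 1 ≤ (y q * (a + 1)) * (y' q * (b + 1)) := one_le_mul_of_one_le_of_one_le k1 k2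
    have hD : 0 ≤ D * (d.M + 1) := by positivity
    calc |a - b| ≤ D * (d.M + 1) := h2
      _ ≤ D * (d.M + 1) * ((y q * (a + 1)) * (y' q * (b + 1))) := le_mul_of_one_le_right hD k3
      _ = _ := by ring
  calc |a - b| ≤ _ := h4
    _ ≤ (d.M + 1) * ((a + 1) * (b + 1)) * (|d.proj ω - d.proj ω'| * (4 * (Qc (d.dg ω) q : ℝ) ^ 2)) := by
      gcongr
    _ = _ := by ring

lemma prodp_nonneg (ω : ℕ → Fin d.L → ℕ) (N : ℕ) : 0 ≤ ∏ i ∈ Finset.range N, d.p i (ω i) :=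
  Finset.prod_nonneg fun i _ => d.p_nonneg _ _

lemma P_subsingleton {S : Set (ℕ → Fin d.L → ℕ)} (hS : S ⊆ d.E)
    (h : ∀ ω ∈ S, ∀ ω' ∈ S, ∀ q, d.dg ω q = d.dg ω' q) : d.P S = 0 := by
  rcases S.eq_empty_or_nonempty with rfl | ⟨ω0, h0⟩
  · simp
  have hE := hS h0
  have hb : ∀ N : ℕ, d.P S ≤ ENNReal.ofReal ((2 * (1 / 2 : ℝ) ^ N) ^ d.s) := by
    intro N
    have h1 := d.P_le ω0 hE N univ S (fun ω hω => ⟨fun i _ => by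
      funext k
      have := h ω hω ω0 h0 (d.L * i + k)
      rwa [d.dg_block _ _ _ k.2, d.dg_block _ _ _ k.2] at this, mem_univ _⟩)
    rw [measure_univ, mul_one] at h1
    refine h1.trans (ENNReal.ofReal_le_ofReal ?_)
    have h2 := (gain hE N).trans (d.ele N)
    have hg := Qc_growth (dg_pos hE) (d.L * N)
    have hQ : (0 : ℝ) < Qc (d.dg ω0) (d.L * N) := by exact_mod_cast Qc_pos (dg_pos hE) _
    have hg' : (2 : ℝ) ^ N ≤ 2 * (Qc (d.dg ω0) (d.L * N) : ℝ) ^ 2 := by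
      calc (2 : ℝ) ^ N ≤ 2 ^ (d.L * N) := pow_le_pow_right₀ (by norm_num) (Nat.le_mul_of_pos_left _ d.hL)
        _ ≤ _ := by exact_mod_cast hg
    set Q : ℝ := (Qc (d.dg ω0) (d.L * N) : ℝ)
    have hG := prodp_nonneg ω0 N
    set G := ∏ i ∈ Finset.range N, d.p i (ω0 i)
    have h3 : (1 : ℝ) ≤ 2 * (1 / 2 : ℝ) ^ N * Q ^ 2 := by
      have : (0 : ℝ) < (1 / 2) ^ N := by positivity
      have e : (1 / 2 : ℝ) ^ N * 2 ^ N = 1 := by rw [← mul_pow]; norm_num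
      nlinarith
    have h4 : (1 : ℝ) ≤ (2 * (1 / 2 : ℝ) ^ N) ^ d.s * Q ^ (2 * d.s) := by
      have := Real.one_le_rpow h3 d.s0.le
      rwa [Real.mul_rpow (by positivity) (by positivity), ← Real.rpow_natCast Q 2,
        ← Real.rpow_mul hQ.le] at this
    calc G ≤ G * ((2 * (1 / 2 : ℝ) ^ N) ^ d.s * Q ^ (2 * d.s)) := le_mul_of_one_le_right hG h4
      _ = (G * Q ^ (2 * d.s)) * (2 * (1 / 2 : ℝ) ^ N) ^ d.s := by ring
      _ ≤ 1 * (2 * (1 / 2 : ℝ) ^ N) ^ d.s := by gcongr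
      _ = _ := one_mul _
  have hlim : Tendsto (fun N : ℕ => ENNReal.ofReal ((2 * (1 / 2 : ℝ) ^ N) ^ d.s)) atTop (nhds 0) := by
    rw [← ENNReal.ofReal_zero]
    apply ENNReal.tendsto_ofReal
    have h1 : Tendsto (fun N : ℕ => 2 * (1 / 2 : ℝ) ^ N) atTop (nhds (2 * 0)) :=
      (tendsto_pow_atTop_nhds_zero_of_lt_one (by norm_num) (by norm_num)).const_mul 2
    rw [mul_zero] at h1
    have h2 := h1.rpow_const (p := d.s) (Or.inr d.s0.le)
    rwa [Real.zero_rpow d.s0.ne'] at h2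
  exact le_antisymm (ge_of_tendsto' hlim hb) bot_le

lemma card_aux {L k : ℕ} (hk : k < L) (r : ℕ) (hr : L = k + 1 + r) (A : ℕ → ℕ) (w0 : Fin L → ℕ)
    (I : Finset ℕ) (F : Finset (Fin L → ℕ))
    (hF : ∀ w ∈ F, (∀ j : Fin L, (j : ℕ) < k → w j = w0 j) ∧ w ⟨k, hk⟩ ∈ I ∧
      ∀ j : Fin L, w j ∈ Finset.Ico (A j) (2 * A j)) :
    F.card ≤ I.card * ∏ x ∈ Finset.range r, A (k + 1 + x) := by
  set h : ℕ → ℕ := fun j => if j < k then 1 else if j = k then I.card else A j with hh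
  have hsub : F ⊆ Fintype.piFinset (fun j : Fin L =>
        if (j : ℕ) < k then {w0 j} else if (j : ℕ) = k then I
        else Finset.Ico (A j) (2 * A j)) := by
    intro w hw
    obtain ⟨g1, g2, g3⟩ := hF w hw
    rw [Fintype.mem_piFinset]
    intro j
    split_ifs with c1 c2
    · rw [g1 j c1]; exact Finset.mem_singleton_self _
    · have : j = ⟨k, hk⟩ := Fin.ext c2
      rw [this]; exact g2
    · exact g3 j
  have hcard : F.card ≤ ∏ j : Fin L, h j := by
    refine (Finset.card_le_card hsub).trans ?_
    rw [Fintype.card_piFinset]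
    refine Finset.prod_le_prod' fun j _ => ?_
    simp only [hh]
    split_ifs
    · simp
    · exact le_rfl
    · rw [Nat.card_Ico]; omega
  rw [← Finset.prod_range h] at hcard
  refine hcard.trans (le_of_eq ?_)
  rw [hr, Finset.prod_range_add, Finset.prod_range_succ]
  have e1 : ∏ x ∈ Finset.range k, h x = 1 := Finset.prod_eq_one fun x hx => by
    simp [hh, Finset.mem_range.1 hx]
  rw [e1, one_mul]
  congr 1
  · simp [hh]
  · refine Finset.prod_congr rfl fun x _ => ?_
    simp only [hh]
    rw [if_neg (by omega), if_neg (by omega)]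

lemma mu_big {N k : ℕ} (hN : N ∈ d.J) (hk : k < d.L) (w0 : Fin d.L → ℕ) (Y : ℝ) (hY : 1 ≤ Y) :
    d.mu N {w | (∀ j : Fin d.L, (j : ℕ) < k → w j = w0 j) ∧ |(w ⟨k, hk⟩ : ℝ) - w0 ⟨k, hk⟩| ≤ Y} ≤
      ENNReal.ofReal ((3 * Y) ^ d.s * (d.A N k : ℝ) ^ (1 - d.s) / (d.PA N k * d.A N k)) := by
  classical
  generalize hB : {w : Fin d.L → ℕ | (∀ j : Fin d.L, (j : ℕ) < k → w j = w0 j) ∧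
    |(w ⟨k, hk⟩ : ℝ) - w0 ⟨k, hk⟩| ≤ Y} = B
  rw [mu_apply]
  apply ENNReal.ofReal_le_ofReal
  have hp : ∀ w, d.p N w = (d.PA N d.L)⁻¹ := fun w => by rw [p, if_pos hN]
  simp only [hp]
  rw [Finset.sum_const, nsmul_eq_mul]
  have hFm : ∀ w ∈ (d.W N).filter (· ∈ B),
      (∀ j : Fin d.L, w j ∈ Finset.Ico (d.A N j) (2 * d.A N j)) ∧
      (∀ j : Fin d.L, (j : ℕ) < k → w j = w0 j) ∧ |(w ⟨k, hk⟩ : ℝ) - w0 ⟨k, hk⟩| ≤ Y := by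
    intro w hw
    obtain ⟨g1, g2⟩ := Finset.mem_filter.1 hw
    rw [W, if_pos hN, Fintype.mem_piFinset] at g1
    rw [← hB] at g2
    exact ⟨g1, g2⟩
  generalize (d.W N).filter (· ∈ B) = F at hFm ⊢
  set c : ℕ := w0 ⟨k, hk⟩
  set I : Finset ℕ := (Finset.Ico (d.A N k) (2 * d.A N k)).filter (fun v => |(v : ℝ) - c| ≤ Y)
  have hcA : (I.card : ℝ) ≤ d.A N k := by
    have : I.card ≤ (Finset.Ico (d.A N k) (2 * d.A N k)).card := Finset.card_filter_le _ _
    rw [Nat.card_Ico] at this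
    exact_mod_cast this.trans (by omega)
  have hcY : (I.card : ℝ) ≤ 3 * Y := by
    have : I ⊆ Finset.Icc (c - ⌊Y⌋₊) (c + ⌊Y⌋₊) := by
      intro v hv
      have hv' := (Finset.mem_filter.1 hv).2
      rw [abs_le] at hv'
      rw [Finset.mem_Icc]
      constructor
      · have : c - v ≤ ⌊Y⌋₊ := by
          apply Nat.le_floor
          rcases le_total v c with h | h
          · rw [Nat.cast_sub h]; linarith
          · rw [Nat.sub_eq_zero_of_le h]; simp; linarith
        omega
      · have : v - c ≤ ⌊Y⌋₊ := by
          apply Nat.le_floor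
          rcases le_total c v with h | h
          · rw [Nat.cast_sub h]; linarith
          · rw [Nat.sub_eq_zero_of_le h]; simp; linarith
        omega
    have h2 := Finset.card_le_card this
    rw [Nat.card_Icc] at h2
    have h3 : I.card ≤ 2 * ⌊Y⌋₊ + 1 := by omega
    have h4 : (I.card : ℝ) ≤ 2 * ⌊Y⌋₊ + 1 := by exact_mod_cast h3
    have h5 := Nat.floor_le (show 0 ≤ Y by linarith)
    linarith
  have hI : (I.card : ℝ) ≤ (3 * Y) ^ d.s * (d.A N k : ℝ) ^ (1 - d.s) := by
    have hs := d.s0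
    have hs1 := d.s1
    rcases Nat.eq_zero_or_pos I.card with h0 | h0
    · rw [h0]; simp; positivity
    · have h0' : (0 : ℝ) < I.card := by exact_mod_cast h0
      calc (I.card : ℝ) = (I.card : ℝ) ^ d.s * (I.card : ℝ) ^ (1 - d.s) := by
            rw [← Real.rpow_add h0']; simp
        _ ≤ _ := by
          gcongr
  obtain ⟨r, hr⟩ : ∃ r, d.L = k + 1 + r := ⟨d.L - (k + 1), by omega⟩
  have hcard := card_aux hk r hr (d.A N) w0 I F (by
    intro w hw
    obtain ⟨g1, g2, g3⟩ := hFm w hw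
    exact ⟨g2, Finset.mem_filter.2 ⟨g1 ⟨k, hk⟩, g3⟩, g1⟩)
  have hPA : d.PA N d.L = d.PA N k * d.A N k * ∏ x ∈ Finset.range r, (d.A N (k + 1 + x) : ℝ) := by
    rw [hr]
    unfold PA
    rw [Finset.prod_range_add, Finset.prod_range_succ]
  have hR : (0 : ℝ) < ∏ x ∈ Finset.range r, (d.A N (k + 1 + x) : ℝ) :=
    Finset.prod_pos fun j _ => by exact_mod_cast d.one_le_A _ _
  have hcard' : (F.card : ℝ) ≤
      I.card * ∏ x ∈ Finset.range r, (d.A N (k + 1 + x) : ℝ) := by exact_mod_cast hcard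
  have hPk := d.PA_pos N k
  have hA : (0 : ℝ) < d.A N k := by exact_mod_cast d.one_le_A N k
  rw [hPA]
  generalize (∏ x ∈ Finset.range r, (d.A N (k + 1 + x) : ℝ)) = R at hcard' hR ⊢
  calc (F.card : ℝ) * (d.PA N k * d.A N k * R)⁻¹ ≤ (I.card * R) * (d.PA N k * d.A N k * R)⁻¹ :=
        mul_le_mul_of_nonneg_right hcard' (inv_pos.2 (mul_pos (mul_pos hPk hA) hR)).le
    _ = I.card / (d.PA N k * d.A N k) := by field_simp
    _ ≤ _ := div_le_div_of_nonneg_right hI (mul_pos hPk hA).le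

end Dat


namespace Dat
variable {d : Dat}

lemma frost_free {S : Set (ℕ → Fin d.L → ℕ)} (hS : S ⊆ d.E) {N k : ℕ} (hk : k < d.L)
    (hN : N ∉ d.J) {δ : ℝ} (hδ : ∀ ω ∈ S, ∀ ω' ∈ S, |d.proj ω - d.proj ω'| ≤ δ)
    (hag : ∀ ω ∈ S, ∀ ω' ∈ S, ∀ q < d.L * N + k, d.dg ω q = d.dg ω' q)
    {ω1 ω2} (h1 : ω1 ∈ S) (h2 : ω2 ∈ S) (hne : d.dg ω1 (d.L * N + k) ≠ d.dg ω2 (d.L * N + k)) :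
    d.P S ≤ ENNReal.ofReal ((4 * (d.M + 1) ^ 3 * ((d.M + 1) ^ d.L) ^ 2 * δ) ^ d.s) := by
  have hE := hS h1
  have hP := d.P_le ω1 hE N univ S (fun ω hω => ⟨fun i hi => by
      funext k'
      have := hag ω hω ω1 h1 (d.L * i + k') (by
        have := k'.2
        have : d.L * (i + 1) ≤ d.L * N := Nat.mul_le_mul_left _ hi
        rw [mul_add] at this; omega)
      rwa [d.dg_block _ _ _ k'.2, d.dg_block _ _ _ k'.2] at this, mem_univ _⟩)
  rw [measure_univ, mul_one] at hP
  refine hP.trans (ENNReal.ofReal_le_ofReal ?_)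
  have hG := prodp_nonneg ω1 N
  have hg := (gain hE N).trans (d.ele N)
  have hQ : (0 : ℝ) < Qc (d.dg ω1) (d.L * N) := by exact_mod_cast Qc_pos (dg_pos hE) _
  have hQk := Q_free hE hN k hk.le
  have hgap := gap hE (hS h2) (d.L * N + k) (hag ω1 h1 ω2 h2)
  have hab : 1 ≤ |(d.dg ω1 (d.L * N + k) : ℝ) - d.dg ω2 (d.L * N + k)| := by
    have : (1 : ℤ) ≤ |(d.dg ω1 (d.L * N + k) : ℤ) - d.dg ω2 (d.L * N + k)| :=
      Int.one_le_abs (by omega)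
    exact_mod_cast this
  have b1 : (d.dg ω1 (d.L * N + k) : ℝ) ≤ d.M := by exact_mod_cast (dg_free hE hN hk).2
  have b2 : (d.dg ω2 (d.L * N + k) : ℝ) ≤ d.M := by exact_mod_cast (dg_free (hS h2) hN hk).2
  have hδ' := hδ ω1 h1 ω2 h2
  have hδ0 : 0 ≤ δ := (abs_nonneg _).trans hδ'
  have hM : (1 : ℝ) ≤ d.M + 1 := by simp
  set Q : ℝ := (Qc (d.dg ω1) (d.L * N) : ℝ)
  set G := ∏ i ∈ Finset.range N, d.p i (ω1 i)
  have h3 : (1 : ℝ) ≤ 4 * (d.M + 1) ^ 3 * ((d.M + 1) ^ d.L) ^ 2 * δ * Q ^ 2 := by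
    calc (1 : ℝ) ≤ _ := hab
      _ ≤ _ := hgap
      _ ≤ 4 * (d.M + 1) * ((d.M + 1) * (d.M + 1)) * (Q * (d.M + 1) ^ d.L) ^ 2 * δ := by
        gcongr
        refine hQk.trans ?_
        gcongr
      _ = _ := by ring
  have h4 : (1 : ℝ) ≤ (4 * (d.M + 1) ^ 3 * ((d.M + 1) ^ d.L) ^ 2 * δ) ^ d.s * Q ^ (2 * d.s) := by
    have := Real.one_le_rpow h3 d.s0.le
    rwa [Real.mul_rpow (by positivity) (by positivity), ← Real.rpow_natCast Q 2,
        ← Real.rpow_mul hQ.le] at this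
  generalize (4 * ((d.M : ℝ) + 1) ^ 3 * ((d.M + 1) ^ d.L) ^ 2 * δ) ^ d.s = X at h4 ⊢
  have hX : 0 ≤ X := by
    by_contra hc
    have : X * Q ^ (2 * d.s) ≤ 0 :=
      mul_nonpos_of_nonpos_of_nonneg (not_le.1 hc).le (Real.rpow_nonneg hQ.le _)
    linarith
  calc G ≤ G * (X * Q ^ (2 * d.s)) := le_mul_of_one_le_right hG h4
    _ = (G * Q ^ (2 * d.s)) * X := by ring
    _ ≤ 1 * X := mul_le_mul_of_nonneg_right hg hX
    _ = _ := one_mul _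

lemma frost_big {S : Set (ℕ → Fin d.L → ℕ)} (hS : S ⊆ d.E) {N k : ℕ} (hk : k < d.L)
    (hN : N ∈ d.J) {δ : ℝ} (hδ : ∀ ω ∈ S, ∀ ω' ∈ S, |d.proj ω - d.proj ω'| ≤ δ)
    (hag : ∀ ω ∈ S, ∀ ω' ∈ S, ∀ q < d.L * N + k, d.dg ω q = d.dg ω' q)
    {ω1 ω2} (h1 : ω1 ∈ S) (h2 : ω2 ∈ S) (hne : d.dg ω1 (d.L * N + k) ≠ d.dg ω2 (d.L * N + k)) :
    d.P S ≤ ENNReal.ofReal ((48 * (d.M + 1) * 4 ^ d.L * δ) ^ d.s) := by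
  have hE := hS h1
  have hs0 := d.s0
  have hs1 := d.s1
  have hQ : (0 : ℝ) < Qc (d.dg ω1) (d.L * N) := by exact_mod_cast Qc_pos (dg_pos hE) _
  have hQk := Q_big hE hN k hk.le
  have hδ0 : 0 ≤ δ := (abs_nonneg _).trans (hδ ω1 h1 ω2 h2)
  have hA : (0 : ℝ) < d.A N k := by exact_mod_cast d.one_le_A N k
  have hPA := d.PA_pos N k
  set Q : ℝ := (Qc (d.dg ω1) (d.L * N) : ℝ)
  set Y : ℝ := 16 * (d.M + 1) * 4 ^ d.L * δ * (d.A N k : ℝ) ^ 2 * Q ^ 2 * d.PA N k ^ 2 with hY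
  have hclose : ∀ ω ∈ S, |(d.dg ω (d.L * N + k) : ℝ) - d.dg ω1 (d.L * N + k)| ≤ Y := by
    intro ω hω
    have hgap := gap hE (hS hω) (d.L * N + k) (hag ω1 h1 ω hω)
    have b1 : (d.dg ω1 (d.L * N + k) : ℝ) + 1 ≤ 2 * d.A N k := by exact_mod_cast (dg_big hE hN hk).2
    have b2 : (d.dg ω (d.L * N + k) : ℝ) + 1 ≤ 2 * d.A N k := by
      exact_mod_cast (dg_big (hS hω) hN hk).2
    have hδ' := hδ ω1 h1 ω hω
    rw [abs_sub_comm]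
    have h4 : (2 : ℝ) ^ k ≤ 2 ^ d.L := pow_le_pow_right₀ (by norm_num) hk.le
    calc _ ≤ _ := hgap
      _ ≤ 4 * (d.M + 1) * ((2 * d.A N k) * (2 * d.A N k)) * (Q * (2 ^ d.L * d.PA N k)) ^ 2 * δ := by
        gcongr
        refine hQk.trans ?_
        gcongr
      _ = Y := by
        rw [hY, show (4 : ℝ) ^ d.L = (2 ^ d.L) ^ 2 by rw [← pow_mul, mul_comm, pow_mul]; norm_num]
        ring
  have hY1 : 1 ≤ Y := by
    have : (1 : ℤ) ≤ |(d.dg ω2 (d.L * N + k) : ℤ) - d.dg ω1 (d.L * N + k)| :=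
      Int.one_le_abs (by omega)
    have h5 : (1 : ℝ) ≤ |(d.dg ω2 (d.L * N + k) : ℝ) - d.dg ω1 (d.L * N + k)| := by
      exact_mod_cast this
    exact h5.trans (hclose ω2 h2)
  have hP := d.P_le ω1 hE N _ S (fun ω hω => ⟨fun i hi => by
      funext k'
      have := hag ω hω ω1 h1 (d.L * i + k') (by
        have := k'.2
        have : d.L * (i + 1) ≤ d.L * N := Nat.mul_le_mul_left _ hi
        rw [mul_add] at this; omega)
      rwa [d.dg_block _ _ _ k'.2, d.dg_block _ _ _ k'.2] at this,
      show ω N ∈ {w : Fin d.L → ℕ | (∀ j : Fin d.L, (j : ℕ) < k → w j = ω1 N j) ∧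
        |(w ⟨k, hk⟩ : ℝ) - ω1 N ⟨k, hk⟩| ≤ Y} from ⟨fun j hj => by
          have := hag ω hω ω1 h1 (d.L * N + j) (by omega)
          rwa [d.dg_block _ _ _ j.2, d.dg_block _ _ _ j.2] at this, by
          have := hclose ω hω
          rwa [d.dg_block _ _ _ hk, d.dg_block _ _ _ hk] at this⟩⟩)
  have hG := prodp_nonneg ω1 N
  have hg := gain hE N
  have hmu := mu_big hN hk (ω1 N) Y hY1
  refine (hP.trans (mul_le_mul_right hmu _)).trans ?_
  rw [← ENNReal.ofReal_mul hG]
  apply ENNReal.ofReal_le_ofReal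
  have hbig := d.bigEst N k
  have heb := (d.ebig N hN).trans (d.ele _)
  change _ * Q ^ (2 * d.s) ≤ _ at hg
  set G := ∏ i ∈ Finset.range N, d.p i (ω1 i)
  have he : d.e N * (2 ^ (k + 1) * Real.exp ((d.L * N + 1) * d.V0)) ≤ 1 := by
    refine le_trans ?_ heb
    have := d.epos N
    gcongr
    rw [pow_succ, mul_comm]
    gcongr
    calc (2 : ℝ) ^ k ≤ 2 ^ d.L := pow_le_pow_right₀ (by norm_num) hk.le
      _ ≤ 8 ^ d.L := by gcongr; norm_num
  generalize hA' : (d.A N k : ℝ) = A at *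
  generalize d.PA N k = R at *
  have e1 : (3 * Y) ^ d.s = (48 * (d.M + 1) * 4 ^ d.L * δ) ^ d.s * A ^ (2 * d.s) * Q ^ (2 * d.s) *
      R ^ (2 * d.s) := by
    have : ∀ x : ℝ, 0 ≤ x → x ^ (2 * d.s) = (x ^ 2) ^ d.s := fun x hx => by
      rw [← Real.rpow_natCast x 2, ← Real.rpow_mul hx]; norm_num
    rw [this A hA.le, this Q hQ.le, this R hPA.le, ← Real.mul_rpow (by positivity) (by positivity),
      ← Real.mul_rpow (by positivity) (by positivity),
      ← Real.mul_rpow (by positivity) (by positivity), hY]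
    congr 1; ring
  have e2 : A ^ (2 * d.s) * A ^ (1 - d.s) / A = A ^ d.s := by
    rw [← Real.rpow_add hA, ← Real.rpow_sub_one hA.ne']; congr 1; ring
  have e3 : R ^ (2 * d.s) / R = R ^ (2 * d.s - 1) := (Real.rpow_sub_one hPA.ne' _).symm
  have hX : 0 ≤ (48 * ((d.M : ℝ) + 1) * 4 ^ d.L * δ) ^ d.s := by positivity
  generalize (48 * ((d.M : ℝ) + 1) * 4 ^ d.L * δ) ^ d.s = X at *
  calc G * ((3 * Y) ^ d.s * A ^ (1 - d.s) / (R * A))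
      = (G * Q ^ (2 * d.s)) * ((R ^ (2 * d.s) / R) * (A ^ (2 * d.s) * A ^ (1 - d.s) / A)) * X := by
        rw [e1]; field_simp
    _ = (G * Q ^ (2 * d.s)) * (R ^ (2 * d.s - 1) * A ^ d.s) * X := by rw [e2, e3]
    _ ≤ d.e N * (2 ^ (k + 1) * Real.exp ((d.L * N + 1) * d.V0)) * X := by
        have := d.epos N
        refine mul_le_mul_of_nonneg_right (mul_le_mul hg hbig (by positivity) this.le) hX
    _ ≤ 1 * X := mul_le_mul_of_nonneg_right he hX
    _ = X := one_mul X

lemma frostman (d : Dat) : ∃ C : ℝ, 0 < C ∧ ∀ U : Set ℝ,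
    d.P (d.E ∩ d.proj ⁻¹' U) ≤ ENNReal.ofReal C * Metric.ediam U ^ d.s := by
  set C0 : ℝ := 48 * (d.M + 1) ^ 3 * ((d.M + 1) ^ d.L) ^ 2 * 4 ^ d.L with hC0
  have hC0p : 0 < C0 := by positivity
  refine ⟨C0 ^ d.s, by positivity, fun U => ?_⟩
  have hM : (1 : ℝ) ≤ d.M + 1 := by simp
  by_cases htop : Metric.ediam U = ⊤
  · rw [htop, ENNReal.top_rpow_of_pos d.s0, ENNReal.mul_top]
    · exact le_top
    · simp; positivity
  set δ := (Metric.ediam U).toReal with hδ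
  have hδ0 : 0 ≤ δ := ENNReal.toReal_nonneg
  have hU : Metric.ediam U = ENNReal.ofReal δ := (ENNReal.ofReal_toReal htop).symm
  rw [hU, ENNReal.ofReal_rpow_of_nonneg hδ0 d.s0.le, ← ENNReal.ofReal_mul (by positivity),
    ← Real.mul_rpow hC0p.le hδ0]
  set S := d.E ∩ d.proj ⁻¹' U with hSdef
  have hS : S ⊆ d.E := inter_subset_left
  have hd : ∀ ω ∈ S, ∀ ω' ∈ S, |d.proj ω - d.proj ω'| ≤ δ := by
    intro ω hω ω' hω'
    have := Metric.edist_le_ediam_of_mem (s := U) (show d.proj ω ∈ U from hω.2)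
      (show d.proj ω' ∈ U from hω'.2)
    rw [hU, edist_dist, Real.dist_eq] at this
    exact (ENNReal.ofReal_le_ofReal_iff hδ0).1 this
  by_cases hex : ∃ q, ∃ ω ∈ S, ∃ ω' ∈ S, d.dg ω q ≠ d.dg ω' q
  · classical
    obtain ⟨ω1, h1, ω2, h2, hne⟩ := Nat.find_spec hex
    have hmin : ∀ ω ∈ S, ∀ ω' ∈ S, ∀ q < Nat.find hex, d.dg ω q = d.dg ω' q := by
      intro ω hω ω' hω' q hq
      by_contra hc
      exact Nat.find_min hex hq ⟨ω, hω, ω', hω', hc⟩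
    generalize Nat.find hex = q at hne hmin
    have hk : q % d.L < d.L := Nat.mod_lt _ d.hL
    rw [← Nat.div_add_mod q d.L] at hne hmin
    have p1 : (1 : ℝ) ≤ (d.M + 1) ^ 3 := one_le_pow₀ hM
    have p2 : (1 : ℝ) ≤ ((d.M + 1) ^ d.L) ^ 2 := one_le_pow₀ (one_le_pow₀ hM)
    have p3 : (1 : ℝ) ≤ 4 ^ d.L := one_le_pow₀ (by norm_num)
    have p4 : ((d.M : ℝ) + 1) ≤ (d.M + 1) ^ 3 := le_self_pow₀ hM (by norm_num)
    by_cases hN : q / d.L ∈ d.J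
    · refine (frost_big hS hk hN hd hmin h1 h2 hne).trans (ENNReal.ofReal_le_ofReal ?_)
      refine Real.rpow_le_rpow (by positivity) ?_ d.s0.le
      refine mul_le_mul_of_nonneg_right ?_ hδ0
      rw [hC0]
      refine mul_le_mul_of_nonneg_right ?_ (by positivity)
      calc 48 * ((d.M : ℝ) + 1) ≤ 48 * (d.M + 1) ^ 3 := by gcongr
        _ ≤ _ := le_mul_of_one_le_right (by positivity) p2
    · refine (frost_free hS hk hN hd hmin h1 h2 hne).trans (ENNReal.ofReal_le_ofReal ?_)
      refine Real.rpow_le_rpow (by positivity) ?_ d.s0.le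
      refine mul_le_mul_of_nonneg_right ?_ hδ0
      rw [hC0]
      calc 4 * ((d.M : ℝ) + 1) ^ 3 * ((d.M + 1) ^ d.L) ^ 2
          ≤ 48 * ((d.M : ℝ) + 1) ^ 3 * ((d.M + 1) ^ d.L) ^ 2 := by gcongr; norm_num
        _ ≤ _ := le_mul_of_one_le_right (by positivity) p3
  · push Not at hex
    rw [P_subsingleton hS (fun ω hω ω' hω' q => hex q ω hω ω' hω')]
    exact bot_le

lemma dim_ge (d : Dat) : ENNReal.ofReal d.s ≤ dimH (d.proj '' d.E) := by
  obtain ⟨C, hC, hF⟩ := d.frostman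
  have hs : ENNReal.ofReal d.s = ((d.s.toNNReal : NNReal) : ENNReal) := rfl
  rw [hs]
  apply le_dimH_of_hausdorffMeasure_ne_zero
  rw [Real.coe_toNNReal _ d.s0.le]
  have hCt : ENNReal.ofReal C ≠ 0 := by simpa using hC
  have hCtop : ENNReal.ofReal C ≠ ⊤ := ENNReal.ofReal_ne_top
  have hPE : 1 ≤ d.P d.E := by
    have h1 : d.P univ ≤ d.P d.E + d.P d.Eᶜ := by
      rw [← union_compl_self d.E]; exact measure_union_le _ _
    rwa [d.P_E_compl, add_zero, measure_univ] at h1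
  have key : (ENNReal.ofReal C)⁻¹ ≤ μH[d.s] (d.proj '' d.E) := by
    rw [Measure.hausdorffMeasure_apply]
    refine le_trans ?_ (le_iSup₂ (f := fun (r : ENNReal) (_ : 0 < r) => _) 1 one_pos)
    refine le_iInf₂ fun t ht => le_iInf fun hr => ?_
    rw [ENNReal.inv_le_iff_le_mul (fun _ => hCt) (fun h => absurd h hCtop)]
    rw [← ENNReal.tsum_mul_left]
    calc 1 ≤ d.P d.E := hPE
      _ ≤ d.P (⋃ n, d.E ∩ d.proj ⁻¹' (t n)) := by
        refine measure_mono fun ω hω => ?_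
        obtain ⟨n, hn⟩ := mem_iUnion.1 (ht (mem_image_of_mem _ hω))
        exact mem_iUnion.2 ⟨n, hω, hn⟩
      _ ≤ ∑' n, d.P (d.E ∩ d.proj ⁻¹' (t n)) := measure_iUnion_le _
      _ ≤ _ := by
        refine ENNReal.tsum_le_tsum fun n => ?_
        rcases (t n).eq_empty_or_nonempty with h | h
        · simp [h]
        · refine (hF (t n)).trans ?_
          simp [h]
  intro h0
  rw [h0] at key
  exact absurd (le_antisymm key bot_le) (ENNReal.inv_ne_zero.2 hCtop)

end Dat


namespace Dat
variable {d : Dat}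

open Classical in
/-- big part of the digit at position q -/
noncomputable def Ao (d : Dat) (q : ℕ) : ℕ := if q / d.L ∈ d.J then d.A (q / d.L) (q % d.L) else 1

lemma one_le_Ao (q : ℕ) : 1 ≤ d.Ao q := by
  unfold Ao; split_ifs
  · exact d.one_le_A _ _
  · exact le_rfl

lemma dg_le_Ao {ω} (h : ω ∈ d.E) (q : ℕ) : d.dg ω q ≤ 2 * d.M * d.Ao q := by
  have hk : q % d.L < d.L := Nat.mod_lt _ d.hL
  have hM := d.hM
  conv_lhs => rw [← Nat.div_add_mod q d.L]
  unfold Ao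
  split_ifs with hN
  · have := (dg_big h hN hk).2
    calc _ ≤ 2 * d.A (q / d.L) (q % d.L) := this.le
      _ ≤ _ := by gcongr; omega
  · have := (dg_free h hN hk).2
    omega

lemma Ao_block (N k : ℕ) (hk : k < d.L) : d.Ao (d.L * N + k) =
    open Classical in if N ∈ d.J then d.A N k else 1 := by
  unfold Ao
  have h1 : (d.L * N + k) / d.L = N := by
    rw [Nat.mul_add_div d.hL, Nat.div_eq_of_lt hk, add_zero]
  have h2 : (d.L * N + k) % d.L = k := by
    rw [Nat.mul_add_mod, Nat.mod_eq_of_lt hk]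
  rw [h1, h2]

lemma window {r : ℕ} (hr : r ≤ d.L) (hJ2 : ∀ i ∈ d.J, i + 1 ∉ d.J) {β : ℝ} (hβ0 : 0 ≤ β)
    (hwin : ∀ k, d.T (k + r) - d.T k ≤ β) (n : ℕ) :
    ∏ j ∈ Finset.range r, (d.Ao (n + j) : ℝ) ≤ 2 ^ r * Real.exp ((n + d.L + 1) * β) := by
  have hk : n % d.L < d.L := Nat.mod_lt _ d.hL
  have hn := Nat.div_add_mod n d.L
  set N := n / d.L
  set k := n % d.L
  have hLN : (d.L : ℝ) * N ≤ n := by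
    have : d.L * N ≤ n := by omega
    exact_mod_cast this
  by_cases hN : N ∈ d.J
  · have h1 : ∏ j ∈ Finset.range r, (d.Ao (n + j) : ℝ) ≤ ∏ j ∈ Finset.range r, (d.A N (k + j) : ℝ) := by
      refine Finset.prod_le_prod (fun _ _ => Nat.cast_nonneg _) fun j hj => ?_
      have hj' := Finset.mem_range.1 hj
      by_cases hc : k + j < d.L
      · rw [← hn, add_assoc, Ao_block _ _ hc, if_pos hN]
      · have e : n + j = d.L * (N + 1) + (k + j - d.L) := by rw [mul_add]; omega
        rw [e, Ao_block _ _ (by omega), if_neg (hJ2 N hN)]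
        exact_mod_cast d.one_le_A _ _
    refine h1.trans ((d.prodA_le N k r).trans ?_)
    gcongr 2 ^ r * Real.exp ?_
    calc _ ≤ (d.L * N + 1 : ℝ) * β := by gcongr; exact hwin k
      _ ≤ _ := by
        gcongr
        have : (0:ℝ) ≤ d.L := by positivity
        linarith
  · by_cases hN1 : N + 1 ∈ d.J
    · have hfin : ∏ j ∈ Finset.range r, (d.A (N + 1) (0 + j) : ℝ) ≤
          2 ^ r * Real.exp ((n + d.L + 1) * β) := by
        refine (d.prodA_le (N + 1) 0 r).trans ?_
        gcongr 2 ^ r * Real.exp ?_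
        have := hwin 0
        calc _ ≤ (d.L * (N + 1 : ℕ) + 1 : ℝ) * β := by gcongr
          _ ≤ _ := by
            gcongr
            push_cast
            linarith
      refine le_trans ?_ hfin
      simp only [zero_add]
      -- positions in the block N are free
      have hfree : ∀ j, k + j < d.L → d.Ao (n + j) = 1 := by
        intro j hj
        rw [← hn, add_assoc, Ao_block _ _ hj, if_neg hN]
      rcases le_total r (d.L - k) with hc | hc
      · rw [Finset.prod_eq_one]
        · have : 1 ≤ ∏ j ∈ Finset.range r, d.A (N + 1) j :=
            Finset.one_le_prod' fun j _ => d.one_le_A _ _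
          exact_mod_cast this
        · intro j hj
          have := Finset.mem_range.1 hj
          rw [hfree j (by omega)]; simp
      · obtain ⟨t, rfl⟩ := Nat.exists_eq_add_of_le hc
        rw [Finset.prod_range_add, Finset.prod_eq_one, one_mul]
        · rw [add_comm (d.L - k) t, Finset.prod_range_add]
          have h2 : ∏ x ∈ Finset.range t, (d.Ao (n + (d.L - k + x)) : ℝ) =
              ∏ x ∈ Finset.range t, (d.A (N + 1) x : ℝ) := by
            refine Finset.prod_congr rfl fun x hx => ?_
            have := Finset.mem_range.1 hx
            have e : n + (d.L - k + x) = d.L * (N + 1) + x := by rw [mul_add]; omega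
            rw [e, Ao_block _ _ (by omega), if_pos hN1]
          rw [h2]
          refine le_mul_of_one_le_right (Finset.prod_nonneg fun _ _ => Nat.cast_nonneg _) ?_
          have : 1 ≤ ∏ x ∈ Finset.range (d.L - k), d.A (N + 1) (t + x) :=
            Finset.one_le_prod' fun j _ => d.one_le_A _ _
          exact_mod_cast this
        · intro j hj
          have := Finset.mem_range.1 hj
          rw [hfree j (by omega)]; simp
    · rw [Finset.prod_eq_one]
      · have h1 : (1 : ℝ) ≤ 2 ^ r := one_le_pow₀ (by norm_num)
        have h2 : (1 : ℝ) ≤ Real.exp ((n + d.L + 1) * β) := Real.one_le_exp (by positivity)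
        exact one_le_mul_of_one_le_of_one_le h1 h2
      · intro j hj
        have hj' := Finset.mem_range.1 hj
        by_cases hc : k + j < d.L
        · rw [← hn, add_assoc, Ao_block _ _ hc, if_neg hN]; simp
        · have e : n + j = d.L * (N + 1) + (k + j - d.L) := by rw [mul_add]; omega
          rw [e, Ao_block _ _ (by omega), if_neg hN1]; simp

lemma proj_mem {ω} (hω : ω ∈ d.E) {m : ℕ} {B₁ B₂ β : ℝ} (hm : 2 ≤ m) (hmL : m ≤ d.L)
    (hJ : d.J.Infinite) (hJ2 : ∀ i ∈ d.J, i + 1 ∉ d.J) (hB1 : 1 < B₁) (hB2 : 1 < B₂)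
    (hTm : d.T m = Real.log B₁) (hβ0 : 0 ≤ β) (hβ : β < Real.log B₂)
    (hwin : ∀ k, d.T (k + (m - 1)) - d.T k ≤ β) : d.proj ω ∈ Fset m B₁ B₂ := by
  obtain ⟨y, hy, e⟩ := exists_y hω
  rw [e]
  refine ⟨⟨hy.pos 0, hy.lt_one 0⟩, hy.irrational, ?_, ?_⟩
  · have hinj : Set.InjOn (fun i => d.L * i + 1) d.J := by
      intro a _ b _ hab
      have : d.L * a = d.L * b := by simpa using hab
      exact Nat.eq_of_mul_eq_mul_left d.hL this
    refine (hJ.image hinj).mono ?_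
    rintro _ ⟨i, hi, rfl⟩
    change B₁ ^ (d.L * i + 1) ≤ ∏ j ∈ Finset.range m, (pq (y 0) (d.L * i + 1 + j) : ℝ)
    have h1 : B₁ ^ (d.L * i + 1) = Real.exp ((d.L * i + 1) * d.T m) := by
      rw [hTm, show ((d.L : ℝ) * i + 1) * Real.log B₁ = Real.log B₁ * ((d.L * i + 1 : ℕ) : ℝ) by
        push_cast; ring, Real.exp_mul, Real.exp_log (by linarith), Real.rpow_natCast]
    rw [h1]
    refine (d.le_PA i m).trans ?_
    refine Finset.prod_le_prod (fun _ _ => Nat.cast_nonneg _) fun j hj => ?_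
    have hj' := Finset.mem_range.1 hj
    rw [show d.L * i + 1 + j = (d.L * i + j) + 1 by ring, hy.pq_eq]
    exact_mod_cast (dg_big hω hi (by omega)).1
  · set C : ℝ := (2 * d.M) ^ (m - 1) * (2 ^ (m - 1) * Real.exp ((d.L + 1) * β)) with hC
    have hlim : Tendsto (fun n : ℕ => Real.exp (n * (Real.log B₂ - β))) atTop atTop := by
      apply Real.tendsto_exp_atTop.comp
      exact tendsto_natCast_atTop_atTop.atTop_mul_const (by linarith)
    filter_upwards [hlim.eventually_gt_atTop C] with n hn
    have h1 : ∏ j ∈ Finset.range (m - 1), (pq (y 0) (n + 1 + j) : ℝ) ≤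
        ∏ j ∈ Finset.range (m - 1), ((2 * d.M : ℝ) * d.Ao (n + j)) := by
      refine Finset.prod_le_prod (fun _ _ => Nat.cast_nonneg _) fun j _ => ?_
      rw [show n + 1 + j = (n + j) + 1 by ring, hy.pq_eq]
      exact_mod_cast dg_le_Ao hω (n + j)
    rw [Finset.prod_mul_distrib, Finset.prod_const, Finset.card_range] at h1
    have h2 := window (show m - 1 ≤ d.L by omega) hJ2 hβ0 hwin n
    calc _ ≤ _ := h1
      _ ≤ (2 * d.M : ℝ) ^ (m - 1) * (2 ^ (m - 1) * Real.exp ((n + d.L + 1) * β)) := by gcongr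
      _ = C * Real.exp (n * β) := by
        rw [hC, show ((n : ℝ) + d.L + 1) * β = (d.L + 1) * β + n * β by ring, Real.exp_add]; ring
      _ < Real.exp (n * (Real.log B₂ - β)) * Real.exp (n * β) := by gcongr
      _ = B₂ ^ n := by
        rw [← Real.exp_add, show (n : ℝ) * (Real.log B₂ - β) + n * β = Real.log B₂ * n by ring,
          Real.exp_mul, Real.exp_log (by linarith), Real.rpow_natCast]

end Dat

/-- Choice of the big positions and the loss sequence. -/
lemma exists_J_e (L : ℕ) (hL : 0 < L) {V0 V1 : ℝ} (h0 : 0 < V0) (h1 : V0 < V1) :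
    ∃ (J : Set ℕ) (e : ℕ → ℝ), J.Infinite ∧ (∀ i ∈ J, i + 1 ∉ J) ∧ e 0 = 1 ∧ (∀ N, 0 < e N) ∧
      (∀ N, e N ≤ 1) ∧ (∀ N, N ∉ J → e N * Real.exp (-(V1 * L)) ≤ e (N + 1)) ∧
      (∀ N, N ∈ J → e N * (2 * 8 ^ L * Real.exp ((L * N + 1) * V0)) ≤ e (N + 1)) := by
  classical
  obtain ⟨K, hK⟩ := exists_nat_gt (max 2 (max (2 * V1 / (V1 - V0)) (2 * (V1 + V0 + 4) / (V1 - V0))))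
  have hK2 : 2 < K := by exact_mod_cast (max_lt_iff.1 hK).1
  have hd : 0 < V1 - V0 := by linarith
  have hK3 : 2 * V1 < K * (V1 - V0) := by
    have := (max_lt_iff.1 (max_lt_iff.1 hK).2).1
    rwa [div_lt_iff₀ hd] at this
  have hK4 : 2 * (V1 + V0 + 4) < K * (V1 - V0) := by
    have := (max_lt_iff.1 (max_lt_iff.1 hK).2).2
    rwa [div_lt_iff₀ hd] at this
  set J : Set ℕ := {N | ∃ j : ℕ, N = K ^ (j + 1)} with hJ
  obtain ⟨ρ, ρ0, ρs⟩ : ∃ ρ : ℕ → ℕ, ρ 0 = 0 ∧ ∀ i, ρ (i + 1) = if i ∈ J then i + 1 else ρ i :=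
    ⟨fun N => Nat.rec 0 (fun i r => if i ∈ J then i + 1 else r) N, rfl, fun _ => rfl⟩
  have ρle : ∀ N, ρ N ≤ N := by
    intro N
    induction N with
    | zero => rw [ρ0]
    | succ N ih => rw [ρs]; split_ifs <;> omega
  have ρJ : ∀ j, ∀ N ≤ K ^ (j + 1), ρ N ≤ K ^ j + 1 := by
    intro j N
    induction N with
    | zero => intro _; rw [ρ0]; omega
    | succ N ih =>
      intro hN
      rw [ρs]
      split_ifs with h
      · obtain ⟨l, rfl⟩ := h
        have h3 : K ^ (l + 1) < K ^ (j + 1) := by omega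
        have h4 : l + 1 < j + 1 := (Nat.pow_lt_pow_iff_right (by omega)).1 h3
        have : K ^ (l + 1) ≤ K ^ j := Nat.pow_le_pow_right (by omega) (by omega)
        omega
      · exact ih (by omega)
  have hV1 : 0 < V1 := by linarith
  have hLr : (1 : ℝ) ≤ L := by exact_mod_cast hL
  refine ⟨J, fun N : ℕ => Real.exp (-(V1 * L * ((N : ℝ) - ((ρ N : ℕ) : ℝ)))), ?_, ?_, ?_, ?_, ?_, ?_, ?_⟩
  · have : J = Set.range (fun j : ℕ => K ^ (j + 1)) := by ext x; simp [hJ, eq_comm]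
    rw [this]
    apply Set.infinite_range_of_injective
    intro a b hab
    have := Nat.pow_right_injective (by omega : 2 ≤ K) hab
    omega
  · rintro _ ⟨j, rfl⟩ ⟨l, hl⟩
    have h3 : K ∣ K ^ (j + 1) := dvd_pow_self _ (by omega)
    have h4 : K ∣ K ^ (l + 1) := dvd_pow_self _ (by omega)
    rw [← hl] at h4
    have := (Nat.dvd_add_right h3).1 h4
    have := Nat.le_of_dvd one_pos this
    omega
  · simp [ρ0]
  · intro N; exact Real.exp_pos _
  · intro N
    rw [Real.exp_le_one_iff]
    have : (ρ N : ℝ) ≤ N := by exact_mod_cast ρle N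
    have : 0 ≤ V1 * L * ((N : ℝ) - ((ρ N : ℕ) : ℝ)) := mul_nonneg (by positivity) (by linarith)
    linarith
  · intro N hN
    rw [← Real.exp_add]
    apply le_of_eq
    beta_reduce
    rw [ρs, if_neg hN]
    push_cast
    congr 1; ring
  · intro N hN
    have e1 : Real.exp (-(V1 * L * (((N + 1 : ℕ) : ℝ) - ((ρ (N + 1) : ℕ) : ℝ)))) = 1 := by
      rw [ρs, if_pos hN]; simp
    simp only [e1]
    obtain ⟨j, rfl⟩ := hN
    have hρ := ρJ j (K ^ (j + 1)) le_rfl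
    have hρ' : ((ρ (K ^ (j + 1)) : ℕ) : ℝ) ≤ (K : ℝ) ^ j + 1 := by exact_mod_cast hρ
    generalize ((ρ (K ^ (j + 1)) : ℕ) : ℝ) = R at *
    have hx1 : (1 : ℝ) ≤ (K : ℝ) ^ j := one_le_pow₀ (by exact_mod_cast (by omega : 1 ≤ K))
    have h8 : (2 : ℝ) * 8 ^ L ≤ Real.exp (4 * L) := by
      have e3 : (16 : ℝ) ≤ Real.exp 4 := by
        have := Real.add_one_le_exp (1 : ℝ)
        have e5 : Real.exp 4 = (Real.exp 1) ^ 4 := by rw [← Real.exp_nat_mul]; norm_num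
        rw [e5]
        calc (16 : ℝ) = 2 ^ 4 := by norm_num
          _ ≤ _ := by gcongr; linarith
      calc (2 : ℝ) * 8 ^ L ≤ 2 ^ L * 8 ^ L := by
            gcongr; exact le_self_pow₀ (by norm_num) (by omega)
        _ = 16 ^ L := by rw [← mul_pow]; norm_num
        _ ≤ (Real.exp 4) ^ L := by gcongr
        _ = _ := by rw [← Real.exp_nat_mul]; congr 1; ring
    push_cast
    rw [pow_succ]
    set x : ℝ := (K : ℝ) ^ j
    calc _ ≤ Real.exp (-(V1 * L * (x * K - R))) *
          (Real.exp (4 * L) * Real.exp ((L * (x * K) + 1) * V0)) := by gcongr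
      _ = Real.exp (-(V1 * L * (x * K - R)) + (4 * L + (L * (x * K) + 1) * V0)) := by
          rw [Real.exp_add, Real.exp_add]
      _ ≤ 1 := by
          rw [Real.exp_le_one_iff]
          have a1 : V1 * L * (x * K - (x + 1)) ≤ V1 * L * (x * K - R) := by gcongr
          have a2 : V0 ≤ L * V0 := by nlinarith
          have a3 : V1 * x + V1 + V0 + 4 ≤ x * K * (V1 - V0) := by
            nlinarith
          nlinarith


/-- The plain partition sum. -/
noncomputable def zSum (s : ℝ) (n : ℕ) : ENNReal :=
  ∑' a : Fin n → ℕ+, ENNReal.ofReal (((contQ n fun i => (a i : ℕ)) : ℝ) ^ (-(2 * s)))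

lemma exists_finite_sum (s : ℝ) (n : ℕ) (x : ℝ) (h : ENNReal.ofReal x < zSum s n) :
    ∃ M : ℕ, 1 ≤ M ∧ x ≤ ∑ w ∈ Fintype.piFinset (fun _ : Fin n => Finset.Icc 1 M),
      ((contQ n w : ℕ) : ℝ) ^ (-(2 * s)) := by
  classical
  unfold zSum at h
  rw [ENNReal.tsum_eq_iSup_sum] at h
  obtain ⟨F, hF⟩ := lt_iSup_iff.1 h
  rw [← ENNReal.ofReal_sum_of_nonneg (fun _ _ => by positivity)] at hF
  have hF' := (ENNReal.ofReal_lt_ofReal_iff'.1 hF).1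
  set M : ℕ := 1 + ∑ a ∈ F, ∑ i, (a i : ℕ) with hM
  refine ⟨M, by omega, hF'.le.trans ?_⟩
  have hinj : Set.InjOn (fun (a : Fin n → ℕ+) (i : Fin n) => (a i : ℕ)) F := by
    intro a _ b _ hab
    funext i
    exact PNat.coe_injective (congrFun hab i)
  rw [← Finset.sum_image (f := fun w : Fin n → ℕ => ((contQ n w : ℕ) : ℝ) ^ (-(2 * s))) hinj]
  refine Finset.sum_le_sum_of_subset_of_nonneg ?_ (fun _ _ _ => by positivity)
  intro w hw
  obtain ⟨a, ha, rfl⟩ := Finset.mem_image.1 hw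
  rw [Fintype.mem_piFinset]
  intro i
  rw [Finset.mem_Icc]
  refine ⟨(a i).pos, ?_⟩
  have h1 : (a i : ℕ) ≤ ∑ i, (a i : ℕ) :=
    Finset.single_le_sum (f := fun i => (a i : ℕ)) (fun _ _ => Nat.zero_le _) (Finset.mem_univ i)
  have h2 : ∑ i, (a i : ℕ) ≤ ∑ a ∈ F, ∑ i, (a i : ℕ) :=
    Finset.single_le_sum (f := fun a : Fin n → ℕ+ => ∑ i, (a i : ℕ))
      (fun _ _ => Nat.zero_le _) ha
  omega

lemma lower_aux {m : ℕ} (hm : 2 ≤ m) {B₁ B₂ s V0 c β : ℝ} (hB1 : 1 < B₁) (hB2 : 1 < B₂)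
    (s0 : 0 < s) (s1 : s < 1) (T : ℕ → ℝ) (Tmono : Monotone T) (T0 : T 0 = 0)
    (hTm : T m = Real.log B₁) (hV : ∀ k, s * T (k + 1) - (1 - s) * T k ≤ V0) (hV0 : 0 < V0)
    (hβ0 : 0 ≤ β) (hβ : β < Real.log B₂) (hwin : ∀ k, T (k + (m - 1)) - T k ≤ β)
    (hc : V0 < c) (hZ : ∃ᶠ n : ℕ in atTop, ENNReal.ofReal (Real.exp (c * n)) ≤ zSum s n) :
    ENNReal.ofReal s ≤ dimH (Fset m B₁ B₂) := by
  obtain ⟨V1, h1, h2⟩ := exists_between hc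
  have hlim : Tendsto (fun n : ℕ => Real.exp (n * (c - V1))) atTop atTop := by
    apply Real.tendsto_exp_atTop.comp
    exact tendsto_natCast_atTop_atTop.atTop_mul_const (by linarith)
  obtain ⟨L, hL, hL4, hLm⟩ := (hZ.and_eventually
    ((hlim.eventually_gt_atTop 4).and (eventually_ge_atTop m))).exists
  have h4 : 4 * Real.exp (V1 * L) < Real.exp (c * L) := by
    calc _ < Real.exp (L * (c - V1)) * Real.exp (V1 * L) := by gcongr
      _ = _ := by rw [← Real.exp_add]; congr 1; ring
  obtain ⟨M, hM, hMs⟩ := exists_finite_sum s L (4 * Real.exp (V1 * L))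
    (lt_of_lt_of_le ((ENNReal.ofReal_lt_ofReal_iff (Real.exp_pos _)).2 h4) hL)
  have hL0 : 0 < L := by omega
  obtain ⟨J, e, hJ, hJ2, e0, ep, el, ef, eb⟩ := exists_J_e L hL0 hV0 h1
  let d : Dat := ⟨L, M, s, V0, V1, T, J, e, hL0, hM, s0, s1, Tmono, T0, hV, hMs, e0, ep, el, ef, eb⟩
  refine (d.dim_ge).trans (dimH_mono ?_)
  rintro _ ⟨ω, hω, rfl⟩
  exact Dat.proj_mem (d := d) hω hm hLm hJ hJ2 hB1 hB2 hTm hβ0 hβ hwin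


/-- `1 + r + ... + r^(k-1)` -/
noncomputable def sg (r : ℝ) (k : ℕ) : ℝ := ∑ i ∈ Finset.range k, r ^ i

lemma sg_zero (r : ℝ) : sg r 0 = 0 := by simp [sg]

lemma sg_succ (r : ℝ) (k : ℕ) : sg r (k + 1) = 1 + r * sg r k := by
  unfold sg
  rw [Finset.sum_range_succ', Finset.mul_sum]
  simp only [pow_succ, pow_zero, mul_comm]
  ring

lemma sg_le_succ {r : ℝ} (hr : 0 ≤ r) (k : ℕ) : sg r k ≤ sg r (k + 1) := by
  unfold sg
  rw [Finset.sum_range_succ]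
  have : 0 ≤ r ^ k := by positivity
  linarith

lemma sg_nonneg {r : ℝ} (hr : 0 ≤ r) (k : ℕ) : 0 ≤ sg r k :=
  Finset.sum_nonneg fun _ _ => by positivity

lemma sg_pos {r : ℝ} (hr : 0 ≤ r) (k : ℕ) : 0 < sg r (k + 1) := by
  rw [sg_succ]
  have := mul_nonneg hr (sg_nonneg hr k)
  linarith

lemma greedy {m : ℕ} (hm : 2 ≤ m) {b β r : ℝ} (hb : 0 < b) (h1 : b / 2 < β) (h2 : β < b)
    (hr0 : 0 ≤ r) (hr1 : r ≤ 1) (hC : b ≤ (b - r * β) * sg r m) :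
    ∃ T : ℕ → ℝ, Monotone T ∧ T 0 = 0 ∧ T m = b ∧ (∀ k, 0 ≤ T k) ∧
      (∀ k, T (k + 1) - r * T k ≤ b - r * β) ∧ (∀ k, T (k + (m - 1)) - T k ≤ β) := by
  have hX : 0 < b - r * β := by nlinarith
  have hβ : 0 < β := by linarith
  set X := b - r * β with hXd
  obtain ⟨T, hT⟩ : ∃ T : ℕ → ℝ, ∀ k, T k = if k < m then min β (X * sg r k) else b := ⟨_, fun _ => rfl⟩
  have hTlt : ∀ k, k < m → T k = min β (X * sg r k) := fun k hk => by rw [hT, if_pos hk]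
  have hTge : ∀ k, m ≤ k → T k = b := fun k hk => by rw [hT, if_neg (by omega)]
  have hmono : Monotone T := by
    apply monotone_nat_of_le_succ
    intro k
    rcases lt_trichotomy (k + 1) m with h | h | h
    · rw [hTlt k (by omega), hTlt _ h]
      gcongr
      exact sg_le_succ hr0 k
    · rw [hTlt k (by omega), hTge _ h.ge]
      exact (min_le_left _ _).trans h2.le
    · rw [hTge k (by omega), hTge _ (by omega)]
  have hT0 : T 0 = 0 := by rw [hTlt 0 (by omega), sg_zero, mul_zero, min_eq_right hβ.le]
  refine ⟨T, hmono, hT0, hTge m le_rfl, fun k => hT0 ▸ hmono (Nat.zero_le k), ?_, ?_⟩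
  · intro k
    rcases lt_trichotomy (k + 1) m with h | h | h
    · rw [hTlt k (by omega), hTlt _ h]
      rcases le_total β (X * sg r k) with h3 | h3
      · rw [min_eq_left h3]
        have := min_le_left β (X * sg r (k + 1))
        linarith
      · rw [min_eq_right h3]
        have := min_le_right β (X * sg r (k + 1))
        rw [sg_succ] at this ⊢
        nlinarith
    · rw [hTlt k (by omega), hTge _ h.ge]
      rcases le_total β (X * sg r k) with h3 | h3
      · rw [min_eq_left h3]
      · rw [min_eq_right h3]
        rw [← h, sg_succ] at hC
        nlinarith
    · rw [hTge k (by omega), hTge _ (by omega)]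
      nlinarith
  · intro k
    rcases Nat.eq_zero_or_pos k with rfl | hk
    · rw [hT0, zero_add, hTlt _ (by omega)]
      have := min_le_left β (X * sg r (m - 1))
      linarith
    · rw [hTge _ (by omega)]
      have h3 : T 1 ≤ T k := hmono hk
      rw [hTlt 1 (by omega), show (1 : ℕ) = 0 + 1 from rfl, sg_succ, sg_zero] at h3
      simp only [mul_zero, add_zero, mul_one] at h3
      have : b - β ≤ min β X := le_min (by linarith) (by nlinarith)
      linarith

lemma fIter_mul_sg {s : ℝ} (hs : 0 < s) (hs1 : s ≤ 1) (k : ℕ) :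
    0 < fIter s k ∧ fIter s k * sg ((1 - s) / s) (k + 1) = s := by
  have hr : 0 ≤ (1 - s) / s := div_nonneg (by linarith) hs.le
  induction k with
  | zero => simp [fIter, sg, hs]
  | succ k ih =>
    obtain ⟨h1, h2⟩ := ih
    have h3 : 0 < 1 - s + fIter s k := by linarith
    refine ⟨by unfold fIter; positivity, ?_⟩
    rw [sg_succ _ (k + 1)]
    unfold fIter
    rw [div_mul_eq_mul_div, div_eq_iff h3.ne']
    have h4 : fIter s k * ((1 - s) / s * sg ((1 - s) / s) (k + 1)) = 1 - s := by
      rw [mul_left_comm, h2]; field_simp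
    calc _ = s * (fIter s k + fIter s k * ((1 - s) / s * sg ((1 - s) / s) (k + 1))) := by ring
      _ = _ := by rw [h4]; ring

/-- partition sum for `tExpM` -/
noncomputable def tSum (B : ℝ) (m : ℕ) (s : ℝ) (n : ℕ) : ENNReal :=
  ∑' a : Fin n → ℕ+, ENNReal.ofReal (B ^ (-(n : ℝ) * fIter s (m - 1)) *
          ((contQ n fun i => (a i : ℕ)) : ℝ) ^ (-(2 * s)))

/-- The defining set of `tExpM`. -/
def tSet (B : ℝ) (m : ℕ) : Set ℝ := {s : ℝ | 0 ≤ s ∧ s ≤ 1 ∧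
    Filter.atTop.limsup (fun n : ℕ =>
      (((n : ℝ)⁻¹ : ℝ) : EReal) * ENNReal.log (tSum B m s n)) ≤ 0}

lemma tExpM_eq (B : ℝ) (m : ℕ) : tExpM B m = sInf (tSet B m) := rfl

lemma tSum_eq {B : ℝ} (hB : 1 < B) (m : ℕ) (s : ℝ) (n : ℕ) : tSum B m s n =
    ENNReal.ofReal (Real.exp (-(n * (fIter s (m - 1) * Real.log B)))) * zSum s n := by
  unfold tSum zSum
  rw [← ENNReal.tsum_mul_left]
  refine tsum_congr fun a => ?_
  rw [← ENNReal.ofReal_mul (by positivity), Real.rpow_def_of_pos (by linarith : 0 < B)]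
  congr 3
  ring

lemma gSum_eq {B₁ B₂ : ℝ} (hB1 : 1 < B₁) (hB2 : 1 < B₂) (s : ℝ) (n : ℕ) : gSum B₁ B₂ s n =
    ENNReal.ofReal (Real.exp (-(n * (s * Real.log B₁ - (1 - s) * Real.log B₂)))) * zSum s n := by
  unfold gSum zSum
  rw [← ENNReal.tsum_mul_left]
  refine tsum_congr fun a => ?_
  have h0 : (0 : ℝ) < B₁ := by linarith
  have h1 : (0 : ℝ) < B₁ ^ n := by positivity
  rw [← ENNReal.ofReal_mul (by positivity), Real.mul_rpow h1.le (by positivity)]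
  congr 1
  rw [← mul_assoc]
  congr 1
  · rw [Real.rpow_def_of_pos (by linarith : 0 < B₂), Real.rpow_def_of_pos h1, Real.log_pow,
      ← Real.exp_add]
    congr 1; ring
  · rw [← Real.rpow_natCast, ← Real.rpow_mul (by positivity)]
    congr 1; push_cast; ring

lemma limsup_mono {u v : ℕ → ENNReal} (h : ∀ n, u n ≤ v n)
    (hv : Filter.atTop.limsup (fun n : ℕ => (((n : ℝ)⁻¹ : ℝ) : EReal) * ENNReal.log (v n)) ≤ 0) :
    Filter.atTop.limsup (fun n : ℕ => (((n : ℝ)⁻¹ : ℝ) : EReal) * ENNReal.log (u n)) ≤ 0 := by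
  refine le_trans (limsup_le_limsup (Eventually.of_forall fun n => ?_)) hv
  exact mul_le_mul_of_nonneg_left (ENNReal.log_le_log (h n))
    (by exact_mod_cast inv_nonneg.2 (Nat.cast_nonneg n))

lemma gSet_up {B₁ B₂ s s' : ℝ} (h1 : 1 < B₁) (h2 : 1 < B₂) (hs : s' ≤ s) (h : s' ∈ gSet B₁ B₂) :
    s ∈ gSet B₁ B₂ := by
  refine ⟨h.1.trans hs, limsup_mono (fun n => ?_) h.2⟩
  refine (gSum_mono h1 h2 hs n).trans ?_
  refine mul_le_of_le_one_left zero_le ?_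
  rw [← ENNReal.ofReal_one]
  apply ENNReal.ofReal_le_ofReal
  apply Real.rpow_le_one_of_one_le_of_nonpos (by nlinarith)
  have : 0 ≤ (s - s') * n := mul_nonneg (by linarith) (Nat.cast_nonneg _)
  linarith

lemma gSet_of_tSet {m : ℕ} {B₁ B₂ s : ℝ} (h1 : 1 < B₁) (h2 : 1 < B₂) (hs : s ∈ tSet B₁ m)
    (h : fIter s (m - 1) * Real.log B₁ ≤ s * Real.log B₁ - (1 - s) * Real.log B₂) :
    s ∈ gSet B₁ B₂ := by
  refine ⟨hs.1, limsup_mono (fun n => ?_) hs.2.2⟩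
  rw [gSum_eq h1 h2, tSum_eq h1]
  gcongr

lemma tSet_of_gSet {m : ℕ} {B₁ B₂ s : ℝ} (h1 : 1 < B₁) (h2 : 1 < B₂) (hs : s ∈ gSet B₁ B₂)
    (hs1 : s ≤ 1)
    (h : s * Real.log B₁ - (1 - s) * Real.log B₂ ≤ fIter s (m - 1) * Real.log B₁) :
    s ∈ tSet B₁ m := by
  refine ⟨hs.1, hs1, limsup_mono (fun n => ?_) hs.2⟩
  rw [gSum_eq h1 h2, tSum_eq h1]
  gcongr

lemma zSum_eq_top {s : ℝ} (hs0 : 0 ≤ s) (hs : s ≤ 1 / 2) (p : ℕ) : zSum s (p + 1) = ⊤ := by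
  set w : ℕ → (Fin (p + 1) → ℕ+) := fun k i => if (i : ℕ) = p then k.succPNat else 1 with hw
  have hinj : Function.Injective w := by
    intro k l hkl
    have := congrFun hkl (Fin.last p)
    simpa [hw] using this
  have hle : ∑' k : ℕ, ENNReal.ofReal (((contQ (p + 1) fun i => (w k i : ℕ)) : ℝ) ^ (-(2 * s))) ≤
      zSum s (p + 1) :=
    ENNReal.tsum_comp_le_tsum_of_injective hinj
      (fun a : Fin (p + 1) → ℕ+ =>
        ENNReal.ofReal (((contQ (p + 1) fun i => (a i : ℕ)) : ℝ) ^ (-(2 * s))))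
  rw [eq_top_iff]
  refine le_trans ?_ hle
  set D : ℕ := Qc (fun _ => 1) p with hD
  have hD1 : 1 ≤ D := Qc_pos (fun _ => le_rfl) p
  have hb : ∀ k : ℕ, contQ (p + 1) (fun i => (w k i : ℕ)) ≤ (k + 2) * D := by
    intro k
    rw [contQ_eq_Qc (fun i => if i = p then k + 1 else 1) (p + 1)]
    · refine (Qc_succ_le (fun i => by split_ifs <;> omega) p).trans ?_
      rw [if_pos rfl, Qc_congr (b := fun _ => 1) p (fun i hi => by rw [if_neg (by omega)])]
    · intro i
      simp only [hw]
      split_ifs <;> simp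
  have hterm : ∀ k : ℕ, ENNReal.ofReal ((D : ℝ)⁻¹ * ((k + 2 : ℕ) : ℝ)⁻¹) ≤
      ENNReal.ofReal (((contQ (p + 1) fun i => (w k i : ℕ)) : ℝ) ^ (-(2 * s))) := by
    intro k
    apply ENNReal.ofReal_le_ofReal
    have hq : (1 : ℝ) ≤ contQ (p + 1) fun i => (w k i : ℕ) := by exact_mod_cast contQ_pos' _ (w k)
    have hq2 : ((contQ (p + 1) fun i => (w k i : ℕ) : ℕ) : ℝ) ≤ ((k + 2 : ℕ) : ℝ) * D := by
      exact_mod_cast hb k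
    set q : ℝ := ((contQ (p + 1) fun i => (w k i : ℕ) : ℕ) : ℝ)
    calc _ = (((k + 2 : ℕ) : ℝ) * D)⁻¹ := by rw [mul_inv, mul_comm]
      _ ≤ q⁻¹ := by gcongr
      _ = q ^ (-1 : ℝ) := by rw [Real.rpow_neg_one]
      _ ≤ _ := Real.rpow_le_rpow_of_exponent_le hq (by linarith)
  refine le_trans ?_ (ENNReal.tsum_le_tsum hterm)
  rw [top_le_iff]
  by_contra hne
  have hsum : Summable (fun k : ℕ => (D : ℝ)⁻¹ * ((k + 2 : ℕ) : ℝ)⁻¹) := by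
    have := ENNReal.summable_toReal hne
    refine this.congr fun k => ?_
    rw [ENNReal.toReal_ofReal (by positivity)]
  rw [summable_mul_left_iff (by positivity)] at hsum
  exact Real.not_summable_natCast_inv ((summable_nat_add_iff (f := fun k : ℕ => (k : ℝ)⁻¹) 2).1 hsum)

lemma gSet_half {B₁ B₂ s : ℝ} (h1 : 1 < B₁) (h2 : 1 < B₂) (h : s ∈ gSet B₁ B₂) : 1 / 2 ≤ s := by
  by_contra hc
  obtain ⟨n, hn, hn1⟩ := ((eventually_of_limsup_le _ h.2 one_pos).and (eventually_ge_atTop 1)).exists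
  obtain ⟨p, rfl⟩ := Nat.exists_eq_add_of_le' hn1
  rw [gSum_eq h1 h2, zSum_eq_top h.1 (by linarith) p, ENNReal.mul_top] at hn
  · simp at hn
  · simpa using Real.exp_pos _

lemma zSum_growth {s s' : ℝ} (h : s ≤ s') (n : ℕ) :
    ENNReal.ofReal (Real.exp ((s' - s) * ((n - 1) * Real.log 2))) * zSum s' n ≤ zSum s n := by
  unfold zSum
  rw [← ENNReal.tsum_mul_left]
  refine ENNReal.tsum_le_tsum fun a => ?_
  rw [← ENNReal.ofReal_mul (by positivity)]
  apply ENNReal.ofReal_le_ofReal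
  have hq : (1 : ℝ) ≤ contQ n fun i => (a i : ℕ) := by exact_mod_cast contQ_pos' n a
  have hg : (2 : ℝ) ^ n ≤ 2 * ((contQ n fun i => (a i : ℕ) : ℕ) : ℝ) ^ 2 := by
    rw [contQ_eq_Qc (fun i => if h : i < n then (a ⟨i, h⟩ : ℕ) else 1) n (fun i => (a i : ℕ))
      (fun i => by simp)]
    exact_mod_cast Qc_growth (fun i => by
      split_ifs with h
      · exact (a ⟨i, h⟩).pos
      · exact le_rfl) n
  set q : ℝ := ((contQ n fun i => (a i : ℕ) : ℕ) : ℝ)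
  have hq0 : 0 < q := by linarith
  have hl : (n - 1) * Real.log 2 ≤ 2 * Real.log q := by
    have := Real.log_le_log (by positivity) hg
    rw [Real.log_pow, Real.log_mul (by norm_num) (by positivity), Real.log_pow] at this
    push_cast at this
    linarith
  rw [Real.rpow_def_of_pos hq0, Real.rpow_def_of_pos hq0, ← Real.exp_add]
  apply Real.exp_le_exp.2
  nlinarith [mul_le_mul_of_nonneg_left hl (sub_nonneg.2 h)]

lemma gSet_bdd (B₁ B₂ : ℝ) : BddBelow (gSet B₁ B₂) := ⟨0, fun _ h => h.1⟩

lemma exists_c {B₁ B₂ s g : ℝ} (h1 : 1 < B₁) (h2 : 1 < B₂) (hg : g = gExp B₁ B₂) (hs0 : 0 < s)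
    (hs : s < g) :
    ∃ c : ℝ, g * Real.log B₁ - (1 - g) * Real.log B₂ < c ∧
      ∃ᶠ n : ℕ in atTop, ENNReal.ofReal (Real.exp (c * n)) ≤ zSum s n := by
  have b1 : 0 < Real.log B₁ := Real.log_pos h1
  have b2 : 0 < Real.log B₂ := Real.log_pos h2
  have l2 : 0 < Real.log 2 := Real.log_pos (by norm_num)
  set b₁ := Real.log B₁
  set b₂ := Real.log B₂
  set l := Real.log 2
  have hD : 0 < g - s := by linarith
  set η := (g - s) * l / 2 / (b₁ + b₂ + l) with hη
  have hη0 : 0 < η := by positivity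
  have hη1 : η * (b₁ + b₂ + l) = (g - s) * l / 2 := by rw [hη]; field_simp
  have hη2 : η ≤ (g - s) / 2 := by
    rw [hη, div_le_iff₀ (by positivity)]
    nlinarith [mul_pos hD b1, mul_pos hD b2]
  set s' := g - η with hs'
  have hss : s < s' := by linarith
  have hnot : s' ∉ gSet B₁ B₂ := by
    intro hmem
    have : gExp B₁ B₂ ≤ s' := csInf_le (gSet_bdd _ _) hmem
    linarith
  have hnl : ¬ Filter.atTop.limsup (fun n : ℕ =>
      (((n : ℝ)⁻¹ : ℝ) : EReal) * ENNReal.log (gSum B₁ B₂ s' n)) ≤ 0 := fun hl =>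
    hnot ⟨by linarith, hl⟩
  obtain ⟨δ, hδ, hfreq⟩ := frequently_of_not_limsup_le _ hnl
  refine ⟨s' * b₁ - (1 - s') * b₂ + (s' - s) * l / 2, ?_, ?_⟩
  · have e : s' * b₁ - (1 - s') * b₂ = g * b₁ - (1 - g) * b₂ - η * (b₁ + b₂) := by rw [hs']; ring
    have e2 : (s' - s) * l / 2 = (g - s) * l / 2 - η * l / 2 := by rw [hs']; ring
    have e3 : 0 < η * l := by positivity
    rw [e, e2, ← hη1]
    linarith
  · refine (hfreq.and_eventually (eventually_ge_atTop 2)).mono ?_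
    rintro n ⟨hn, hn2⟩
    rw [gSum_eq h1 h2] at hn
    have hz : ENNReal.ofReal (Real.exp ((s' * b₁ - (1 - s') * b₂) * n)) ≤ zSum s' n := by
      calc _ ≤ ENNReal.ofReal (Real.exp ((s' * b₁ - (1 - s') * b₂) * n) * Real.exp (δ * n)) := by
            apply ENNReal.ofReal_le_ofReal
            exact le_mul_of_one_le_right (Real.exp_pos _).le (Real.one_le_exp (by positivity))
        _ = ENNReal.ofReal (Real.exp ((s' * b₁ - (1 - s') * b₂) * n)) *
            ENNReal.ofReal (Real.exp (δ * n)) := ENNReal.ofReal_mul (by positivity)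
        _ ≤ ENNReal.ofReal (Real.exp ((s' * b₁ - (1 - s') * b₂) * n)) *
            (ENNReal.ofReal (Real.exp (-(n * (s' * b₁ - (1 - s') * b₂)))) * zSum s' n) := by gcongr
        _ = zSum s' n := by
            rw [← mul_assoc, ← ENNReal.ofReal_mul (by positivity), ← Real.exp_add,
              show (s' * b₁ - (1 - s') * b₂) * n + -(n * (s' * b₁ - (1 - s') * b₂)) = 0 by ring]
            simp
    refine le_trans ?_ (zSum_growth hss.le n)
    calc _ ≤ ENNReal.ofReal (Real.exp ((s' - s) * ((n - 1) * l)) *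
          Real.exp ((s' * b₁ - (1 - s') * b₂) * n)) := by
          apply ENNReal.ofReal_le_ofReal
          rw [← Real.exp_add]
          apply Real.exp_le_exp.2
          have hn3 : (2 : ℝ) ≤ n := by exact_mod_cast hn2
          have : 0 ≤ (s' - s) * l * (n / 2 - 1) :=
            mul_nonneg (mul_nonneg (by linarith) l2.le) (by linarith)
          nlinarith
      _ = _ := ENNReal.ofReal_mul (by positivity)
      _ ≤ _ := by gcongr


/-- The comparison function between the two pressures. -/
noncomputable def hF (m : ℕ) (b₁ b₂ s : ℝ) : ℝ :=
  (s * b₁ - (1 - s) * b₂) * sg ((1 - s) / s) m - s * b₁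

lemma hF_cont (m : ℕ) (b₁ b₂ : ℝ) {s : ℝ} (hs : 0 < s) : ContinuousAt (hF m b₁ b₂) s := by
  unfold hF sg
  have : ContinuousAt (fun s : ℝ => (1 - s) / s) s := by
    apply ContinuousAt.div (by fun_prop) (by fun_prop) hs.ne'
  have h2 : ContinuousAt (fun s : ℝ => ∑ i ∈ Finset.range m, ((1 - s) / s) ^ i) s :=
    tendsto_finsetSum _ fun i _ => this.pow i
  fun_prop

lemma hF_iff {m : ℕ} (hm : 1 ≤ m) (b₁ b₂ : ℝ) {s : ℝ} (hs : 0 < s) (hs1 : s ≤ 1) :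
    fIter s (m - 1) * b₁ ≤ s * b₁ - (1 - s) * b₂ ↔ 0 ≤ hF m b₁ b₂ s := by
  obtain ⟨h1, h2⟩ := fIter_mul_sg hs hs1 (m - 1)
  rw [Nat.sub_add_cancel hm] at h2
  have hp : 0 < sg ((1 - s) / s) m := by
    obtain ⟨k, rfl⟩ := Nat.exists_eq_add_of_le' hm
    exact sg_pos (div_nonneg (by linarith) hs.le) k
  unfold hF
  set σ := sg ((1 - s) / s) m
  have e : (s * b₁ - (1 - s) * b₂) * σ - s * b₁ =
      (s * b₁ - (1 - s) * b₂ - fIter s (m - 1) * b₁) * σ := by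
    nth_rewrite 3 [← h2]; ring
  rw [e, mul_nonneg_iff_of_pos_right hp, sub_nonneg]

lemma hF_pos {m : ℕ} (hm : 2 ≤ m) {b₁ b₂ t : ℝ} (hb1 : 0 < b₁) (ht : 1 / 2 < t) (ht1 : t < 1)
    (h : b₂ < b₁ * ((t ^ m - t * (1 - t) ^ (m - 1)) / (t ^ m - (1 - t) ^ m))) :
    b₂ < b₁ ∧ 0 < hF m b₁ b₂ t := by
  obtain ⟨k, rfl⟩ := Nat.exists_eq_add_of_le' (by omega : 1 ≤ m)
  simp only [Nat.add_sub_cancel] at h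
  have ht0 : 0 < t := by linarith
  set r := (1 - t) / t with hr
  have hr0 : 0 < r := div_pos (by linarith) ht0
  have hr1 : r < 1 := by rw [hr, div_lt_one ht0]; linarith
  have ert : 1 - t = r * t := by rw [hr]; field_simp
  have hk : 1 - r ^ (k + 1) > 0 := by
    have := pow_lt_one₀ hr0.le hr1 (by omega : k + 1 ≠ 0)
    linarith
  have e : (t ^ (k + 1) - t * (1 - t) ^ k) / (t ^ (k + 1) - (1 - t) ^ (k + 1)) =
      (1 - r ^ k) / (1 - r ^ (k + 1)) := by
    rw [ert, mul_pow, mul_pow]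
    have : t ^ (k + 1) - r ^ (k + 1) * t ^ (k + 1) = t ^ (k + 1) * (1 - r ^ (k + 1)) := by ring
    rw [this, show t ^ (k + 1) - t * (r ^ k * t ^ k) = t ^ (k + 1) * (1 - r ^ k) by ring,
      mul_div_mul_left _ _ (by positivity)]
  have es : ∀ j, (1 - r) * sg r j = 1 - r ^ j := by
    intro j
    unfold sg
    exact mul_neg_geom_sum r j
  have hrr : 0 < 1 - r := by linarith
  rw [e, ← es, ← es, mul_div_mul_left _ _ hrr.ne', ← mul_div_assoc,
    lt_div_iff₀ (sg_pos hr0.le k)] at h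
  have hle := sg_le_succ hr0.le k
  have hpos := sg_pos hr0.le k
  constructor
  · by_contra hc
    push Not at hc
    nlinarith
  · unfold hF
    rw [← hr]
    have : (t * b₁ - (1 - t) * b₂) * sg r (k + 1) - t * b₁ = t * r * (b₁ * sg r k - b₂ * sg r (k + 1)) := by
      rw [ert]
      have := sg_succ r k
      have e2 : sg r k * r = sg r (k + 1) - 1 := by linarith
      linear_combination -(t * b₁) * e2
    rw [this]
    have : 0 < b₁ * sg r k - b₂ * sg r (k + 1) := by linarith
    positivity

theorem main_aux (m : ℕ) (hm : 2 ≤ m) (B₁ B₂ : ℝ)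
    (hB₁ : 1 < B₁) (hB₂ : 1 < B₂)
    (ht : 1 / 2 < tExpM B₁ m ∧ tExpM B₁ m < 1)
    (hcase₁ : B₁ ^ ((1 : ℝ) / 2) < B₂)
    (hcase₂ : B₂ < B₁ ^ ((tExpM B₁ m ^ m - tExpM B₁ m * (1 - tExpM B₁ m) ^ (m - 1)) /
      (tExpM B₁ m ^ m - (1 - tExpM B₁ m) ^ m))) :
    dimH (Fset m B₁ B₂) = ENNReal.ofReal (gExp B₁ B₂) := by
  obtain ⟨ht0, ht1⟩ := ht
  set t := tExpM B₁ m with htd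
  have hb1 : 0 < Real.log B₁ := Real.log_pos hB₁
  have hb2 : 0 < Real.log B₂ := Real.log_pos hB₂
  have hB1p : 0 < B₁ := by linarith
  have hB2p : 0 < B₂ := by linarith
  have hc1 : Real.log B₁ / 2 < Real.log B₂ := by
    have := Real.log_lt_log (by positivity) hcase₁
    rw [Real.log_rpow hB1p] at this
    linarith
  have hc2 := Real.log_lt_log hB2p hcase₂
  rw [Real.log_rpow hB1p, mul_comm] at hc2
  obtain ⟨hlt, hFt⟩ := hF_pos hm hb1 ht0 ht1 hc2
  have htne : (tSet B₁ m).Nonempty := by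
    by_contra hc
    rw [Set.not_nonempty_iff_eq_empty] at hc
    rw [tExpM_eq, hc, Real.sInf_empty] at htd
    linarith
  -- `g ≤ t`
  have hkey : ∀ u, t < u → ∃ s, s ∈ gSet B₁ B₂ ∧ s < u := by
    intro u hu
    have hev : ∀ᶠ s in nhds t, 0 < hF m (Real.log B₁) (Real.log B₂) s :=
      (hF_cont m _ _ (by linarith)).eventually (lt_mem_nhds hFt)
    obtain ⟨ε, hε, hball⟩ := Metric.eventually_nhds_iff.1 hev
    obtain ⟨s, hs, hsu⟩ := exists_lt_of_csInf_lt htne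
      (show sInf (tSet B₁ m) < min u (t + ε) by rw [← tExpM_eq, ← htd]; exact lt_min hu (by linarith))
    have hts : t ≤ s := by
      rw [htd, tExpM_eq]
      exact csInf_le ⟨0, fun _ h => h.1⟩ hs
    have hpos := hball (show dist s t < ε by
      rw [Real.dist_eq, abs_lt]
      have := lt_of_lt_of_le hsu (min_le_right _ _)
      constructor <;> linarith)
    exact ⟨s, gSet_of_tSet hB₁ hB₂ hs ((hF_iff (by omega) _ _ (by linarith) hs.2.1).2 hpos.le),
      lt_of_lt_of_le hsu (min_le_left _ _)⟩
  have hne : (gSet B₁ B₂).Nonempty := by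
    obtain ⟨s, hs, _⟩ := hkey (t + 1) (by linarith)
    exact ⟨s, hs⟩
  set g := gExp B₁ B₂ with hgd
  have hgt : g ≤ t := by
    refine le_of_forall_gt_imp_ge_of_dense fun u hu => ?_
    obtain ⟨s, hs, hsu⟩ := hkey u hu
    exact (csInf_le (gSet_bdd _ _) hs).trans hsu.le
  have hg2 : 1 / 2 ≤ g := le_csInf hne fun s hs => gSet_half hB₁ hB₂ hs
  have hg0 : 0 < g := by linarith
  have hg1 : g < 1 := by linarith
  -- the condition at `g`
  have hFg : 0 ≤ hF m (Real.log B₁) (Real.log B₂) g := by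
    rcases eq_or_lt_of_le hgt with h | h
    · rw [h]; exact hFt.le
    · by_contra hneg
      push Not at hneg
      have hev : ∀ᶠ s in nhds g, hF m (Real.log B₁) (Real.log B₂) s < 0 :=
        (hF_cont m _ _ hg0).eventually (gt_mem_nhds hneg)
      obtain ⟨ε, hε, hball⟩ := Metric.eventually_nhds_iff.1 hev
      obtain ⟨s, hs1, hs2⟩ := exists_between (show g < min t (g + ε) from lt_min h (by linarith))
      have hst := lt_of_lt_of_le hs2 (min_le_left _ _)
      have hsε := lt_of_lt_of_le hs2 (min_le_right _ _)
      have hsneg := hball (show dist s g < ε by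
        rw [Real.dist_eq, abs_lt]
        constructor <;> linarith)
      obtain ⟨s', hs', hs's⟩ := exists_lt_of_csInf_lt hne (show sInf (gSet B₁ B₂) < s from hs1)
      have hsg := gSet_up hB₁ hB₂ hs's.le hs'
      have hnle : ¬ _ := fun h3 => absurd
        ((hF_iff (by omega : 1 ≤ m) (Real.log B₁) (Real.log B₂) (by linarith : 0 < s)
          (by linarith)).1 h3) (not_le.2 hsneg)
      have hmem : s ∈ tSet B₁ m := tSet_of_gSet hB₁ hB₂ hsg (by linarith) (not_le.1 hnle).le
      have : t ≤ s := by
        rw [htd, tExpM_eq]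
        exact csInf_le ⟨0, fun _ h => h.1⟩ hmem
      linarith
  refine le_antisymm (upper_bound hm hB₁ hB₂ hne hg0.le hg1) ?_
  -- lower bound
  have hlow : ∀ s, 0 < s → s < g → ENNReal.ofReal s ≤ dimH (Fset m B₁ B₂) := by
    intro s hs0 hsg
    obtain ⟨c, hc, hfreq⟩ := exists_c hB₁ hB₂ hgd hs0 hsg
    set b₁ := Real.log B₁
    set b₂ := Real.log B₂
    obtain ⟨β, hβ1, hβ2⟩ := exists_between (show
      max (b₁ / 2) (b₂ - (c - (g * b₁ - (1 - g) * b₂))) < b₂ from max_lt hc1 (by linarith))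
    have hβ3 := lt_of_le_of_lt (le_max_left _ _) hβ1
    have hβ4 := lt_of_le_of_lt (le_max_right _ _) hβ1
    set r := (1 - g) / g with hr
    have hr0 : 0 ≤ r := div_nonneg (by linarith) hg0.le
    have hr1 : r ≤ 1 := by rw [hr, div_le_one hg0]; linarith
    have erg : 1 - g = g * r := by rw [hr]; field_simp
    have hCg : b₁ ≤ (b₁ - r * β) * sg r m := by
      unfold hF at hFg
      rw [← hr, erg] at hFg
      have h5 : 0 ≤ g * ((b₁ - r * b₂) * sg r m - b₁) := by
        calc _ ≤ _ := hFg
          _ = _ := by ring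
      have h6 := nonneg_of_mul_nonneg_right h5 hg0
      have h7 : (b₁ - r * b₂) * sg r m ≤ (b₁ - r * β) * sg r m := by
        have := sg_nonneg hr0 m
        gcongr
      linarith
    obtain ⟨T, Tm, T0, TM, Tn, hV, hw⟩ := greedy hm hb1 hβ3 (hβ2.trans hlt) hr0 hr1 hCg
    have hX : 0 < b₁ - r * β := by nlinarith
    refine lower_aux hm hB₁ hB₂ (V0 := g * (b₁ - r * β)) (c := c) (β := β) hs0 (by linarith) T Tm T0
      TM (fun k => ?_) (by positivity) (by linarith) hβ2 hw ?_ hfreq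
    · have h8 := mul_le_mul_of_nonneg_left (hV k) hg0.le
      have h9 : s * T (k + 1) ≤ g * T (k + 1) := by gcongr; exact Tn _
      have h10 : (1 - g) * T k ≤ (1 - s) * T k := by gcongr; exact Tn _
      rw [erg] at h10
      nlinarith
    · have e1 : g * (b₁ - r * β) = g * b₁ - (1 - g) * b₂ + (1 - g) * (b₂ - β) := by rw [erg]; ring
      rw [e1]
      nlinarith
  refine le_of_forall_lt fun x hx => ?_
  have hx' : x ≠ ⊤ := ne_top_of_lt hx
  have hx2 : x.toReal < g := by
    rw [← ENNReal.ofReal_toReal hx'] at hx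
    exact (ENNReal.ofReal_lt_ofReal_iff hg0).1 hx
  obtain ⟨s, h1, h2⟩ := exists_between hx2
  have hs0 : 0 < s := lt_of_le_of_lt ENNReal.toReal_nonneg h1
  refine lt_of_lt_of_le ?_ (hlow s hs0 h2)
  rw [← ENNReal.ofReal_toReal hx']
  exact (ENNReal.ofReal_lt_ofReal_iff hs0).2 h1

theorem new_application_case_two (m : ℕ) (hm : 2 ≤ m) (B₁ B₂ : ℝ)
    (hB₁ : 1 < B₁) (hB₂ : 1 < B₂)
    (ht : 1 / 2 < tExpM B₁ m ∧ tExpM B₁ m < 1)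
    (hcase₁ : B₁ ^ ((1 : ℝ) / 2) < B₂)
    (hcase₂ : B₂ < B₁ ^ ((tExpM B₁ m ^ m - tExpM B₁ m * (1 - tExpM B₁ m) ^ (m - 1)) /
      (tExpM B₁ m ^ m - (1 - tExpM B₁ m) ^ m))) :
    dimH {x : ℝ | x ∈ Set.Ioo (0 : ℝ) 1 ∧ Irrational x ∧
      {n : ℕ | B₁ ^ n ≤ ∏ i ∈ Finset.range m, (pq x (n + i) : ℝ)}.Infinite ∧
      (∀ᶠ n : ℕ in Filter.atTop,
        ∏ i ∈ Finset.range (m - 1), (pq x (n + 1 + i) : ℝ) < B₂ ^ n)} =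
    ENNReal.ofReal (gExp B₁ B₂) := by
  exact main_aux m hm B₁ B₂ hB₁ hB₂ ht hcase₁ hcase₂
end

section
/- For any real numbers b, c > 1, the two sets { x ∈ (0,1) irrational : a_n(x) ≥ c^{b^n} for infinitely many n ∈ ℕ } and { x ∈ (0,1) irrational : a_n(x) ≥ c^{b^n} for all n ≥ 1 } have the same Hausdorff dimension, equal to 1/(b+1). -/
open Filter MeasureTheory Set

/-- A continued fraction orbit `X` with digits `a`. -/
def CFOrb (X : ℕ → ℝ) (a : ℕ → ℕ) : Prop :=
  ∀ n, 0 < X n ∧ X n < 1 ∧ X n * (a n + X (n + 1)) = 1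

lemma gaussMap_eq_fract (x : ℝ) : gaussMap x = Int.fract (1 / x) := rfl

lemma gaussMap_orbit {x : ℝ} (hx : x ∈ Set.Ioo (0 : ℝ) 1) (hi : Irrational x) (n : ℕ) :
    gaussMap^[n] x ∈ Set.Ioo (0 : ℝ) 1 ∧ Irrational (gaussMap^[n] x) := by
  induction n with
  | zero => exact ⟨hx, hi⟩
  | succ n ih =>
    rw [Function.iterate_succ_apply']
    obtain ⟨_, h2⟩ := ih
    have hirr : Irrational (gaussMap (gaussMap^[n] x)) := by
      unfold gaussMap
      rw [one_div]
      exact (irrational_inv_iff.mpr h2).sub_intCast _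
    refine ⟨⟨?_, ?_⟩, hirr⟩
    · refine lt_of_le_of_ne (Int.fract_nonneg _) ?_
      intro h
      have := hirr.ne_zero
      exact this h.symm
    · exact Int.fract_lt_one _

lemma gauss_cf {x : ℝ} (hx : x ∈ Set.Ioo (0 : ℝ) 1) (hi : Irrational x) :
    CFOrb (fun n => gaussMap^[n] x) (fun n => pq x (n + 1)) := by
  intro n
  obtain ⟨⟨h0, h1⟩, _⟩ := gaussMap_orbit hx hi n
  refine ⟨h0, h1, ?_⟩
  simp only [Function.iterate_succ_apply', pq, Nat.add_sub_cancel]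
  set y := gaussMap^[n] x
  have hy : 0 ≤ 1 / y := by positivity
  have : ((⌊1 / y⌋₊ : ℕ) : ℝ) = ((⌊1 / y⌋ : ℤ) : ℝ) := by
    rw [natCast_floor_eq_intCast_floor hy]
  rw [this]
  unfold gaussMap
  field_simp
  ring

lemma cf_gauss {X : ℕ → ℝ} {a : ℕ → ℕ} (h : CFOrb X a) (n : ℕ) :
    gaussMap^[n] (X 0) = X n ∧ pq (X 0) (n + 1) = a n := by
  have key : ∀ n, 1 / X n = a n + X (n + 1) := by
    intro n
    obtain ⟨h0, _, h2⟩ := h n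
    rw [div_eq_iff h0.ne']
    linarith
  have orb : ∀ n, gaussMap^[n] (X 0) = X n := by
    intro n
    induction n with
    | zero => rfl
    | succ n ih =>
      rw [Function.iterate_succ_apply', ih, gaussMap_eq_fract, key, Int.fract_natCast_add]
      exact Int.fract_eq_self.mpr ⟨(h (n + 1)).1.le, (h (n + 1)).2.1⟩
  refine ⟨orb n, ?_⟩
  simp only [pq, Nat.add_sub_cancel]
  rw [orb, key, Nat.floor_eq_iff (by have := (h (n+1)).1; positivity)]
  have := h (n + 1)
  constructor <;> linarith [this.1, this.2.1]

lemma cf_irr_aux {X : ℕ → ℝ} {a : ℕ → ℕ} (h : CFOrb X a) :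
    ∀ (q : ℕ), 0 < q → ∀ (k : ℕ) (p : ℤ), X k * q ≠ p := by
  intro q
  induction q using Nat.strong_induction_on with
  | _ q ih =>
    intro hq k p hp
    obtain ⟨h0, h1, h2⟩ := h k
    have hq' : (0 : ℝ) < q := by exact_mod_cast hq
    have hp0 : (0 : ℝ) < p := by rw [← hp]; positivity
    have hp0' : 0 < p := by exact_mod_cast hp0
    have hpq : (p : ℝ) < q := by rw [← hp]; nlinarith
    have hpq' : p < q := by exact_mod_cast hpq
    lift p to ℕ using hp0'.le
    refine ih p (by exact_mod_cast hpq') (by exact_mod_cast hp0') (k + 1) (q - a k * p) ?_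
    push_cast at hp ⊢
    rw [← hp]
    linear_combination (q : ℝ) * h2

lemma cf_irr {X : ℕ → ℝ} {a : ℕ → ℕ} (h : CFOrb X a) : Irrational (X 0) := by
  rintro ⟨r, hr⟩
  refine cf_irr_aux h r.den r.pos 0 r.num ?_
  rw [← hr]
  exact_mod_cast Rat.mul_den_eq_num r

lemma cf_dist {X Y : ℕ → ℝ} {a a' : ℕ → ℕ} (h : CFOrb X a) (h' : CFOrb Y a') (n : ℕ)
    (hn : ∀ i < n, a i = a' i) :
    |X 0 - Y 0| = |X n - Y n| * ∏ i ∈ Finset.range n, (X i * Y i) := by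
  induction n with
  | zero => simp
  | succ n ih =>
    rw [ih (fun i hi => hn i (by omega)), Finset.prod_range_succ]
    have e : X n - Y n = -((X (n + 1) - Y (n + 1)) * (X n * Y n)) := by
      have h1 := (h n).2.2
      have h2 := (h' n).2.2
      rw [← hn n (by omega)] at h2
      linear_combination (-Y n) * h1 * (-1) * (1) + X n * h2 * (-1)
    rw [e, abs_neg, abs_mul, abs_of_pos (mul_pos (h n).1 (h' n).1)]
    ring

lemma cf_exists (a : ℕ → ℕ) (ha : ∀ n, 2 ≤ a n) : ∃ X : ℕ → ℝ, CFOrb X a := by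
  let K : ℕ → Set (ℕ → ℝ) := fun n =>
    (Set.univ.pi fun _ => Set.Icc (0 : ℝ) 1) ∩ {X | ∀ k < n, X k * (a k + X (k + 1)) = 1}
  have hcpt : IsCompact (Set.univ.pi fun _ : ℕ => Set.Icc (0 : ℝ) 1) :=
    isCompact_univ_pi fun _ => isCompact_Icc
  have hcl : ∀ n, IsClosed {X : ℕ → ℝ | ∀ k < n, X k * (a k + X (k + 1)) = 1} := by
    intro n
    simp only [Set.ofPred_forall]
    refine isClosed_iInter fun k => isClosed_iInter fun _ => isClosed_eq (by fun_prop) (by fun_prop)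
  have hne : ∀ n, ∀ m, ∃ X : ℕ → ℝ, (∀ k, X k ∈ Set.Icc (0 : ℝ) 1) ∧
      ∀ k < n, X k * (a (m + k) + X (k + 1)) = 1 := by
    intro n
    induction n with
    | zero => exact fun m => ⟨fun _ => 0, by simp, by simp⟩
    | succ n ih =>
      intro m
      obtain ⟨X, h1, h2⟩ := ih (m + 1)
      have hp : (1 : ℝ) ≤ a m + X 0 := by
        have : (2 : ℝ) ≤ a m := by exact_mod_cast ha m
        linarith [(h1 0).1]
      refine ⟨fun k => Nat.casesOn k (1 / (a m + X 0)) X, ?_, ?_⟩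
      · rintro (_ | k)
        · exact (show 1 / ((a m : ℝ) + X 0) ∈ Set.Icc (0 : ℝ) 1 from
            ⟨by positivity, by rw [div_le_one (by linarith)]; exact hp⟩)
        · exact h1 k
      · rintro (_ | k) hk
        · change 1 / ((a m : ℝ) + X 0) * (a m + X 0) = 1
          field_simp
        · have := h2 k (by omega)
          have e : m + 1 + k = m + (k + 1) := by omega
          rw [e] at this
          exact this
  obtain ⟨X, hX⟩ := IsCompact.nonempty_iInter_of_sequence_nonempty_isCompact_isClosed K
    (fun n => Set.inter_subset_inter_right _ fun X hX k hk => hX k (by omega))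
    (fun n => by
      obtain ⟨X, h1, h2⟩ := hne n 0
      refine ⟨X, fun k _ => h1 k, ?_⟩
      simpa using h2)
    (hcpt.inter_right (hcl 0)) (fun n => hcpt.isClosed.inter (hcl n))
  rw [Set.mem_iInter] at hX
  refine ⟨X, fun n => ?_⟩
  have h01 : ∀ k, X k ∈ Set.Icc (0 : ℝ) 1 := fun k => (hX 0).1 k trivial
  have he := (hX (n + 1)).2 n (by omega)
  have h2 : (2 : ℝ) ≤ a n := by exact_mod_cast ha n
  refine ⟨lt_of_le_of_ne (h01 n).1 ?_, ?_, he⟩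
  · intro h
    rw [← h] at he
    simp at he
  · nlinarith [(h01 n).1, (h01 (n + 1)).1]

lemma lin_sub_exp_le {b : ℝ} (hb : 1 < b) (A : ℝ) {B : ℝ} (hB : 0 < B) :
    ∃ K : ℝ, ∀ n : ℕ, A * n - B * b ^ n ≤ K := by
  have hl : 0 < Real.log b := Real.log_pos hb
  set l := Real.log b with hldef
  refine ⟨A ^ 2 / (2 * B * l ^ 2), fun n => ?_⟩
  have h1 : b ^ n = Real.exp (n * l) := by
    rw [mul_comm, Real.exp_mul, hldef, Real.exp_log (by linarith), Real.rpow_natCast]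
  have h2 := Real.quadratic_le_exp_of_nonneg (x := n * l) (by positivity)
  have h3 : ((n : ℝ) * l) ^ 2 / 2 ≤ b ^ n := by
    rw [h1]
    have : 0 ≤ (n : ℝ) * l := by positivity
    linarith
  have h4 : A * n - B * b ^ n ≤ A * n - B * ((n * l) ^ 2 / 2) := by
    have := mul_le_mul_of_nonneg_left h3 hB.le
    linarith
  refine h4.trans ?_
  rw [le_div_iff₀ (by positivity)]
  nlinarith [sq_nonneg (A - B * l ^ 2 * n)]

/-- Remainders of the Cantor series expansion of `t` with bases `M`. -/
noncomputable def tauSeq (M : ℕ → ℕ) (t : ℝ) : ℕ → ℝ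
  | 0 => t
  | (n + 1) => Int.fract ((M n : ℝ) * tauSeq M t n)

/-- Digits of the Cantor series expansion. -/
noncomputable def digSeq (M : ℕ → ℕ) (t : ℝ) (n : ℕ) : ℕ := ⌊(M n : ℝ) * tauSeq M t n⌋₊

lemma tauSeq_mem (M : ℕ → ℕ) {t : ℝ} (ht : t ∈ Set.Ico (0 : ℝ) 1) (n : ℕ) :
    tauSeq M t n ∈ Set.Ico (0 : ℝ) 1 := by
  cases n with
  | zero => exact ht
  | succ n => exact ⟨Int.fract_nonneg _, Int.fract_lt_one _⟩

lemma tauSeq_rec (M : ℕ → ℕ) {t : ℝ} (ht : t ∈ Set.Ico (0 : ℝ) 1) (n : ℕ) :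
    (M n : ℝ) * tauSeq M t n = digSeq M t n + tauSeq M t (n + 1) := by
  have h0 : 0 ≤ (M n : ℝ) * tauSeq M t n :=
    mul_nonneg (Nat.cast_nonneg _) (tauSeq_mem M ht n).1
  rw [digSeq, natCast_floor_eq_intCast_floor h0, tauSeq]
  exact (Int.floor_add_fract _).symm

lemma digSeq_lt (M : ℕ → ℕ) (hM : ∀ n, 2 ≤ M n) {t : ℝ} (ht : t ∈ Set.Ico (0 : ℝ) 1) (n : ℕ) :
    digSeq M t n < M n := by
  have h := tauSeq_mem M ht n
  have hm : (0 : ℝ) < M n := by have := hM n; exact_mod_cast (by omega)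
  rw [digSeq, Nat.floor_lt (mul_nonneg hm.le h.1)]
  nlinarith [h.2]

lemma tau_dist (M : ℕ → ℕ) {t t' : ℝ} (ht : t ∈ Set.Ico (0 : ℝ) 1) (ht' : t' ∈ Set.Ico (0 : ℝ) 1)
    (n : ℕ) (h : ∀ i < n, digSeq M t i = digSeq M t' i) :
    |t - t'| * ∏ i ∈ Finset.range n, (M i : ℝ) = |tauSeq M t n - tauSeq M t' n| := by
  induction n with
  | zero => simp [tauSeq]
  | succ n ih =>
    rw [Finset.prod_range_succ, ← mul_assoc, ih (fun i hi => h i (by omega))]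
    have h1 := tauSeq_rec M ht n
    have h2 := tauSeq_rec M ht' n
    rw [← h n (by omega)] at h2
    have : tauSeq M t (n + 1) - tauSeq M t' (n + 1) = (tauSeq M t n - tauSeq M t' n) * M n := by
      linear_combination h2 - h1
    rw [this, abs_mul, Nat.abs_cast]

lemma dig_inj (M : ℕ → ℕ) (hM : ∀ n, 2 ≤ M n) {t t' : ℝ} (ht : t ∈ Set.Ico (0 : ℝ) 1)
    (ht' : t' ∈ Set.Ico (0 : ℝ) 1) (h : ∀ i, digSeq M t i = digSeq M t' i) : t = t' := by
  by_contra hne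
  have hpos : 0 < |t - t'| := abs_pos.mpr (sub_ne_zero.mpr hne)
  obtain ⟨n, hn⟩ := pow_unbounded_of_one_lt (1 / |t - t'|) (one_lt_two)
  have h1 := tau_dist M ht ht' n (fun i _ => h i)
  have h2 : (2 : ℝ) ^ n ≤ ∏ i ∈ Finset.range n, (M i : ℝ) := by
    calc (2 : ℝ) ^ n = ∏ i ∈ Finset.range n, (2 : ℝ) := by simp
      _ ≤ _ := Finset.prod_le_prod (fun _ _ => by norm_num) (fun i _ => by exact_mod_cast hM i)
  have h3 : |tauSeq M t n - tauSeq M t' n| < 1 := by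
    have a := tauSeq_mem M ht n
    have b := tauSeq_mem M ht' n
    rw [abs_lt]
    constructor <;> linarith [a.1, a.2, b.1, b.2]
  rw [div_lt_iff₀ hpos] at hn
  nlinarith

lemma holder_core (M : ℕ → ℕ) (hM : ∀ n, 2 ≤ M n) {s C : ℝ} (hs : 0 < s) (hs1 : s < 1)
    (hC0 : 0 ≤ C)
    (hC : ∀ n, 2 * (8 * 4 ^ n * (∏ i ∈ Finset.range n, (M i : ℝ)) ^ 2 * (M n : ℝ) ^ 2) ^ s *
      (M n : ℝ) ^ (1 - s) ≤ C * ((∏ i ∈ Finset.range n, (M i : ℝ)) * M n))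
    {t t' : ℝ} (ht : t ∈ Set.Ico (0 : ℝ) 1) (ht' : t' ∈ Set.Ico (0 : ℝ) 1)
    {X Y : ℕ → ℝ} (hX : CFOrb X (fun n => M n + digSeq M t n))
    (hY : CFOrb Y (fun n => M n + digSeq M t' n)) :
    |t - t'| ≤ C * |X 0 - Y 0| ^ s := by
  by_cases hall : ∀ i, digSeq M t i = digSeq M t' i
  · rw [dig_inj M hM ht ht' hall]
    simp only [sub_self, abs_zero]
    positivity
  push Not at hall
  classical
  set n := Nat.find hall with hn
  have hne : digSeq M t n ≠ digSeq M t' n := Nat.find_spec hall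
  have hlt : ∀ i < n, digSeq M t i = digSeq M t' i := fun i hi => by
    have := Nat.find_min hall hi
    simpa using this
  set D := ∏ i ∈ Finset.range n, (M i : ℝ) with hD
  have hMpos : ∀ i, (0 : ℝ) < M i := fun i => by have := hM i; exact_mod_cast (by omega)
  have hM2 : ∀ i, (2 : ℝ) ≤ M i := fun i => by exact_mod_cast hM i
  have hDpos : 0 < D := Finset.prod_pos fun i _ => hMpos i
  set k : ℝ := |(digSeq M t n : ℝ) - digSeq M t' n| with hk
  have hk1 : 1 ≤ k := by
    have : (1 : ℤ) ≤ |(digSeq M t n : ℤ) - digSeq M t' n| := by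
      apply Int.one_le_abs
      omega
    rw [hk]
    exact_mod_cast this
  have hkM : k ≤ M n := by
    have a : (digSeq M t n : ℝ) < M n := by exact_mod_cast digSeq_lt M hM ht n
    have b : (digSeq M t' n : ℝ) < M n := by exact_mod_cast digSeq_lt M hM ht' n
    rw [hk, abs_le]
    have a0 : (0 : ℝ) ≤ digSeq M t n := Nat.cast_nonneg _
    have b0 : (0 : ℝ) ≤ digSeq M t' n := Nat.cast_nonneg _
    constructor <;> linarith
  have hup : |t - t'| ≤ 2 * k / (D * M n) := by
    rw [le_div_iff₀ (mul_pos hDpos (hMpos n)), ← mul_assoc, tau_dist M ht ht' n hlt]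
    have h1 := tauSeq_rec M ht n
    have h2 := tauSeq_rec M ht' n
    have e : |tauSeq M t n - tauSeq M t' n| * M n =
        |((digSeq M t n : ℝ) - digSeq M t' n) + (tauSeq M t (n + 1) - tauSeq M t' (n + 1))| := by
      conv_lhs => rw [← abs_of_pos (hMpos n), ← abs_mul]
      congr 1
      linear_combination h1 - h2
    rw [e]
    have h3 : |tauSeq M t (n + 1) - tauSeq M t' (n + 1)| ≤ 1 := by
      have a := tauSeq_mem M ht (n + 1)
      have b := tauSeq_mem M ht' (n + 1)
      rw [abs_le]
      constructor <;> linarith [a.1, a.2, b.1, b.2]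
    have := abs_add_le ((digSeq M t n : ℝ) - digSeq M t' n)
      (tauSeq M t (n + 1) - tauSeq M t' (n + 1))
    linarith
  have lowgen : ∀ {u : ℝ} (_ : u ∈ Set.Ico (0 : ℝ) 1) {Z : ℕ → ℝ}
      (_ : CFOrb Z (fun n => M n + digSeq M u n)) (i : ℕ),
      1 / (2 * (M i : ℝ)) ≤ Z i ∧ Z i ≤ 1 / 2 := by
    intro u hu Z hZ i
    obtain ⟨h0, h1, h2⟩ := hZ i
    have h3 := (hZ (i + 1)).1
    have h4 := (hZ (i + 1)).2.1
    have h5 : (digSeq M u i : ℝ) + 1 ≤ M i := by exact_mod_cast digSeq_lt M hM hu i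
    have h6 := hM2 i
    have h7 : (0 : ℝ) ≤ digSeq M u i := Nat.cast_nonneg _
    push_cast at h2
    constructor
    · rw [div_le_iff₀ (by positivity)]
      nlinarith
    · nlinarith
  have hlow : k / (8 * 4 ^ n * D ^ 2 * (M n : ℝ) ^ 2) ≤ |X 0 - Y 0| := by
    rw [cf_dist hX hY n (fun i hi => by simp only [hlt i hi])]
    have hprod : 1 / (4 ^ n * D ^ 2) ≤ ∏ i ∈ Finset.range n, (X i * Y i) := by
      have : 1 / (4 ^ n * D ^ 2) =
          ∏ i ∈ Finset.range n, (1 / (2 * (M i : ℝ)) * (1 / (2 * (M i : ℝ)))) := by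
        rw [Finset.prod_mul_distrib]
        simp only [one_div, mul_inv, Finset.prod_mul_distrib, Finset.prod_inv_distrib,
          Finset.prod_const, Finset.card_range, ← hD]
        have : (4 : ℝ) ^ n = 2 ^ n * 2 ^ n := by rw [← mul_pow]; norm_num
        rw [this]
        field_simp
      rw [this]
      refine Finset.prod_le_prod (fun i _ => by positivity) fun i _ => ?_
      exact mul_le_mul (lowgen ht hX i).1 (lowgen ht' hY i).1 (by positivity) (hX i).1.le
    have hgap : k / (8 * (M n : ℝ) ^ 2) ≤ |X n - Y n| := by
      have e : X n - Y n = -((((digSeq M t n : ℝ) - digSeq M t' n) + (X (n + 1) - Y (n + 1))) *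
          (X n * Y n)) := by
        have h1 := (hX n).2.2
        have h2 := (hY n).2.2
        push_cast at h1 h2
        linear_combination Y n * h1 - X n * h2
      have hXY : 1 / (2 * (M n : ℝ)) * (1 / (2 * (M n : ℝ))) ≤ X n * Y n :=
        mul_le_mul (lowgen ht hX n).1 (lowgen ht' hY n).1
          (by have := hMpos n; positivity) (hX n).1.le
      have hk2 : k / 2 ≤ |((digSeq M t n : ℝ) - digSeq M t' n) + (X (n + 1) - Y (n + 1))| := by
        have h3 : |X (n + 1) - Y (n + 1)| ≤ 1 / 2 := by
          have a := lowgen ht hX (n + 1)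
          have b := lowgen ht' hY (n + 1)
          have a0 := (hX (n + 1)).1
          have b0 := (hY (n + 1)).1
          rw [abs_le]
          constructor <;> linarith [a.2, b.2]
        have h4 := abs_sub_abs_le_abs_sub ((digSeq M t n : ℝ) - digSeq M t' n)
          (-(X (n + 1) - Y (n + 1)))
        rw [abs_neg, sub_neg_eq_add] at h4
        linarith
      rw [e, abs_neg, abs_mul, abs_of_pos (mul_pos (hX n).1 (hY n).1)]
      calc k / (8 * (M n : ℝ) ^ 2) = k / 2 * (1 / (2 * (M n : ℝ)) * (1 / (2 * (M n : ℝ)))) := by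
            have := hMpos n
            field_simp
            norm_num
        _ ≤ _ := mul_le_mul hk2 hXY (by have := hMpos n; positivity) (abs_nonneg _)
    calc k / (8 * 4 ^ n * D ^ 2 * (M n : ℝ) ^ 2)
        = k / (8 * (M n : ℝ) ^ 2) * (1 / (4 ^ n * D ^ 2)) := by
          have := hMpos n
          field_simp
      _ ≤ _ := mul_le_mul hgap hprod (by positivity) (abs_nonneg _)
  set Q := 8 * 4 ^ n * D ^ 2 * (M n : ℝ) ^ 2 with hQ
  have hQpos : 0 < Q := by have := hMpos n; positivity
  have hkpos : 0 < k := by linarith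
  have hfin : 2 * k / (D * M n) ≤ C * (k / Q) ^ s := by
    rw [Real.div_rpow hkpos.le hQpos.le, div_le_iff₀ (mul_pos hDpos (hMpos n)), ← mul_div_assoc,
      div_mul_eq_mul_div, le_div_iff₀ (Real.rpow_pos_of_pos hQpos s)]
    have e : k = k ^ s * k ^ (1 - s) := by
      rw [← Real.rpow_add hkpos]; simp
    have hk' : k ^ (1 - s) ≤ (M n : ℝ) ^ (1 - s) :=
      Real.rpow_le_rpow hkpos.le hkM (by linarith)
    have h1 := hC n
    rw [← hD, ← hQ] at h1
    have hks : 0 < k ^ s := Real.rpow_pos_of_pos hkpos s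
    have hQs : 0 < Q ^ s := Real.rpow_pos_of_pos hQpos s
    calc 2 * k * Q ^ s = k ^ s * (2 * Q ^ s * k ^ (1 - s)) := by
          conv_lhs => rw [e]
          ring
      _ ≤ k ^ s * (2 * Q ^ s * (M n : ℝ) ^ (1 - s)) := by gcongr
      _ ≤ k ^ s * (C * (D * M n)) := by gcongr
      _ = _ := by ring
  calc |t - t'| ≤ 2 * k / (D * M n) := hup
    _ ≤ C * (k / Q) ^ s := hfin
    _ ≤ C * |X 0 - Y 0| ^ s := by gcongr

lemma holder_const {b c s : ℝ} (hb : 1 < b) (hc : 1 < c) (hs : 0 < s) (hsb : s < 1 / (b + 1))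
    (M : ℕ → ℕ) (hM1 : ∀ n, c ^ (b ^ (n + 1)) ≤ (M n : ℝ))
    (hM2 : ∀ n, (M n : ℝ) ≤ 2 * c ^ (b ^ (n + 1))) :
    ∃ C : ℝ, 0 ≤ C ∧
    ∀ n, 2 * (8 * 4 ^ n * (∏ i ∈ Finset.range n, (M i : ℝ)) ^ 2 * (M n : ℝ) ^ 2) ^ s *
      (M n : ℝ) ^ (1 - s) ≤ C * ((∏ i ∈ Finset.range n, (M i : ℝ)) * M n) := by
  set L := Real.log c with hL
  have hLpos : 0 < L := Real.log_pos hc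
  have hsb' : s * (b + 1) < 1 := by rwa [lt_div_iff₀ (by linarith)] at hsb
  have hs2 : 2 * s - 1 < 0 := by nlinarith
  set δ := (1 - (b + 1) * s) / (b - 1) with hδ
  have hδpos : 0 < δ := div_pos (by linarith) (by linarith)
  obtain ⟨K, hK⟩ := lin_sub_exp_le hb (s * Real.log 4) (B := L * δ * b) (by positivity)
  set K' := Real.log 2 + s * Real.log 8 + s * Real.log 2 + L * (1 - 2 * s) / (b - 1) * b + K with hK'
  refine ⟨Real.exp K', (Real.exp_pos _).le, fun n => ?_⟩
  have hMpos : ∀ i, (0 : ℝ) < M i := fun i => lt_of_lt_of_le (by positivity) (hM1 i)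
  set D := ∏ i ∈ Finset.range n, (M i : ℝ) with hD
  have hDpos : 0 < D := Finset.prod_pos fun i _ => hMpos i
  have hm := hMpos n
  have hlogD : L * ((b ^ (n + 1) - b) / (b - 1)) ≤ Real.log D := by
    rw [hD, Real.log_prod (fun i _ => (hMpos i).ne')]
    have : L * ((b ^ (n + 1) - b) / (b - 1)) = ∑ i ∈ Finset.range n, L * b ^ (i + 1) := by
      rw [← Finset.mul_sum]
      congr 1
      simp_rw [pow_succ]
      rw [← Finset.sum_mul, geom_sum_eq hb.ne']
      have : b - 1 ≠ 0 := by linarith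
      field_simp
    rw [this]
    refine Finset.sum_le_sum fun i _ => ?_
    have := Real.log_le_log (by positivity) (hM1 i)
    rw [Real.log_rpow (by linarith)] at this
    linarith
  have hlogM : Real.log (M n) ≤ Real.log 2 + L * b ^ (n + 1) := by
    have := Real.log_le_log hm (hM2 n)
    rw [Real.log_mul (by norm_num) (by positivity), Real.log_rpow (by linarith)] at this
    linarith
  rw [← Real.log_le_log_iff (by positivity) (by positivity)]
  have e1 : Real.log (2 * (8 * 4 ^ n * D ^ 2 * (M n : ℝ) ^ 2) ^ s * (M n : ℝ) ^ (1 - s)) =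
      Real.log 2 + s * (Real.log 8 + n * Real.log 4 + 2 * Real.log D + 2 * Real.log (M n)) +
        (1 - s) * Real.log (M n) := by
    rw [Real.log_mul (by positivity) (by positivity), Real.log_mul (by positivity) (by positivity),
      Real.log_rpow (by positivity), Real.log_rpow (by positivity),
      Real.log_mul (by positivity) (by positivity), Real.log_mul (by positivity) (by positivity),
      Real.log_mul (by positivity) (by positivity), Real.log_pow, Real.log_pow, Real.log_pow]
    push_cast
    ring
  have e2 : Real.log (Real.exp K' * (D * M n)) = K' + Real.log D + Real.log (M n) := by
    rw [Real.log_mul (by positivity) (by positivity), Real.log_exp,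
      Real.log_mul (by positivity) (by positivity)]
    ring
  rw [e1, e2]
  have h1 : (1 - 2 * s) * (L * ((b ^ (n + 1) - b) / (b - 1))) ≤ (1 - 2 * s) * Real.log D :=
    mul_le_mul_of_nonneg_left hlogD (by linarith)
  have h2 : s * Real.log (M n) ≤ s * (Real.log 2 + L * b ^ (n + 1)) :=
    mul_le_mul_of_nonneg_left hlogM hs.le
  have h3 := hK n
  have e3 : (1 - 2 * s) * (L * ((b ^ (n + 1) - b) / (b - 1))) =
      s * (L * b ^ (n + 1)) + L * δ * b * b ^ n - L * (1 - 2 * s) / (b - 1) * b := by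
    have : b - 1 ≠ 0 := by linarith
    rw [hδ]
    field_simp
    ring
  rw [e3] at h1
  rw [hK']
  linarith

lemma lower_bound (b c : ℝ) (hb : 1 < b) (hc : 1 < c) :
    ENNReal.ofReal (1 / (b + 1)) ≤ dimH {x : ℝ | x ∈ Set.Ioo (0 : ℝ) 1 ∧ Irrational x ∧
        ∀ n : ℕ, 1 ≤ n → c ^ (b ^ n) ≤ (pq x n : ℝ)} := by
  set S := {x : ℝ | x ∈ Set.Ioo (0 : ℝ) 1 ∧ Irrational x ∧
        ∀ n : ℕ, 1 ≤ n → c ^ (b ^ n) ≤ (pq x n : ℝ)} with hS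
  refine ENNReal.le_of_forall_nnreal_lt fun r hr => ?_
  rcases eq_or_ne r 0 with rfl | hr0
  · simp
  have hrpos : (0 : ℝ) < r := by exact_mod_cast pos_iff_ne_zero.mpr hr0
  have hrb : (r : ℝ) < 1 / (b + 1) := by
    have := (ENNReal.lt_ofReal_iff_toReal_lt (by simp)).mp hr
    simpa using this
  have hr1 : (r : ℝ) < 1 := hrb.trans (by rw [div_lt_one] <;> linarith)
  let M : ℕ → ℕ := fun n => ⌈c ^ (b ^ (n + 1))⌉₊
  have hgt : ∀ n : ℕ, 1 < c ^ (b ^ (n + 1)) := fun n =>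
    Real.one_lt_rpow hc (by positivity)
  have hM1 : ∀ n, c ^ (b ^ (n + 1)) ≤ (M n : ℝ) := fun n => Nat.le_ceil _
  have hM2 : ∀ n, (M n : ℝ) ≤ 2 * c ^ (b ^ (n + 1)) := fun n => by
    have := Nat.ceil_lt_add_one (zero_le_one.trans (hgt n).le)
    have h2 := hgt n
    simp only [M]
    linarith
  have hM : ∀ n, 2 ≤ M n := fun n => by
    have : (1 : ℝ) < M n := (hgt n).trans_le (hM1 n)
    exact_mod_cast this
  obtain ⟨C, hC0, hC⟩ := holder_const hb hc hrpos hrb M hM1 hM2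
  have hex : ∀ t : ℝ, ∃ X : ℕ → ℝ, CFOrb X (fun n => M n + digSeq M t n) := fun t =>
    cf_exists _ fun n => (hM n).trans (Nat.le_add_right _ _)
  choose X hX using hex
  let g : ℝ → ℝ := fun t => X t 0
  have hg : ∀ t ∈ Set.Ico (0 : ℝ) 1, ∀ t' ∈ Set.Ico (0 : ℝ) 1,
      |t - t'| ≤ C * |g t - g t'| ^ (r : ℝ) := fun t ht t' ht' =>
    holder_core M hM hrpos hr1 hC0 hC ht ht' (hX t) (hX t')
  have hinj : Set.InjOn g (Set.Ico 0 1) := by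
    intro t ht t' ht' he
    have := hg t ht t' ht'
    rw [he, sub_self, abs_zero, Real.zero_rpow hrpos.ne', mul_zero] at this
    exact sub_eq_zero.mp (abs_eq_zero.mp (le_antisymm this (abs_nonneg _)))
  have hsub : g '' Set.Ico 0 1 ⊆ S := by
    rintro _ ⟨t, _, rfl⟩
    refine ⟨⟨(hX t 0).1, (hX t 0).2.1⟩, cf_irr (hX t), ?_⟩
    rintro (_ | n) hn
    · omega
    · rw [(cf_gauss (hX t) n).2]
      push_cast
      exact (hM1 n).trans (by simp)
  let f := Function.invFunOn g (Set.Ico (0 : ℝ) 1)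
  have hf : ∀ t ∈ Set.Ico (0 : ℝ) 1, f (g t) = t := fun t ht => hinj.leftInvOn_invFunOn ht
  have hhol : HolderOnWith C.toNNReal r f (g '' Set.Ico 0 1) := by
    rintro _ ⟨t, ht, rfl⟩ _ ⟨t', ht', rfl⟩
    rw [hf t ht, hf t' ht', edist_dist, edist_dist, ENNReal.ofReal_rpow_of_nonneg dist_nonneg r.coe_nonneg]
    change _ ≤ ENNReal.ofReal C * _
    rw [← ENNReal.ofReal_mul hC0]
    exact ENNReal.ofReal_le_ofReal (hg t ht t' ht')
  have himg : f '' (g '' Set.Ico 0 1) = Set.Ico (0 : ℝ) 1 := by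
    rw [← Set.image_comp]
    ext t
    constructor
    · rintro ⟨u, hu, rfl⟩
      simpa [hf u hu] using hu
    · exact fun ht => ⟨t, ht, hf t ht⟩
  have hdim := hhol.dimH_image_le (by exact_mod_cast hrpos)
  rw [himg, Real.dimH_of_nonempty_interior (by simp)] at hdim
  rw [ENNReal.le_div_iff_mul_le (by simp [hr0]) (by simp)] at hdim
  simp only [Module.finrank_self, Nat.cast_one, one_mul] at hdim
  exact hdim.trans (dimH_mono hsub)

lemma tsum_words (g : ℕ → ENNReal) (n : ℕ) :
    ∑' w : Fin n → ℕ, ∏ i, g (w i) = (∑' k, g k) ^ n := by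
  induction n with
  | zero => simp
  | succ n ih =>
    rw [← (Fin.consEquiv fun _ : Fin (n + 1) => ℕ).tsum_eq, ENNReal.tsum_prod']
    simp only [Fin.consEquiv_apply, Fin.prod_univ_succ, Fin.cons_zero, Fin.cons_succ]
    simp_rw [ENNReal.tsum_mul_left, ih]
    rw [ENNReal.tsum_mul_right, pow_succ, mul_comm]

/-- The sets used in the covering for the upper bound. -/
def coverSet (β : ℝ) (n : ℕ) (w : Fin n → ℕ) : Set ℝ :=
  {x | x ∈ Set.Ioo (0 : ℝ) 1 ∧ Irrational x ∧ (∀ i : Fin n, pq x (i + 1) = w i) ∧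
    (∏ i, (w i : ℝ)) ^ β ≤ (∏ i, (w i : ℝ)) * pq x (n + 1) ∧
    Real.exp (β ^ (n + 1)) ≤ (∏ i, (w i : ℝ)) * pq x (n + 1)}

lemma cf_digit_pos {X : ℕ → ℝ} {a : ℕ → ℕ} (h : CFOrb X a) (n : ℕ) : 1 ≤ a n := by
  by_contra hlt
  have h0 : a n = 0 := by omega
  obtain ⟨h1, h2, h3⟩ := h n
  rw [h0] at h3
  have h4 := h (n + 1)
  push_cast at h3
  nlinarith [h4.1, h4.2.1]

lemma cf_le {X : ℕ → ℝ} {a : ℕ → ℕ} (h : CFOrb X a) (n : ℕ) : X n ≤ 1 / a n := by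
  have h1 : (1 : ℝ) ≤ a n := by exact_mod_cast cf_digit_pos h n
  obtain ⟨h1, h2, h3⟩ := h n
  rw [le_div_iff₀ (by linarith)]
  nlinarith [(h (n + 1)).1]

lemma coverSet_prod_pos {β : ℝ} {n : ℕ} {w : Fin n → ℕ} {x : ℝ} (hx : x ∈ coverSet β n w) :
    1 ≤ ∏ i, (w i : ℝ) := by
  obtain ⟨h1, h2, h3, -, -⟩ := hx
  have : 1 ≤ ∏ i, w i := by
    refine Nat.one_le_iff_ne_zero.mpr (Finset.prod_ne_zero_iff.mpr fun i _ => ?_)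
    have := cf_digit_pos (gauss_cf h1 h2) i
    simp only [h3 i] at this
    omega
  exact_mod_cast this

lemma coverSet_dist {β : ℝ} {n : ℕ} {w : Fin n → ℕ} {x y : ℝ} (hx : x ∈ coverSet β n w)
    (hy : y ∈ coverSet β n w) {E : ℝ} (hE : 0 < E)
    (hEz : ∀ z ∈ coverSet β n w, E ≤ (∏ i, (w i : ℝ)) * pq z (n + 1)) :
    |x - y| ≤ 1 / ((∏ i, (w i : ℝ)) * E) := by
  have hP := coverSet_prod_pos hx
  set P := ∏ i, (w i : ℝ) with hPdef
  have hx' := gauss_cf hx.1 hx.2.1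
  have hy' := gauss_cf hy.1 hy.2.1
  have hd := cf_dist hx' hy' n (fun i hi => by
    have e1 := hx.2.2.1 ⟨i, hi⟩
    have e2 := hy.2.2.1 ⟨i, hi⟩
    simp only at e1 e2
    rw [e1, e2])
  simp only [Function.iterate_zero, id] at hd
  have hb : ∀ z ∈ coverSet β n w, gaussMap^[n] z ≤ P / E := by
    intro z hz
    have hz' := gauss_cf hz.1 hz.2.1
    have h1 := cf_le hz' n
    have h2 : (1 : ℝ) ≤ pq z (n + 1) := by exact_mod_cast cf_digit_pos hz' n
    refine h1.trans ?_
    rw [div_le_div_iff₀ (by linarith) hE]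
    linarith [hEz z hz]
  have h1 : |gaussMap^[n] x - gaussMap^[n] y| ≤ P / E := by
    have a := hb x hx
    have b := hb y hy
    have a0 := (hx' n).1
    have b0 := (hy' n).1
    simp only at a0 b0
    rw [abs_le]
    constructor <;> linarith
  have hprodz : ∀ z ∈ coverSet β n w, ∏ i ∈ Finset.range n, gaussMap^[i] z ≤ 1 / P := by
    intro z hz
    have hz' := gauss_cf hz.1 hz.2.1
    have : 1 / P = ∏ i ∈ Finset.range n, (1 / (pq z (i + 1) : ℝ)) := by
      rw [Finset.prod_range, hPdef]
      simp_rw [hz.2.2.1]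
      simp
    rw [this]
    exact Finset.prod_le_prod (fun i _ => (hz' i).1.le) fun i _ => cf_le hz' i
  have h2 : ∏ i ∈ Finset.range n, (gaussMap^[i] x * gaussMap^[i] y) ≤ 1 / P * (1 / P) := by
    rw [Finset.prod_mul_distrib]
    exact mul_le_mul (hprodz x hx) (hprodz y hy)
      (Finset.prod_nonneg fun i _ => (hy' i).1.le) (by positivity)
  rw [hd]
  calc _ ≤ P / E * (1 / P * (1 / P)) :=
        mul_le_mul h1 h2 (Finset.prod_nonneg fun i _ => (mul_pos (hx' i).1 (hy' i).1).le)
          (by positivity)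
    _ = _ := by field_simp

lemma coverSet_ediam {β : ℝ} (n : ℕ) (w : Fin n → ℕ) {E : ℝ} (hE : 0 < E)
    (hEz : ∀ z ∈ coverSet β n w, E ≤ (∏ i, (w i : ℝ)) * pq z (n + 1)) :
    Metric.ediam (coverSet β n w) ≤ ENNReal.ofReal (1 / ((∏ i, (w i : ℝ)) * E)) := by
  refine Metric.ediam_le fun x hx y hy => ?_
  rw [edist_dist]
  exact ENNReal.ofReal_le_ofReal (coverSet_dist hx hy hE hEz)

lemma coverSet_pow {β s η κ : ℝ} (hη : 0 < η) (hηs : η < s)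
    (hκ : s + β * (s - η) = 1 + κ) (n : ℕ) (w : Fin n → ℕ) :
    Metric.ediam (coverSet β n w) ^ s ≤
      ENNReal.ofReal (Real.exp (-(η * β ^ (n + 1)))) *
        ∏ i, ENNReal.ofReal ((w i : ℝ) ^ (-(1 + κ))) := by
  have hs : 0 < s := hη.trans hηs
  rcases (coverSet β n w).eq_empty_or_nonempty with he | ⟨x, hx⟩
  · rw [he, Metric.ediam_empty, ENNReal.zero_rpow_of_pos hs]
    exact zero_le
  have hP := coverSet_prod_pos hx
  set P := ∏ i, (w i : ℝ) with hPdef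
  have hP0 : 0 < P := by linarith
  set E := max (P ^ β) (Real.exp (β ^ (n + 1))) with hEdef
  have hE : 0 < E := lt_max_of_lt_right (Real.exp_pos _)
  have h1 := coverSet_ediam n w hE (fun z hz => max_le hz.2.2.2.1 hz.2.2.2.2)
  rw [← ENNReal.ofReal_prod_of_nonneg (fun i _ => by positivity),
    ← ENNReal.ofReal_mul (Real.exp_pos _).le]
  refine (ENNReal.rpow_le_rpow h1 hs.le).trans ?_
  rw [ENNReal.ofReal_rpow_of_nonneg (by positivity) hs.le]
  refine ENNReal.ofReal_le_ofReal ?_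
  rw [← hPdef, Real.finsetProd_rpow _ _ (fun i _ => Nat.cast_nonneg _), ← hPdef]
  have hEs : P ^ (β * (s - η)) * Real.exp (η * β ^ (n + 1)) ≤ E ^ s := by
    have e : E ^ s = E ^ (s - η) * E ^ η := by
      rw [← Real.rpow_add hE]; congr 1; ring
    rw [e, Real.rpow_mul hP0.le, mul_comm η, Real.exp_mul]
    exact mul_le_mul (Real.rpow_le_rpow (by positivity) (le_max_left _ _) (by linarith))
      (Real.rpow_le_rpow (by positivity) (le_max_right _ _) hη.le) (by positivity) (by positivity)
  rw [one_div, Real.inv_rpow (by positivity), Real.mul_rpow hP0.le hE.le, Real.exp_neg,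
    Real.rpow_neg hP0.le, ← mul_inv]
  refine inv_anti₀ (by positivity) ?_
  rw [← hκ, Real.rpow_add hP0]
  calc _ = P ^ s * (P ^ (β * (s - η)) * Real.exp (η * β ^ (n + 1))) := by ring
    _ ≤ _ := by gcongr

lemma cover_sum {β η κ : ℝ} (hβ : 1 < β) (hη : 0 < η) (hκ : 0 < κ) :
    ∑' (p : Σ n : ℕ, (Fin n → ℕ)), (ENNReal.ofReal (Real.exp (-(η * β ^ (p.1 + 1)))) *
        ∏ i, ENNReal.ofReal ((p.2 i : ℝ) ^ (-(1 + κ)))) ≠ ⊤ := by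
  rw [ENNReal.tsum_sigma']
  simp_rw [ENNReal.tsum_mul_left]
  have e : ∀ n : ℕ, ∑' w : Fin n → ℕ, ∏ i, ENNReal.ofReal ((w i : ℝ) ^ (-(1 + κ))) =
      (∑' k : ℕ, ENNReal.ofReal ((k : ℝ) ^ (-(1 + κ)))) ^ n := fun n =>
    tsum_words (fun k => ENNReal.ofReal ((k : ℝ) ^ (-(1 + κ)))) n
  simp_rw [e]
  have hsum : Summable fun k : ℕ => (k : ℝ) ^ (-(1 + κ)) :=
    Real.summable_nat_rpow.mpr (by linarith)
  have hZ : ∑' k : ℕ, ENNReal.ofReal ((k : ℝ) ^ (-(1 + κ))) =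
      ENNReal.ofReal (∑' k : ℕ, (k : ℝ) ^ (-(1 + κ))) :=
    (ENNReal.ofReal_tsum_of_nonneg (fun k => by positivity) hsum).symm
  rw [hZ]
  set Z := ∑' k : ℕ, (k : ℝ) ^ (-(1 + κ))
  have hZ0 : 0 ≤ Z := tsum_nonneg fun k => by positivity
  obtain ⟨K, hK⟩ := lin_sub_exp_le hβ (Real.log (2 * (Z + 1))) (B := η * β) (by positivity)
  have hterm : ∀ n : ℕ, ENNReal.ofReal (Real.exp (-(η * β ^ (n + 1)))) * ENNReal.ofReal Z ^ n ≤
      ENNReal.ofReal (Real.exp K * (1 / 2) ^ n) := by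
    intro n
    rw [← ENNReal.ofReal_pow hZ0, ← ENNReal.ofReal_mul (Real.exp_pos _).le]
    refine ENNReal.ofReal_le_ofReal ?_
    have h1 : (2 * (Z + 1)) ^ n = Real.exp (Real.log (2 * (Z + 1)) * n) := by
      rw [Real.exp_mul, Real.exp_log (by positivity), Real.rpow_natCast]
    have h2 : Real.exp (-(η * β ^ (n + 1))) * (2 * (Z + 1)) ^ n ≤ Real.exp K := by
      rw [h1, ← Real.exp_add, Real.exp_le_exp]
      have := hK n
      rw [pow_succ]
      linarith
    have h3 : Z ^ n ≤ (2 * (Z + 1)) ^ n * (1 / 2) ^ n := by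
      rw [← mul_pow]
      exact pow_le_pow_left₀ hZ0 (by linarith) n
    calc _ ≤ Real.exp (-(η * β ^ (n + 1))) * ((2 * (Z + 1)) ^ n * (1 / 2) ^ n) := by gcongr
      _ = (Real.exp (-(η * β ^ (n + 1))) * (2 * (Z + 1)) ^ n) * (1 / 2) ^ n := by ring
      _ ≤ _ := by gcongr
  refine ne_top_of_le_ne_top ?_ (ENNReal.tsum_le_tsum hterm)
  exact (summable_geometric_two.mul_left (Real.exp K)).tsum_ofReal_ne_top

lemma cover_mem {b c β : ℝ} (hb : 1 < b) (hc : 1 < c) (hβ : 1 < β) (hβb : β < b) {x : ℝ}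
    (hx : x ∈ Set.Ioo (0 : ℝ) 1) (hi : Irrational x)
    (hinf : {n : ℕ | c ^ (b ^ n) ≤ (pq x n : ℝ)}.Infinite) (N : ℕ) :
    ∃ n, N ≤ n ∧ x ∈ coverSet β n (fun i => pq x (i + 1)) := by
  have hcf := gauss_cf hx hi
  have ha : ∀ i, (1 : ℝ) ≤ pq x (i + 1) := fun i => by exact_mod_cast cf_digit_pos hcf i
  let P : ℕ → ℝ := fun n => ∏ i ∈ Finset.range n, (pq x (i + 1) : ℝ)
  have hP1 : ∀ n, 1 ≤ P n := fun n => by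
    have := Finset.prod_le_prod (s := Finset.range n) (f := fun _ => (1 : ℝ))
      (g := fun i => (pq x (i + 1) : ℝ)) (fun _ _ => zero_le_one) (fun i _ => ha i)
    simpa using this
  have hPs : ∀ n, P (n + 1) = P n * pq x (n + 1) := fun n => Finset.prod_range_succ _ _
  let u : ℕ → ℝ := fun n => Real.log (P n) / β ^ n
  have hβ0 : 0 < β := by linarith
  have key : ∃ n, N ≤ n ∧ u n ≤ u (n + 1) ∧ 1 ≤ u (n + 1) := by
    by_contra hcon
    push Not at hcon
    have hbd : ∀ n, N ≤ n → u n ≤ max (u N) 1 := by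
      intro n hn
      induction n, hn using Nat.le_induction with
      | base => exact le_max_left _ _
      | succ n hn ih =>
        by_cases h : u n ≤ u (n + 1)
        · exact (hcon n hn h).le.trans (le_max_right _ _)
        · exact (not_le.mp h).le.trans ih
    have hL : 0 < Real.log c := Real.log_pos hc
    have hratio : 1 < b / β := by rwa [one_lt_div hβ0]
    obtain ⟨m, hm⟩ := pow_unbounded_of_one_lt (max (u N) 1 / Real.log c) hratio
    obtain ⟨n, hn, hgt⟩ := hinf.exists_gt (max N m)
    obtain ⟨k, rfl⟩ : ∃ k, n = k + 1 := ⟨n - 1, by omega⟩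
    have h1 := hbd (k + 1) (by omega)
    have h2 : Real.log c * (b / β) ^ (k + 1) ≤ u (k + 1) := by
      have h3 : c ^ (b ^ (k + 1)) ≤ P (k + 1) := by
        rw [hPs]
        have := hP1 k
        have h4 : c ^ (b ^ (k + 1)) ≤ (pq x (k + 1) : ℝ) := hn
        nlinarith [ha k]
      have h5 := Real.log_le_log (by positivity) h3
      rw [Real.log_rpow (by linarith)] at h5
      rw [div_pow, ← mul_div_assoc]
      refine div_le_div_of_nonneg_right ?_ (by positivity)
      linarith
    have h6 : (b / β) ^ m ≤ (b / β) ^ (k + 1) := pow_le_pow_right₀ hratio.le (by omega)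
    rw [div_lt_iff₀ hL] at hm
    nlinarith
  obtain ⟨n, hn, h1, h2⟩ := key
  have hprod : ∏ i : Fin n, ((pq x (i + 1) : ℕ) : ℝ) = P n := by
    simp only [P]
    rw [Finset.prod_range]
  refine ⟨n, hn, hx, hi, fun i => rfl, ?_, ?_⟩
  · rw [hprod, ← hPs]
    have hp0 : 0 < P n := by linarith [hP1 n]
    have hp1 : 0 < P (n + 1) := by linarith [hP1 (n + 1)]
    rw [← Real.log_le_log_iff (by positivity) hp1, Real.log_rpow hp0]
    simp only [u] at h1
    rw [div_le_div_iff₀ (by positivity) (by positivity), pow_succ] at h1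
    have : 0 < β ^ n := by positivity
    nlinarith
  · rw [hprod, ← hPs]
    have hp1 : 0 < P (n + 1) := by linarith [hP1 (n + 1)]
    rw [← Real.le_log_iff_exp_le hp1]
    simp only [u] at h2
    rwa [one_le_div (by positivity)] at h2

lemma upper_bound_s14 (b c : ℝ) (hb : 1 < b) (hc : 1 < c) :
    dimH {x : ℝ | x ∈ Set.Ioo (0 : ℝ) 1 ∧ Irrational x ∧
        {n : ℕ | c ^ (b ^ n) ≤ (pq x n : ℝ)}.Infinite} ≤ ENNReal.ofReal (1 / (b + 1)) := by
  set S := {x : ℝ | x ∈ Set.Ioo (0 : ℝ) 1 ∧ Irrational x ∧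
        {n : ℕ | c ^ (b ^ n) ≤ (pq x n : ℝ)}.Infinite} with hS
  refine ENNReal.le_of_forall_pos_le_add fun ε hε _ => ?_
  have hε' : (0 : ℝ) < ε := by exact_mod_cast hε
  have hb1 : 0 < 1 / (b + 1) := by positivity
  obtain ⟨s, hs⟩ : ∃ s : ℝ, s = 1 / (b + 1) + ε := ⟨_, rfl⟩
  have hs0 : 0 < s := by rw [hs]; positivity
  have hsb : 1 < s * (1 + b) := by
    rw [hs, add_mul, add_comm 1 b, one_div_mul_cancel (by positivity)]
    have : 0 < (ε : ℝ) * (b + 1) := by positivity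
    linarith
  have hgoal : ENNReal.ofReal (1 / (b + 1)) + ε = ((s.toNNReal : NNReal) : ENNReal) := by
    rw [hs, Real.toNNReal_add hb1.le hε'.le, Real.toNNReal_coe, ENNReal.coe_add]
    rfl
  rw [hgoal]
  obtain ⟨β, hβ1, hβb⟩ : ∃ β, max 1 (1 / s - 1) < β ∧ β < b := by
    refine exists_between (max_lt hb ?_)
    rw [sub_lt_iff_lt_add, div_lt_iff₀ hs0]
    linarith
  have hβ : 1 < β := (le_max_left _ _).trans_lt hβ1
  have hβ0 : 0 < β := by linarith
  have hsβ : 1 < s * (1 + β) := by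
    have := (le_max_right _ _).trans_lt hβ1
    rw [sub_lt_iff_lt_add, div_lt_iff₀ hs0] at this
    linarith
  obtain ⟨η, hη, hη2⟩ : ∃ η, 0 < η ∧ η < min s ((s * (1 + β) - 1) / β) :=
    exists_between (lt_min hs0 (div_pos (by linarith) hβ0))
  have hηs : η < s := hη2.trans_le (min_le_left _ _)
  have hηβ : η * β < s * (1 + β) - 1 := by
    have := hη2.trans_le (min_le_right _ _)
    rwa [lt_div_iff₀ hβ0] at this
  obtain ⟨κ, hκ⟩ : ∃ κ, κ = s + β * (s - η) - 1 := ⟨_, rfl⟩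
  have hκ0 : 0 < κ := by rw [hκ]; nlinarith
  have hκ' : s + β * (s - η) = 1 + κ := by rw [hκ]; ring
  refine dimH_le_of_hausdorffMeasure_ne_top ?_
  rw [Real.coe_toNNReal _ hs0.le]
  let t : ℕ → (Σ n : ℕ, (Fin n → ℕ)) → Set ℝ := fun N p =>
    if N ≤ p.1 then coverSet β p.1 p.2 else ∅
  have hmain := Measure.hausdorffMeasure_le_liminf_tsum s S (l := atTop)
    (fun N : ℕ => ENNReal.ofReal (Real.exp (-(β ^ N)))) ?_ t ?_ ?_
  · refine ne_top_of_le_ne_top (cover_sum hβ hη hκ0) (hmain.trans ?_)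
    refine Filter.liminf_le_of_le (by isBoundedDefault) fun a ha => ?_
    obtain ⟨N, hN⟩ := ha.exists
    refine hN.trans (ENNReal.tsum_le_tsum fun p => ?_)
    simp only [t]
    split_ifs
    · exact coverSet_pow hη hηs hκ' p.1 p.2
    · rw [Metric.ediam_empty, ENNReal.zero_rpow_of_pos hs0]
      exact zero_le
  · rw [← ENNReal.ofReal_zero]
    refine ENNReal.tendsto_ofReal ?_
    exact Real.tendsto_exp_neg_atTop_nhds_zero.comp (tendsto_pow_atTop_atTop_of_one_lt hβ)
  · refine Filter.Eventually.of_forall fun N p => ?_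
    simp only [t]
    split_ifs with h
    · rcases (coverSet β p.1 p.2).eq_empty_or_nonempty with he | ⟨x, hx⟩
      · rw [he, Metric.ediam_empty]
        exact zero_le
      have hP := coverSet_prod_pos hx
      refine (coverSet_ediam p.1 p.2 (Real.exp_pos _) (fun z hz => hz.2.2.2.2)).trans ?_
      refine ENNReal.ofReal_le_ofReal ?_
      rw [Real.exp_neg, one_div]
      refine inv_anti₀ (Real.exp_pos _) ?_
      have h1 : Real.exp (β ^ N) ≤ Real.exp (β ^ (p.1 + 1)) :=
        Real.exp_le_exp.mpr (pow_le_pow_right₀ hβ.le (by omega))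
      nlinarith [Real.exp_pos (β ^ (p.1 + 1))]
    · rw [Metric.ediam_empty]
      exact zero_le
  · refine Filter.Eventually.of_forall fun N x hx => ?_
    obtain ⟨n, hn, hmem⟩ := cover_mem hb hc hβ hβb hx.1 hx.2.1 hx.2.2 N
    refine Set.mem_iUnion.mpr ⟨⟨n, fun i => pq x (i + 1)⟩, ?_⟩
    simp only [t]
    rw [if_pos hn]
    exact hmem

theorem luczak (b c : ℝ) (hb : 1 < b) (hc : 1 < c) :
    dimH {x : ℝ | x ∈ Set.Ioo (0 : ℝ) 1 ∧ Irrational x ∧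
        {n : ℕ | c ^ (b ^ n) ≤ (pq x n : ℝ)}.Infinite} =
      ENNReal.ofReal (1 / (b + 1)) ∧
    dimH {x : ℝ | x ∈ Set.Ioo (0 : ℝ) 1 ∧ Irrational x ∧
        ∀ n : ℕ, 1 ≤ n → c ^ (b ^ n) ≤ (pq x n : ℝ)} =
      ENNReal.ofReal (1 / (b + 1)) := by
  have hsub : {x : ℝ | x ∈ Set.Ioo (0 : ℝ) 1 ∧ Irrational x ∧
        ∀ n : ℕ, 1 ≤ n → c ^ (b ^ n) ≤ (pq x n : ℝ)} ⊆
      {x : ℝ | x ∈ Set.Ioo (0 : ℝ) 1 ∧ Irrational x ∧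
        {n : ℕ | c ^ (b ^ n) ≤ (pq x n : ℝ)}.Infinite} := by
    rintro x ⟨h1, h2, h3⟩
    exact ⟨h1, h2, (Set.Ici_infinite 1).mono fun n hn => h3 n hn⟩
  have hm := dimH_mono hsub
  have hl := lower_bound b c hb hc
  have hu := upper_bound_s14 b c hb hc
  exact ⟨le_antisymm hu (hl.trans hm), le_antisymm (hm.trans hu) hl⟩
end
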